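/- arXiv:2011.14815 — 3 statements merged into one kernel-verified Lean document; each statement's English description precedes it below -/
import Mathlib

section
/- Let R be an F-finite Gorenstein local ring of prime characteristic p > 0. Then for every e ≥ 1, the module Hom_R(F^e_* R, R) is a cyclic F^e_* R-module, i.e., it is generated by a single element T as an F^e_* R-module. -/
/-!
Write `q = p ^ e` and view `F^e_* R` as the finite local `R`-algebra `S = R` with structure map
`r ↦ r ^ q`. The proof reduces modulo a maximal regular sequence to the zero-dimensional
self-injective case, and then lifts back.

* *Depth equals injective dimension* (`exists_isWeaklyRegular_ext`). There is a regular sequence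
  `rs` in the maximal ideal, of length `t`, with `Ext^j(M, R) = 0` for all finite `M` and `j > t`.
  If `Ext^j(R/𝔪, R)` vanishes for `j` large, then `Ext^j(M, R)` vanishes in the same degrees for all
  finite `M` (`ext_subsingleton_of_residue`). Let `t` and `s` be the first and last degrees where
  `Ext^*(R/𝔪, R)` is nonzero, and `rs` a regular sequence of length `t`, which is maximal. Then
  `R/𝔪` embeds in `R/(rs)`, so `Ext^s(R/(rs), R)` surjects onto `Ext^s(R/𝔪, R) ≠ 0`; since `R/(rs)`
  has projective dimension at most `t`, this forces `s ≤ t`.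
* *Self-injectivity of the quotients* (`baer_quotient_ofList`). On modules killed by `rs`, the
  functors `Hom(-, R/(rs))` and `Ext^t(-, R)` agree, and the latter is right exact because
  `Ext^{t+1}(-, R) = 0`. Thus `A = R/(rs)` is self-injective by Baer's criterion. The same applies
  to `B = S/(rs)S = R/(rs^q)`, because powers of a regular sequence are again regular
  (`isWeaklyRegular_pow`).
* *The self-injective case* (`dual_cyclic_of_baer`). The socle of a self-injective local ring is
  generated by one element `w`. Restricting `φ ∈ Hom_A(B, A)` to `wB` gives a linear form on the
  residue field of `B` with values in the residue field of `A`, and over fields the dual of a finite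
  extension is one-dimensional over the extension. So every `φ` agrees on `wB` with a multiple of
  one `T`; by injectivity of `A`, a map which vanishes on the socle lies in `𝔪_B • Hom_A(B, A)`,
  and Nakayama's lemma applies.
* *Lifting* (`cyclic_lift`). As `S` has depth `t` over `R`, `Ext^j_R(S, R) = 0` for `j > 0`. Hence
  `Hom_R(S, N) → Hom_R(S, N/xN)` is surjective at each step of the regular sequence, with kernel
  `x • Hom_R(S, N)`, and a generator lifts to a generator by Nakayama.
-/

open CategoryTheory

/-- A Noetherian local ring `S` is *Gorenstein* iff it has finite injective dimension over
itself, which (for Noetherian local rings) is equivalent to the vanishing of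
`Ext^i_S(S/𝔪, S)` for all sufficiently large `i`. -/
def IsGorensteinLocal (S : Type) [CommRing S] [IsLocalRing S] : Prop :=
  ∃ n : ℕ, ∀ i : ℕ, n < i →
    Subsingleton
      (((Ext S (ModuleCat S) i).obj
          (Opposite.op (ModuleCat.of S (S ⧸ IsLocalRing.maximalIdeal S)))).obj
        (ModuleCat.of S S))

section

open RingTheory.Sequence
open scoped Pointwise

variable {R : Type} [CommRing R]

/-! ### Vanishing of Ext -/

/-- Vanishing of the derived-functor `Ext` used in the definition of a Gorenstein ring gives
vanishing of `CategoryTheory.Abelian.Ext`; both are computed from a projective resolution of `X`.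
-/
theorem subsingleton_ext_of_old (X Y : ModuleCat.{0} R) (n : ℕ)
    (h : Subsingleton (((_root_.Ext R (ModuleCat R) (n + 1)).obj (Opposite.op X)).obj Y)) :
    Subsingleton (Abelian.Ext X Y (n + 1)) := by
  let P := projectiveResolution X
  have hz : Limits.IsZero ((P.complex.linearYonedaObj R Y).homology (n + 1)) :=
    (ModuleCat.isZero_of_subsingleton _).of_iso (P.isoExt (n + 1) Y).symm
  have hex : (P.complex.linearYonedaObj R Y).ExactAt (n + 1) :=
    (HomologicalComplex.exactAt_iff_isZero_homology _ _).2 hz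
  rw [HomologicalComplex.exactAt_iff' _ n (n + 1) (n + 2) (by simp) (by simp)] at hex
  rw [ShortComplex.moduleCat_exact_iff] at hex
  refine subsingleton_of_forall_eq 0 fun α => ?_
  obtain ⟨f, hf, rfl⟩ := P.extMk_surjective α (n + 2) rfl
  rw [P.extMk_eq_zero_iff f (n + 2) rfl hf n rfl]
  obtain ⟨g, hg⟩ := hex f hf
  exact ⟨g, hg⟩

theorem ext_subsingleton_of_exact₃ (S : ShortComplex (ModuleCat.{0} R)) (hS : S.ShortExact)
    (X : ModuleCat.{0} R) (j : ℕ) (h2 : Subsingleton (Abelian.Ext X S.X₂ j))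
    (h1 : Subsingleton (Abelian.Ext X S.X₁ (j + 1))) :
    Subsingleton (Abelian.Ext X S.X₃ j) := by
  refine subsingleton_of_forall_eq 0 fun a => ?_
  obtain ⟨b, rfl⟩ := Abelian.Ext.covariant_sequence_exact₃ X hS a rfl (Subsingleton.elim _ _)
  rw [Subsingleton.elim b 0, Abelian.Ext.zero_comp]

theorem ext_quotSMulTop_subsingleton (X N : ModuleCat.{0} R) (x : R) (hx : IsSMulRegular N x)
    (j : ℕ) (h0 : Subsingleton (Abelian.Ext X N j)) (h1 : Subsingleton (Abelian.Ext X N (j + 1))) :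
    Subsingleton (Abelian.Ext X (ModuleCat.of R (QuotSMulTop x N)) j) :=
  ext_subsingleton_of_exact₃ (N.smulShortComplex x) hx.smulShortComplex_shortExact X j h0 h1

/-- An element annihilating `X` acts as zero on `Ext^j(X, N)` through the second variable. -/
theorem ext_smul_eq_zero_of_annihilator (X N : ModuleCat.{0} R) (x : R)
    (hx : x ∈ Module.annihilator R X) (j : ℕ) (a : Abelian.Ext X N j) :
    a.comp (Abelian.Ext.mk₀ (N.smulShortComplex x).f) (add_zero j) = 0 := by
  have := Abelian.Ext.postcomp_smul_id_eq_zero_of_mem_annihilator (M := N) (N := X) hx j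
  have := congrArg (fun f => f.hom a) this
  exact this

/-- If `x` is `M`-regular then `Ext^{j+1}(M/xM, N) = 0` makes multiplication by `x` surjective on
the finite module `Ext^j(M, N)`, which is therefore zero by Nakayama. -/
theorem ext_subsingleton_of_quotSMulTop [IsNoetherianRing R] [IsLocalRing R]
    (M N : ModuleCat.{0} R) [Module.Finite R M] [Module.Finite R N] (x : R)
    (hx : x ∈ IsLocalRing.maximalIdeal R) (reg : IsSMulRegular M x) (j : ℕ)
    (h : Subsingleton (Abelian.Ext (ModuleCat.of R (QuotSMulTop x M)) N (j + 1))) :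
    Subsingleton (Abelian.Ext M N j) := by
  by_contra! ntr
  have : x ∈ (Module.annihilator R (Abelian.Ext M N j)).jacobson :=
    (IsLocalRing.maximalIdeal_le_jacobson _) hx
  refine Submodule.top_ne_pointwise_smul_of_mem_jacobson_annihilator this ?_
  rw [eq_comm, eq_top_iff]
  intro y hy
  obtain ⟨z, hz⟩ := Abelian.Ext.contravariant_sequence_exact₁
    reg.smulShortComplex_shortExact N y (add_comm 1 j)
    (@Subsingleton.elim _ h _ _)
  have hf : ∀ z : Abelian.Ext M N j,
      (Abelian.Ext.mk₀ (x • 𝟙 M)).comp z (zero_add j) = x • z := fun z => by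
    rw [Abelian.Ext.mk₀_smul, Abelian.Ext.smul_comp, Abelian.Ext.mk₀_id_comp]
  rw [← hz]
  refine (congrArg (· ∈ x • (⊤ : Submodule R (Abelian.Ext M N j))) (hf z)).mpr ?_
  exact Submodule.smul_mem_pointwise_smul _ _ ⊤ trivial

theorem ext_subsingleton_of_exact (S : ShortComplex (ModuleCat.{0} R)) (hS : S.ShortExact)
    (N : ModuleCat.{0} R) (j : ℕ) (h1 : Subsingleton (Abelian.Ext S.X₁ N j))
    (h3 : Subsingleton (Abelian.Ext S.X₃ N j)) :
    Subsingleton (Abelian.Ext S.X₂ N j) := by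
  refine subsingleton_of_forall_eq 0 fun a => ?_
  obtain ⟨b, rfl⟩ := Abelian.Ext.contravariant_sequence_exact₂ hS N a (Subsingleton.elim _ _)
  rw [Subsingleton.elim b 0, Abelian.Ext.comp_zero]

theorem ext_subsingleton_of_linearEquiv {M M' : Type} [AddCommGroup M] [AddCommGroup M']
    [Module R M] [Module R M'] (e : M ≃ₗ[R] M') (N : ModuleCat.{0} R) (j : ℕ)
    (h : Subsingleton (Abelian.Ext (ModuleCat.of R M) N j)) :
    Subsingleton (Abelian.Ext (ModuleCat.of R M') N j) := by
  refine subsingleton_of_forall_eq 0 fun a => ?_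
  have : a = (Abelian.Ext.mk₀ e.symm.toModuleIso.hom).comp
    ((Abelian.Ext.mk₀ e.toModuleIso.hom).comp a (zero_add _)) (zero_add _) := by
    rw [Abelian.Ext.mk₀_comp_mk₀_assoc]
    have : e.symm.toModuleIso.hom ≫ e.toModuleIso.hom = 𝟙 _ := by ext; simp
    rw [this, Abelian.Ext.mk₀_id_comp]
  rw [this, Subsingleton.elim ((Abelian.Ext.mk₀ e.toModuleIso.hom).comp a (zero_add _)) 0,
    Abelian.Ext.comp_zero]

/-- If `Ext^j(R/𝔪, N) = 0` for all `j ≥ r`, then `Ext^j(M, N) = 0` for all finite `M` and `j ≥ r`.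
Cyclic modules `R/I` are treated by Noetherian induction on `I`: for a prime `I ≠ 𝔪`, some
element `x` of `𝔪` outside `I` is regular on `R/I`, and `R/(I + x)` is known; for a proper `I` which
is not prime, `R/I` is an extension of two smaller cyclic modules. -/
theorem ext_subsingleton_of_residue [IsNoetherianRing R] [IsLocalRing R]
    (N : ModuleCat.{0} R) [Module.Finite R N] (r : ℕ)
    (h : ∀ j, r ≤ j → Subsingleton
      (Abelian.Ext (ModuleCat.of R (R ⧸ IsLocalRing.maximalIdeal R)) N j))
    (M : Type) [AddCommGroup M] [Module R M] (hM : Module.Finite R M) :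
    ∀ j, r ≤ j → Subsingleton (Abelian.Ext (ModuleCat.of R M) N j) := by
  have key : ∀ I : Ideal R, ∀ j, r ≤ j →
      Subsingleton (Abelian.Ext (ModuleCat.of R (R ⧸ I)) N j) := by
    intro I
    induction I using WellFoundedGT.induction with
    | ind I ih =>
    intro j hj
    have hcyc : ∀ (M : Type) [AddCommGroup M] [Module R M] (f : R →ₗ[R] M),
        Function.Surjective f → ∀ y, y ∉ I → I ≤ LinearMap.ker f → f y = 0 → ∀ j, r ≤ j →
        Subsingleton (Abelian.Ext (ModuleCat.of R M) N j) := by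
      intro M _ _ f hf y hyI hle hy j hj
      have hlt : I < LinearMap.ker f := lt_of_le_of_ne hle fun he => hyI (by rw [he]; exact hy)
      exact ext_subsingleton_of_linearEquiv (f.quotKerEquivOfSurjective hf) N j (ih _ hlt j hj)
    by_cases htop : I = ⊤
    · have : Subsingleton (R ⧸ I) := Submodule.Quotient.subsingleton_iff.2 htop
      have hz : Limits.IsZero (ModuleCat.of R (R ⧸ I)) := ModuleCat.isZero_of_subsingleton _
      refine subsingleton_of_forall_eq 0 fun a => ?_
      rw [← Abelian.Ext.mk₀_id_comp a, hz.eq_of_src (𝟙 _) 0, Abelian.Ext.mk₀_zero,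
        Abelian.Ext.zero_comp]
    by_cases hm : I = IsLocalRing.maximalIdeal R
    · subst hm; exact h j hj
    by_cases hp : I.IsPrime
    · obtain ⟨x, hxm, hxI⟩ : ∃ x ∈ IsLocalRing.maximalIdeal R, x ∉ I := by
        by_contra! hcon
        exact hm (le_antisymm (IsLocalRing.le_maximalIdeal htop) hcon)
      refine ext_subsingleton_of_quotSMulTop (ModuleCat.of R (R ⧸ I)) N x hxm ?_ j ?_
      · rw [isSMulRegular_iff_right_eq_zero_of_smul]
        intro a ha
        obtain ⟨a, rfl⟩ := Ideal.Quotient.mk_surjective a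
        rw [Ideal.Quotient.eq_zero_iff_mem]
        have : x * a ∈ I := by
          rw [← Ideal.Quotient.eq_zero_iff_mem]; exact ha
        exact (hp.mem_or_mem this).resolve_left hxI
      · refine hcyc (QuotSMulTop x (R ⧸ I))
          ((x • (⊤ : Submodule R (R ⧸ I))).mkQ ∘ₗ Submodule.mkQ I)
          ((Submodule.mkQ_surjective _).comp (Submodule.mkQ_surjective _)) x hxI ?_ ?_ (j + 1)
          (by omega)
        · intro y hy
          rw [LinearMap.mem_ker, LinearMap.comp_apply, (Submodule.mkQ_apply I y),
            (Submodule.Quotient.mk_eq_zero I).2 hy, map_zero]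
        · rw [LinearMap.comp_apply, Submodule.mkQ_apply, Submodule.Quotient.mk_eq_zero]
          have : (Submodule.mkQ I x) = x • (Submodule.mkQ I 1) := by
            rw [← map_smul, smul_eq_mul, mul_one]
          rw [this]
          exact Submodule.smul_mem_pointwise_smul _ _ _ trivial
    · obtain ⟨a, b, hab, ha, hb⟩ : ∃ a b, a * b ∈ I ∧ a ∉ I ∧ b ∉ I := by
        by_contra! hcon
        exact hp ⟨htop, fun {a b} hab => by
          by_contra! hc
          exact hc.2 (hcon a b hab hc.1)⟩
      let g : R →ₗ[R] R ⧸ I := LinearMap.toSpanSingleton R (R ⧸ I) (Submodule.mkQ I b)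
      have hg : ∀ y, g y = Submodule.mkQ I (y * b) := fun y => by
        simp only [g, LinearMap.toSpanSingleton_apply]
        rw [← map_smul, smul_eq_mul]
      refine ext_subsingleton_of_exact (ModuleCat.shortComplexOfCompEqZero
        (LinearMap.range g).subtype (LinearMap.range g).mkQ (by ext; simp)) ?_ N j ?_ ?_
      · refine ModuleCat.shortComplex_shortExact _ ?_ (Submodule.injective_subtype _)
          (Submodule.mkQ_surjective _)
        exact LinearMap.exact_subtype_mkQ _
      · refine hcyc _ g.rangeRestrict g.surjective_rangeRestrict a ha ?_ ?_ j hj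
        · intro y hy
          rw [LinearMap.ker_rangeRestrict, LinearMap.mem_ker, hg, Submodule.mkQ_apply,
            Submodule.Quotient.mk_eq_zero]
          exact I.mul_mem_right _ hy
        · refine Subtype.ext ?_
          change g a = 0
          rwa [hg, Submodule.mkQ_apply, Submodule.Quotient.mk_eq_zero]
      · refine hcyc _ ((LinearMap.range g).mkQ ∘ₗ Submodule.mkQ I)
          ((Submodule.mkQ_surjective _).comp (Submodule.mkQ_surjective _)) b hb ?_ ?_ j hj
        · intro y hy
          rw [LinearMap.mem_ker, LinearMap.comp_apply, (Submodule.mkQ_apply I y),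
            (Submodule.Quotient.mk_eq_zero I).2 hy, map_zero]
        · rw [LinearMap.comp_apply, Submodule.mkQ_apply, Submodule.Quotient.mk_eq_zero]
          exact ⟨1, by rw [hg, one_mul]⟩
  induction hM using IsNoetherianRing.induction_on_isQuotientEquivQuotientPrime R with
  | subsingleton N' =>
    intro j hj
    have hz : Limits.IsZero (ModuleCat.of R N') := ModuleCat.isZero_of_subsingleton _
    refine subsingleton_of_forall_eq 0 fun a => ?_
    rw [← Abelian.Ext.mk₀_id_comp a, hz.eq_of_src (𝟙 _) 0, Abelian.Ext.mk₀_zero,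
      Abelian.Ext.zero_comp]
  | quotient N' p f =>
    intro j hj
    exact ext_subsingleton_of_linearEquiv f.symm N j (key p.1 j hj)
  | exact N₁ N₂ N₃ f g hf hg hfg h₁ h₃ =>
    intro j hj
    refine ext_subsingleton_of_exact
      (ModuleCat.shortComplexOfCompEqZero f g hfg.linearMap_comp_eq_zero) ?_ N j (h₁ j hj) (h₃ j hj)
    exact ModuleCat.shortComplex_shortExact _ hfg hf hg

theorem ext_subsingleton_of_exact₃' (S : ShortComplex (ModuleCat.{0} R)) (hS : S.ShortExact)
    (N : ModuleCat.{0} R) (j : ℕ) (h1 : Subsingleton (Abelian.Ext S.X₁ N j))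
    (h2 : Subsingleton (Abelian.Ext S.X₂ N (j + 1))) :
    Subsingleton (Abelian.Ext S.X₃ N (j + 1)) := by
  refine subsingleton_of_forall_eq 0 fun a => ?_
  obtain ⟨b, rfl⟩ := Abelian.Ext.contravariant_sequence_exact₃ hS N a (Subsingleton.elim _ _)
    (add_comm 1 j)
  rw [Subsingleton.elim b 0, Abelian.Ext.comp_zero]

theorem ext_subsingleton_of_exact₁ (S : ShortComplex (ModuleCat.{0} R)) (hS : S.ShortExact)
    (N : ModuleCat.{0} R) (j : ℕ) (h2 : Subsingleton (Abelian.Ext S.X₂ N j))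
    (h3 : Subsingleton (Abelian.Ext S.X₃ N (j + 1))) :
    Subsingleton (Abelian.Ext S.X₁ N j) := by
  refine subsingleton_of_forall_eq 0 fun a => ?_
  obtain ⟨b, rfl⟩ := Abelian.Ext.contravariant_sequence_exact₁ hS N a
    (add_comm 1 j) (Subsingleton.elim _ _)
  rw [Subsingleton.elim b 0, Abelian.Ext.comp_zero]

/-- If `Ext^j(-, N)` vanishes on finite modules for `j ≥ r`, then `Ext^j(M, N)` vanishes already
for `j ≥ r - d` when `M` has a regular sequence of length `d`. -/
theorem ext_subsingleton_of_isWeaklyRegular [IsNoetherianRing R] [IsLocalRing R]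
    (N : ModuleCat.{0} R) [Module.Finite R N] (r : ℕ)
    (h : ∀ (M : Type) [AddCommGroup M] [Module R M] [Module.Finite R M], ∀ j, r ≤ j →
      Subsingleton (Abelian.Ext (ModuleCat.of R M) N j))
    (rs : List R) (hrs : ∀ x ∈ rs, x ∈ IsLocalRing.maximalIdeal R) :
    ∀ (M : Type) [AddCommGroup M] [Module R M] [Module.Finite R M], IsWeaklyRegular M rs →
    ∀ j, r ≤ j + rs.length → Subsingleton (Abelian.Ext (ModuleCat.of R M) N j) := by
  induction rs with
  | nil => intro M _ _ _ _ j hj; exact h M j hj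
  | cons x rs ih =>
    intro M _ _ _ hM j hj
    rw [isWeaklyRegular_cons_iff] at hM
    refine ext_subsingleton_of_quotSMulTop (ModuleCat.of R M) N x (hrs x (by simp)) hM.1 j ?_
    refine ih (fun y hy => hrs y (by simp [hy])) (QuotSMulTop x M) hM.2 (j + 1) ?_
    simp only [List.length_cons] at hj
    omega

/-- Dividing by a regular sequence of length `d` raises the top nonvanishing degree of `Ext^*(-, N)`
by at most `d`. -/
theorem ext_quot_ofList_subsingleton (N : ModuleCat.{0} R) (rs : List R) :
    ∀ (M : Type) [AddCommGroup M] [Module R M] (d : ℕ), IsWeaklyRegular M rs →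
    (∀ j, d < j → Subsingleton (Abelian.Ext (ModuleCat.of R M) N j)) →
    ∀ j, d + rs.length < j → Subsingleton (Abelian.Ext
      (ModuleCat.of R (M ⧸ (Ideal.ofList rs • ⊤ : Submodule R M))) N j) := by
  induction rs with
  | nil =>
    intro M _ _ d _ h j hj
    exact ext_subsingleton_of_linearEquiv (Submodule.quotEquivOfEqBot
      (Ideal.ofList [] • ⊤ : Submodule R M) (by simp)).symm N j (h j hj)
  | cons x rs ih =>
    intro M _ _ d hM h j hj
    rw [isWeaklyRegular_cons_iff] at hM
    refine ext_subsingleton_of_linearEquiv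
      (Submodule.quotOfListConsSMulTopEquivQuotSMulTopInner M x rs).symm N j ?_
    refine ih (QuotSMulTop x M) (d + 1) hM.2 ?_ j (by simp only [List.length_cons] at hj; omega)
    intro i hi
    obtain ⟨i, rfl⟩ : ∃ k, i = k + 1 := ⟨i - 1, by omega⟩
    exact ext_subsingleton_of_exact₃' ((ModuleCat.of R M).smulShortComplex x)
      (IsSMulRegular.smulShortComplex_shortExact (M := ModuleCat.of R M) hM.1) N i
      (h i (by omega)) (h (i + 1) (by omega))

/-! ### Regular sequences and injective dimension -/

theorem ext_zero_nontrivial (M : Type) [AddCommGroup M] [Module R M] [Nontrivial M] :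
    ¬ Subsingleton (Abelian.Ext (ModuleCat.of R M) (ModuleCat.of R M) 0) := by
  intro h
  have : Subsingleton (M →ₗ[R] M) :=
    ((Abelian.Ext.addEquiv₀ (X := ModuleCat.of R M) (Y := ModuleCat.of R M)).toEquiv.trans
      ModuleCat.homEquiv).symm.subsingleton
  obtain ⟨m, hm⟩ := exists_ne (0 : M)
  exact hm (LinearMap.congr_fun (Subsingleton.elim (LinearMap.id : M →ₗ[R] M) 0) m)

/-- If `Ext^j(R/𝔪, R) = 0` for `j` large, then some regular sequence `rs` in the maximal ideal
satisfies `Ext^j(M, R) = 0` for all finite `M` and all `j > rs.length`. -/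
theorem exists_isWeaklyRegular_ext [IsNoetherianRing R] [IsLocalRing R]
    (n : ℕ) (h : ∀ j, n ≤ j → Subsingleton
      (Abelian.Ext (ModuleCat.of R (R ⧸ IsLocalRing.maximalIdeal R)) (ModuleCat.of R R) j)) :
    ∃ rs : List R, (∀ x ∈ rs, x ∈ IsLocalRing.maximalIdeal R) ∧ IsWeaklyRegular R rs ∧
      ∀ (M : Type) [AddCommGroup M] [Module R M] [Module.Finite R M], ∀ j, rs.length < j →
        Subsingleton (Abelian.Ext (ModuleCat.of R M) (ModuleCat.of R R) j) := by
  classical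
  set k := ModuleCat.of R (R ⧸ IsLocalRing.maximalIdeal R) with hk
  have hmtop : IsLocalRing.maximalIdeal R • (⊤ : Submodule R R) < ⊤ := by
    rw [smul_eq_mul, Ideal.mul_top]
    exact (IsLocalRing.maximalIdeal.isMaximal R).ne_top.lt_top
  have hex : ∃ n : ℕ, ∀ j, n ≤ j → Subsingleton (Abelian.Ext k (ModuleCat.of R R) j) := ⟨n, h⟩
  obtain ⟨r, hr, hmin⟩ : ∃ r, (∀ j, r ≤ j → Subsingleton (Abelian.Ext k (ModuleCat.of R R) j)) ∧
      ∀ r' < r, ¬ ∀ j, r' ≤ j → Subsingleton (Abelian.Ext k (ModuleCat.of R R) j) :=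
    ⟨Nat.find hex, Nat.find_spec hex, fun _ h => Nat.find_min hex h⟩
  have bass := fun M [AddCommGroup M] [Module R M] hM =>
    ext_subsingleton_of_residue (ModuleCat.of R R) r hr M hM
  obtain ⟨s, rfl⟩ : ∃ s, r = s + 1 := by
    refine ⟨r - 1, ?_⟩
    by_contra hne
    exact ext_zero_nontrivial (R := R) R (bass R inferInstance 0 (by omega))
  have hs : ¬ Subsingleton (Abelian.Ext k (ModuleCat.of R R) s) := fun hcon =>
    hmin s (by omega) fun j hj => by
      rcases hj.eq_or_lt with rfl | hlt
      · exact hcon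
      · exact hr j hlt
  have hext : ∃ t, ¬ Subsingleton (Abelian.Ext k (ModuleCat.of R R) t) := ⟨s, hs⟩
  obtain ⟨t, ht, htmin⟩ : ∃ t, ¬ Subsingleton (Abelian.Ext k (ModuleCat.of R R) t) ∧
      ∀ i < t, Subsingleton (Abelian.Ext k (ModuleCat.of R R) i) :=
    ⟨Nat.find hext, Nat.find_spec hext, fun i hi => not_not.1 (Nat.find_min hext hi)⟩
  have hann : Module.annihilator R k = IsLocalRing.maximalIdeal R := Ideal.annihilator_quotient
  have hkfin : Module.Finite R k :=
    inferInstanceAs (Module.Finite R (R ⧸ IsLocalRing.maximalIdeal R))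
  have hsupp : Module.support R k =
      PrimeSpectrum.zeroLocus (IsLocalRing.maximalIdeal R : Set R) := by
    rw [Module.support_eq_zeroLocus, hann]
  obtain ⟨rs, hlen, hmem, hreg⟩ := ModuleCat.exists_isRegular_of_exists_subsingleton_ext
    (IsLocalRing.maximalIdeal R) t (ModuleCat.of R R) hmtop k hsupp htmin
  refine ⟨rs, hmem, hreg.toIsWeaklyRegular, fun M _ _ hM j hj => bass M hM j ?_⟩
  suffices hst : s ≤ t by omega
  by_contra! hts
  -- `rs` cannot be extended, so the socle of `R / (rs)` is nonzero
  have hno : ¬ Subsingleton ((R ⧸ IsLocalRing.maximalIdeal R) →ₗ[R]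
      (R ⧸ (Ideal.ofList rs • ⊤ : Submodule R R))) := by
    rw [IsSMulRegular.subsingleton_linearMap_iff]
    rintro ⟨x, hx, hxreg⟩
    rw [Ideal.annihilator_quotient] at hx
    have hmem' : ∀ y ∈ rs ++ [x], y ∈ IsLocalRing.maximalIdeal R := by
      intro y hy
      rcases List.mem_append.1 hy with hy | hy
      · exact hmem y hy
      · rw [List.mem_singleton.1 hy]; exact hx
    have hw : IsWeaklyRegular R (rs ++ [x]) := by
      rw [isWeaklyRegular_append_iff, isWeaklyRegular_singleton_iff]
      exact ⟨hreg.toIsWeaklyRegular, hxreg⟩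
    exact ht (ModuleCat.subsingleton_ext_of_exists_isRegular (IsLocalRing.maximalIdeal R) k
      hsupp.le (ModuleCat.of R R) hmtop (rs ++ [x]) hmem'
      (IsRegular.of_isWeaklyRegular_of_mem_maximalIdeal R hmem' hw) t (by simp [hlen]))
  rw [not_subsingleton_iff_nontrivial] at hno
  obtain ⟨f, hf⟩ := exists_ne (0 : (R ⧸ IsLocalRing.maximalIdeal R) →ₗ[R]
      (R ⧸ (Ideal.ofList rs • ⊤ : Submodule R R)))
  have : IsSimpleModule R (R ⧸ IsLocalRing.maximalIdeal R) :=
    isSimpleModule_iff_quot_maximal.2 ⟨_, IsLocalRing.maximalIdeal.isMaximal R,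
      ⟨LinearEquiv.refl _ _⟩⟩
  have hfinj := LinearMap.injective_of_ne_zero hf
  have hex' : Function.Exact f (LinearMap.range f).mkQ := by
    rw [LinearMap.exact_iff, Submodule.ker_mkQ]
  refine hs (ext_subsingleton_of_exact₁ (ModuleCat.shortComplexOfCompEqZero f
    (LinearMap.range f).mkQ hex'.linearMap_comp_eq_zero)
    (ModuleCat.shortComplex_shortExact _ hex' hfinj (Submodule.mkQ_surjective _))
    (ModuleCat.of R R) s ?_ (bass _ inferInstance (s + 1) le_rfl))
  refine ext_quot_ofList_subsingleton (ModuleCat.of R R) rs R 0 hreg.toIsWeaklyRegular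
    (fun j hj => ?_) s (by omega)
  obtain ⟨j, rfl⟩ : ∃ i, j = i + 1 := ⟨j - 1, by omega⟩
  have : Projective (ModuleCat.of R R) := inferInstance
  exact Abelian.Ext.subsingleton_of_projective _ _ _

/-! ### Self-injectivity modulo a maximal regular sequence -/

/-- One step of dimension shifting. For `0 → T₁ → T₂ → T₃ → 0` exact, the connecting map embeds
`Ext^n(S₁, T₃)` into `Ext^{n+1}(S₁, T₁)` by `hv`, and maps `Ext^n(S₂, T₃)` onto `Ext^{n+1}(S₂,
T₁)` by `hk`; hence surjectivity of restriction along `S₁ → S₂` passes from degree `n + 1` to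
degree `n`. -/
theorem ext_lift_step (S T : ShortComplex (ModuleCat.{0} R)) (hT : T.ShortExact)
    (n : ℕ) (hv : Subsingleton (Abelian.Ext S.X₁ T.X₂ n))
    (hs : ∀ a : Abelian.Ext S.X₁ T.X₁ (n + 1), ∃ c : Abelian.Ext S.X₂ T.X₁ (n + 1),
      (Abelian.Ext.mk₀ S.f).comp c (zero_add _) = a)
    (hk : ∀ b : Abelian.Ext S.X₂ T.X₁ (n + 1), b.comp (Abelian.Ext.mk₀ T.f) (add_zero _) = 0)
    (a : Abelian.Ext S.X₁ T.X₃ n) :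
    ∃ c : Abelian.Ext S.X₂ T.X₃ n, (Abelian.Ext.mk₀ S.f).comp c (zero_add _) = a := by
  obtain ⟨b, hb⟩ := hs (a.comp hT.extClass rfl)
  obtain ⟨c, hc⟩ := Abelian.Ext.covariant_sequence_exact₁ S.X₂ hT b (hk b) rfl
  refine ⟨c, ?_⟩
  have h0 : (a - (Abelian.Ext.mk₀ S.f).comp c (zero_add _)).comp hT.extClass rfl = 0 := by
    rw [sub_eq_add_neg, Abelian.Ext.add_comp, Abelian.Ext.neg_comp, ← hb, ← hc, ← sub_eq_add_neg,
      sub_eq_zero]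
    exact (Abelian.Ext.comp_assoc _ _ _ _ _ (by omega)).symm
  obtain ⟨d, hd⟩ := Abelian.Ext.covariant_sequence_exact₃ S.X₁ hT _ rfl h0
  rw [Subsingleton.elim d 0, Abelian.Ext.zero_comp] at hd
  exact (sub_eq_zero.1 hd.symm).symm

/-- Let `S₂` be killed by an `N`-regular sequence `rs` of length `t`, and let `Ext^j(S₁, N) = 0` for
`j < t`. Then surjectivity of `Ext^t(S₂, N) → Ext^t(S₁, N)` yields surjectivity of
`Hom(S₂, N/(rs)N) → Hom(S₁, N/(rs)N)`. -/
theorem exists_extension_of_ext (S : ShortComplex (ModuleCat.{0} R)) (rs : List R)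
    (hann : ∀ x ∈ rs, x ∈ Module.annihilator R S.X₂) :
    ∀ (N : Type) [AddCommGroup N] [Module R N], IsWeaklyRegular N rs →
    (∀ j < rs.length, Subsingleton (Abelian.Ext S.X₁ (ModuleCat.of R N) j)) →
    (∀ a : Abelian.Ext S.X₁ (ModuleCat.of R N) rs.length,
      ∃ c : Abelian.Ext S.X₂ (ModuleCat.of R N) rs.length,
        (Abelian.Ext.mk₀ S.f).comp c (zero_add _) = a) →
    ∀ a : S.X₁ →ₗ[R] (N ⧸ (Ideal.ofList rs • ⊤ : Submodule R N)),
      ∃ c : S.X₂ →ₗ[R] (N ⧸ (Ideal.ofList rs • ⊤ : Submodule R N)), c ∘ₗ S.f.hom = a := by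
  induction rs with
  | nil =>
    intro N _ _ _ _ hs a
    let e : (N ⧸ (Ideal.ofList [] • ⊤ : Submodule R N)) ≃ₗ[R] N :=
      Submodule.quotEquivOfEqBot _ (by
        simp only [Ideal.ofList_nil]; exact Submodule.bot_smul (M := N) ⊤)
    obtain ⟨c, hc⟩ := hs (Abelian.Ext.mk₀ (ModuleCat.ofHom (e.toLinearMap ∘ₗ a)))
    obtain ⟨c, rfl⟩ := (Abelian.Ext.mk₀_bijective _ _).2 c
    rw [Abelian.Ext.mk₀_comp_mk₀] at hc
    have hc' := (Abelian.Ext.mk₀_bijective _ _).1 hc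
    refine ⟨e.symm.toLinearMap ∘ₗ c.hom, ?_⟩
    ext y
    have := congrArg (fun f => f.hom y) hc'
    simp only [ModuleCat.hom_comp, LinearMap.comp_apply, ModuleCat.hom_ofHom,
      LinearEquiv.coe_coe] at this ⊢
    rw [this, LinearEquiv.symm_apply_apply]
  | cons x rs ih =>
    intro N _ _ hN hv hs a
    rw [isWeaklyRegular_cons_iff] at hN
    let e := Submodule.quotOfListConsSMulTopEquivQuotSMulTopInner N x rs
    have hT := IsSMulRegular.smulShortComplex_shortExact (M := ModuleCat.of R N) hN.1
    simp only [List.length_cons] at hv hs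
    obtain ⟨c, hc⟩ := ih (fun y hy => hann y (by simp [hy])) (QuotSMulTop x N) hN.2
      (fun j hj => ext_quotSMulTop_subsingleton S.X₁ (ModuleCat.of R N) x hN.1 j
        (hv j (by omega)) (hv (j + 1) (by omega)))
      (ext_lift_step S ((ModuleCat.of R N).smulShortComplex x) hT rs.length
        (hv rs.length (by omega)) hs
        (ext_smul_eq_zero_of_annihilator S.X₂ (ModuleCat.of R N) x (hann x (by simp)) _))
      (e.toLinearMap ∘ₗ a)
    refine ⟨e.symm.toLinearMap ∘ₗ c, ?_⟩
    rw [LinearMap.comp_assoc, hc]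
    ext y
    simp

/-- If `rs` is a regular sequence and `Ext^j(M, R) = 0` for all finite `M` and `j > rs.length`,
then the ring `R/(rs)` is self-injective. -/
theorem baer_quotient_ofList [IsNoetherianRing R] [IsLocalRing R] (rs : List R)
    (hmem : ∀ x ∈ rs, x ∈ IsLocalRing.maximalIdeal R) (hreg : IsWeaklyRegular R rs)
    (hext : ∀ (M : Type) [AddCommGroup M] [Module R M] [Module.Finite R M], ∀ j, rs.length < j →
        Subsingleton (Abelian.Ext (ModuleCat.of R M) (ModuleCat.of R R) j)) :
    Module.Baer (R ⧸ Ideal.ofList rs) (R ⧸ Ideal.ofList rs) := by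
  intro J g
  have hI : (Ideal.ofList rs • ⊤ : Submodule R R) = Ideal.ofList rs := by
    rw [smul_eq_mul, Ideal.mul_top]
  let e := Submodule.quotEquivOfEq _ _ hI
  have hIle : Ideal.ofList rs ≤ IsLocalRing.maximalIdeal R := Ideal.span_le.2 hmem
  let P : Submodule R (R ⧸ Ideal.ofList rs) := J.restrictScalars R
  have hex : Function.Exact P.subtype P.mkQ := LinearMap.exact_subtype_mkQ _
  have hS := ModuleCat.shortComplex_shortExact (ModuleCat.shortComplexOfCompEqZero P.subtype P.mkQ
    hex.linearMap_comp_eq_zero) hex (Submodule.injective_subtype _) (Submodule.mkQ_surjective _)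
  have hannA : ∀ x ∈ rs, x ∈ Module.annihilator R (R ⧸ Ideal.ofList rs) := by
    intro x hx
    rw [Ideal.annihilator_quotient]
    exact Ideal.subset_span hx
  have hsupp : Module.support R P ⊆ PrimeSpectrum.zeroLocus (Ideal.ofList rs : Set R) := by
    rw [Module.support_eq_zeroLocus]
    refine PrimeSpectrum.zeroLocus_anti_mono ?_
    refine SetLike.coe_subset_coe.2 (Ideal.span_le.2 fun x hx => ?_)
    exact LinearMap.annihilator_le_of_injective P.subtype (Submodule.injective_subtype _)
      (hannA x hx)
  have hlt : Ideal.ofList rs • (⊤ : Submodule R R) < ⊤ := by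
    rw [hI]
    exact lt_of_le_of_lt hIle (IsLocalRing.maximalIdeal.isMaximal R).ne_top.lt_top
  have hfinP : Module.Finite R P := inferInstance
  let g' : P →ₗ[R] (R ⧸ Ideal.ofList rs) := g.restrictScalars R
  obtain ⟨c, hc⟩ := exists_extension_of_ext (ModuleCat.shortComplexOfCompEqZero P.subtype P.mkQ
    hex.linearMap_comp_eq_zero) rs hannA R hreg
    (ModuleCat.subsingleton_ext_of_exists_isRegular (Ideal.ofList rs) (ModuleCat.of R P)
      (Nfin := hfinP) hsupp (ModuleCat.of R R) hlt rs (fun x hx => Ideal.subset_span hx)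
      (IsRegular.of_isWeaklyRegular_of_mem_maximalIdeal R hmem hreg))
    (fun a => Abelian.Ext.contravariant_sequence_exact₁ hS (ModuleCat.of R R) a (add_comm 1 _)
      (@Subsingleton.elim _ (hext _ _ (by omega)) _ _)) (e.symm.toLinearMap ∘ₗ g')
  refine ⟨LinearMap.extendScalarsOfSurjective Ideal.Quotient.mk_surjective (e.toLinearMap ∘ₗ c),
    fun x hx => ?_⟩
  have := LinearMap.congr_fun hc (⟨x, hx⟩ : P)
  have h2 : c x = e.symm (g ⟨x, hx⟩) := this
  simp [h2]

/-! ### Duals over self-injective local rings -/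

/-- In a self-injective local ring any nonzero socle element `u` generates the socle: the map `u ↦
v` between copies of the residue field extends to an endomorphism of `A`. -/
theorem socle_cyclic {A : Type} [CommRing A] [IsLocalRing A] (hA : Module.Baer A A) (u v : A)
    (hu : u ≠ 0) (hmu : ∀ x ∈ IsLocalRing.maximalIdeal A, x * u = 0)
    (hmv : ∀ x ∈ IsLocalRing.maximalIdeal A, x * v = 0) : ∃ a, v = a * u := by
  have hle : ∀ y : A, (∀ x ∈ IsLocalRing.maximalIdeal A, x * y = 0) →
      IsLocalRing.maximalIdeal A ≤ LinearMap.ker (LinearMap.toSpanSingleton A A y) := by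
    intro y hy x hx
    simpa using hy x hx
  let f := Submodule.liftQ (IsLocalRing.maximalIdeal A) (LinearMap.toSpanSingleton A A u)
    (hle u hmu)
  let g := Submodule.liftQ (IsLocalRing.maximalIdeal A) (LinearMap.toSpanSingleton A A v)
    (hle v hmv)
  have hf1 : f (Submodule.Quotient.mk 1) = u :=
    (Submodule.liftQ_apply _ _ _).trans (by simp)
  have hg1 : g (Submodule.Quotient.mk 1) = v :=
    (Submodule.liftQ_apply _ _ _).trans (by simp)
  have hsimple : IsSimpleModule A (A ⧸ IsLocalRing.maximalIdeal A) :=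
    isSimpleModule_iff_quot_maximal.2 ⟨_, IsLocalRing.maximalIdeal.isMaximal A,
      ⟨LinearEquiv.refl _ _⟩⟩
  have hfinj : Function.Injective f := LinearMap.injective_of_ne_zero fun h => hu (by
    rw [← hf1, h, LinearMap.zero_apply])
  obtain ⟨h, hh⟩ := hA.extension_property f hfinj g
  refine ⟨h 1, ?_⟩
  rw [← hg1, ← hh, LinearMap.comp_apply, hf1]
  conv_lhs => rw [← mul_one u, ← smul_eq_mul, map_smul, smul_eq_mul, mul_comm]

/-- For a finite field extension `K / κ`, the dual `Hom_κ(K, κ)` is generated over `K` by any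
nonzero form: precomposition with multiplication is injective, and the dimensions agree. -/
theorem dual_cyclic_field (κ K : Type) [Field κ] [Field K] [Algebra κ K] [FiniteDimensional κ K]
    (τ : K →ₗ[κ] κ) (hτ : τ ≠ 0) (σ : K →ₗ[κ] κ) : ∃ b : K, ∀ c, σ c = τ (b * c) := by
  let m : K →ₗ[κ] Module.Dual κ K := (LinearMap.mul κ K).compr₂ τ
  have hm : ∀ b c, m b c = τ (b * c) := fun b c => rfl
  have hinj : Function.Injective m := by
    rw [injective_iff_map_eq_zero]
    intro b hb
    by_contra hb0
    refine hτ (LinearMap.ext fun c => ?_)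
    have := hm b (b⁻¹ * c)
    rw [hb, mul_inv_cancel_left₀ hb0] at this
    simpa using this.symm
  obtain ⟨b, hb⟩ := (LinearMap.injective_iff_surjective_of_finrank_eq_finrank
    (Subspace.dual_finrank_eq (K := κ) (V := K)).symm).1 hinj σ
  exact ⟨b, fun c => by rw [← hb, hm]⟩

/-- The `B`-module structure on `Hom_A(B, N)` given by `(b • T) c = T (b * c)`. It is kept as a
local definition, not an instance. -/
@[reducible] def dualModule (A B N : Type) [CommRing A] [CommRing B] [Algebra A B] [AddCommGroup N]
    [Module A N] : Module B (B →ₗ[A] N) where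
  smul b T := T ∘ₗ LinearMap.mulLeft A b
  one_smul T := by ext c; change T (1 * c) = T c; rw [one_mul]
  mul_smul a b T := by
    ext c; change T (a * b * c) = T (b * (a * c)); congr 1; ring
  smul_zero b := rfl
  smul_add b S T := rfl
  add_smul a b T := by ext c; change T ((a + b) * c) = T (a * c) + T (b * c); rw [add_mul, map_add]
  zero_smul T := by ext c; change T (0 * c) = 0; rw [zero_mul, map_zero]

/-- Nakayama's lemma for the `B`-module `Hom_A(B, N)`: if every `φ` is a multiple of `T` modulo
`𝔪_B • Hom_A(B, N)`, then `T` generates. -/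
theorem dual_nakayama {A B N : Type} [CommRing A] [CommRing B] [IsNoetherianRing A]
    [IsLocalRing B] [Algebra A B] [Module.Finite A B] [AddCommGroup N] [Module A N]
    [Module.Finite A N] (T : B →ₗ[A] N)
    (h : ∀ φ : B →ₗ[A] N, ∃ (b : B) (n : ℕ) (x : Fin n → B) (δ : Fin n → (B →ₗ[A] N)),
      (∀ i, x i ∈ IsLocalRing.maximalIdeal B) ∧
      ∀ c, φ c = T (b * c) + ∑ i, δ i (x i * c)) (φ : B →ₗ[A] N) :
    ∃ b : B, ∀ c, φ c = T (b * c) := by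
  let := dualModule A B N
  have hsm : ∀ (b : B) (S : B →ₗ[A] N) (c : B), (b • S) c = S (b * c) := fun _ _ _ => rfl
  have : IsScalarTower A B (B →ₗ[A] N) := ⟨fun a b S => by
    ext c
    rw [hsm, LinearMap.smul_apply, hsm, smul_mul_assoc, map_smul]⟩
  have hfin : Module.Finite A (B →ₗ[A] N) := inferInstance
  have hfin' : Module.Finite B (B →ₗ[A] N) := Module.Finite.of_restrictScalars_finite A B _
  have key : (⊤ : Submodule B (B →ₗ[A] N)) ≤ Submodule.span B {T} := by
    refine Submodule.le_of_le_smul_of_le_jacobson_bot hfin'.1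
      (IsLocalRing.maximalIdeal_le_jacobson ⊥) fun ψ _ => ?_
    obtain ⟨b, n, x, δ, hx, hψ⟩ := h ψ
    have : ψ = b • T + ∑ i, x i • δ i := by
      ext c
      rw [hψ, LinearMap.add_apply, hsm, LinearMap.sum_apply]
      rfl
    rw [this]
    exact Submodule.add_mem_sup (Submodule.smul_mem _ _ (Submodule.mem_span_singleton_self T))
      (Submodule.sum_mem _ fun i _ => Submodule.smul_mem_smul (hx i) trivial)
  obtain ⟨b, rfl⟩ := Submodule.mem_span_singleton.1 (key (x := φ) trivial)
  exact ⟨b, fun c => rfl⟩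

/-- A linear map which vanishes on the kernel of a surjection factors through it. -/
theorem exists_factor {A M N P : Type} [CommRing A] [AddCommGroup M] [AddCommGroup N]
    [AddCommGroup P] [Module A M] [Module A N] [Module A P] (π : M →ₗ[A] N)
    (hπ : Function.Surjective π) (f : M →ₗ[A] P) (h : ∀ x, π x = 0 → f x = 0) :
    ∃ f' : N →ₗ[A] P, ∀ x, f' (π x) = f x := by
  refine ⟨(Submodule.liftQ (LinearMap.ker π) f fun x hx => h x (LinearMap.mem_ker.1 hx)) ∘ₗ
    (π.quotKerEquivOfSurjective hπ).symm.toLinearMap, fun x => ?_⟩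
  have : (π.quotKerEquivOfSurjective hπ).symm (π x) = Submodule.Quotient.mk x := by
    rw [LinearEquiv.symm_apply_eq]
    rfl
  rw [LinearMap.comp_apply, LinearEquiv.coe_coe, this]
  exact Submodule.liftQ_apply _ _ _

/-- If `w` lies in the socle of `B` and `T` is nonzero on `wB`, then every `ψ : B → A` agrees on
`wB` with a multiple of `T`. Both restrictions take values in the one-dimensional socle of `A` and
factor through the residue field of `B`, so that `dual_cyclic_field` applies. -/
theorem socle_step {A B : Type} [CommRing A] [CommRing B] [IsLocalRing A] [IsLocalRing B]
    [Algebra A B] [Module.Finite A B] [IsLocalHom (algebraMap A B)] (hA : Module.Baer A A)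
    (w : B) (hw : ∀ x ∈ IsLocalRing.maximalIdeal B, x * w = 0) (T : B →ₗ[A] A) (b₀ : B)
    (hT : T (w * b₀) ≠ 0) (ψ : B →ₗ[A] A) : ∃ b, ∀ c, ψ (w * c) = T (w * (b * c)) := by
  have hsoc : ∀ (S : B →ₗ[A] A) (c : B), ∀ x ∈ IsLocalRing.maximalIdeal A, x * S (w * c) = 0 := by
    intro S c x hx
    have hx' : algebraMap A B x ∈ IsLocalRing.maximalIdeal B :=
      map_nonunit (algebraMap A B) x hx
    rw [← smul_eq_mul, ← map_smul, Algebra.smul_def, ← mul_assoc, hw _ hx', zero_mul, map_zero]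
  obtain ⟨g, hg⟩ := exists_factor (Algebra.linearMap A (IsLocalRing.ResidueField A))
    IsLocalRing.residue_surjective (LinearMap.toSpanSingleton A A (T (w * b₀))) (by
      intro x hx
      have hx' : IsLocalRing.residue A x = 0 := hx
      rw [LinearMap.toSpanSingleton_apply, smul_eq_mul]
      exact hsoc T b₀ x ((IsLocalRing.residue_eq_zero_iff x).1 hx'))
  have hginj : Function.Injective g := by
    rw [injective_iff_map_eq_zero]
    intro y hy
    obtain ⟨x, rfl⟩ := IsLocalRing.residue_surjective y
    by_contra hne
    rw [← ne_eq, IsLocalRing.residue_ne_zero_iff_isUnit] at hne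
    have h1 : g (IsLocalRing.residue A x) = x * T (w * b₀) := hg x
    rw [h1] at hy
    exact hT ((hne.mul_right_eq_zero).1 hy)
  have hσ : ∀ S : B →ₗ[A] A, ∃ σ : IsLocalRing.ResidueField B →ₗ[IsLocalRing.ResidueField A]
      IsLocalRing.ResidueField A, ∀ c, g (σ (IsLocalRing.residue B c)) = S (w * c) := by
    intro S
    obtain ⟨f, hf⟩ := exists_factor
      (IsScalarTower.toAlgHom A B (IsLocalRing.ResidueField B)).toLinearMap
      IsLocalRing.residue_surjective (S ∘ₗ LinearMap.mulLeft A w) (by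
        intro x hx
        have hx' : IsLocalRing.residue B x = 0 := hx
        rw [LinearMap.comp_apply, LinearMap.mulLeft_apply, mul_comm,
          hw x ((IsLocalRing.residue_eq_zero_iff x).1 hx'), map_zero])
    have hf' : ∀ c, f (IsLocalRing.residue B c) = S (w * c) := hf
    have hrange : ∀ y, f y ∈ LinearMap.range g := by
      intro y
      obtain ⟨c, rfl⟩ := IsLocalRing.residue_surjective y
      obtain ⟨a, ha⟩ := socle_cyclic hA (T (w * b₀)) (S (w * c)) hT (hsoc T b₀) (hsoc S c)
      exact ⟨IsLocalRing.residue A a, by rw [hf', ha]; exact hg a⟩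
    refine ⟨LinearMap.extendScalarsOfSurjective (R := A) IsLocalRing.residue_surjective
      ((LinearEquiv.ofInjective g hginj).symm.toLinearMap ∘ₗ f.codRestrict _ hrange), fun c => ?_⟩
    rw [← hf' c]
    exact congrArg Subtype.val ((LinearEquiv.ofInjective g hginj).apply_symm_apply
      (f.codRestrict _ hrange (IsLocalRing.residue B c)))
  obtain ⟨τ, hτ⟩ := hσ T
  obtain ⟨σ, hσ'⟩ := hσ ψ
  obtain ⟨b, hb⟩ := dual_cyclic_field _ _ τ (fun h => hT (by rw [← hτ, h]; simp)) σ
  obtain ⟨b, rfl⟩ := IsLocalRing.residue_surjective b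
  refine ⟨b, fun c => ?_⟩
  rw [← hσ', hb, ← map_mul, hτ]

/-- For a finite local map `A → B` of Noetherian self-injective local rings, `Hom_A(B, A)` is
cyclic over `B`. -/
theorem dual_cyclic_of_baer {A B : Type} [CommRing A] [CommRing B] [IsNoetherianRing A]
    [IsNoetherianRing B] [IsLocalRing A] [IsLocalRing B]
    [Algebra A B] [Module.Finite A B] [IsLocalHom (algebraMap A B)] (hA : Module.Baer A A)
    (hB : Module.Baer B B) :
    ∃ T : B →ₗ[A] A, ∀ φ : B →ₗ[A] A, ∃ b : B, ∀ c, φ c = T (b * c) := by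
  obtain ⟨w, hw, hsoc⟩ : ∃ w : B, (∀ x ∈ IsLocalRing.maximalIdeal B, x * w = 0) ∧
      ∀ v : B, (∀ x ∈ IsLocalRing.maximalIdeal B, x * v = 0) → ∃ a, v = a * w := by
    by_cases h : ∃ w : B, w ≠ 0 ∧ ∀ x ∈ IsLocalRing.maximalIdeal B, x * w = 0
    · obtain ⟨w, hw0, hw⟩ := h
      exact ⟨w, hw, fun v hv => socle_cyclic hB w v hw0 hw hv⟩
    · refine ⟨0, fun x _ => mul_zero x, fun v hv => ⟨0, ?_⟩⟩
      rw [mul_zero]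
      by_contra hv0
      exact h ⟨v, hv0, hv⟩
  obtain ⟨T, hT⟩ : ∃ T : B →ₗ[A] A, ∀ ψ : B →ₗ[A] A, ∃ b, ∀ c, ψ (w * c) = T (w * (b * c)) := by
    by_cases h : ∃ (T : B →ₗ[A] A) (b₀ : B), T (w * b₀) ≠ 0
    · obtain ⟨T, b₀, hT⟩ := h
      exact ⟨T, socle_step hA w hw T b₀ hT⟩
    · push Not at h
      exact ⟨0, fun ψ => ⟨0, fun c => by rw [h]; rfl⟩⟩
  refine ⟨T, dual_nakayama T fun ψ => ?_⟩
  obtain ⟨b, hb⟩ := hT ψ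
  obtain ⟨n, x, hx⟩ := (Submodule.fg_iff_exists_fin_generating_family).1
    (IsNoetherian.noetherian (IsLocalRing.maximalIdeal B))
  have hxm : ∀ i, x i ∈ IsLocalRing.maximalIdeal B := fun i => by
    rw [← hx]; exact Submodule.subset_span ⟨i, rfl⟩
  let δ : B →ₗ[A] A := ψ - T ∘ₗ LinearMap.mulLeft A b
  let Φ : B →ₗ[A] (Fin n → B) := LinearMap.pi fun i => LinearMap.mulLeft A (x i)
  have hker : LinearMap.ker Φ ≤ LinearMap.ker δ := by
    intro c hc
    have hc' : ∀ i, x i * c = 0 := fun i => congrFun (LinearMap.mem_ker.1 hc) i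
    have hcm : ∀ y ∈ IsLocalRing.maximalIdeal B, y * c = 0 := by
      have : IsLocalRing.maximalIdeal B ≤ LinearMap.ker (LinearMap.mulRight B c) := by
        rw [← hx, Submodule.span_le]
        rintro _ ⟨i, rfl⟩
        exact hc' i
      exact fun y hy => this hy
    obtain ⟨a, rfl⟩ := hsoc c hcm
    rw [LinearMap.mem_ker]
    change ψ (a * w) - T (b * (a * w)) = 0
    rw [mul_comm a w, hb, sub_eq_zero]
    congr 1
    ring
  obtain ⟨H, hH⟩ := hA.extension_property (Submodule.liftQ (LinearMap.ker Φ) Φ le_rfl)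
    (LinearMap.ker_eq_bot.1 (Submodule.ker_liftQ_eq_bot _ _ _ le_rfl))
    (Submodule.liftQ (LinearMap.ker Φ) δ hker)
  refine ⟨b, n, x, fun i => H ∘ₗ LinearMap.single A (fun _ => B) i, hxm, fun c => ?_⟩
  have h1 : H (Φ c) = ψ c - T (b * c) :=
    LinearMap.congr_fun hH (Submodule.Quotient.mk c)
  have h2 : H (Φ c) = ∑ i, H (Pi.single i (x i * c)) := by
    rw [← map_sum]
    congr 1
    exact (Finset.univ_sum_single (Φ c)).symm
  rw [h1, sub_eq_iff_eq_add] at h2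
  rw [h2, add_comm]
  rfl

/-! ### Lifting along a regular sequence -/

/-- Powers of a regular sequence in a Noetherian local ring form a regular sequence. The elements
`bs` carry the powers already formed: each step moves an entry to the end, where taking its power
is harmless, using that regular sequences may be permuted. -/
theorem isWeaklyRegular_pow [IsNoetherianRing R] [IsLocalRing R] (q : ℕ) (hq : q ≠ 0)
    (as : List R) : ∀ bs : List R, (∀ x ∈ as, x ∈ IsLocalRing.maximalIdeal R) →
    (∀ x ∈ bs, x ∈ IsLocalRing.maximalIdeal R) → IsWeaklyRegular R (as ++ bs) →
    IsWeaklyRegular R (as.map (· ^ q) ++ bs) := by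
  induction as with
  | nil => intro bs _ _ h; exact h
  | cons a as ih =>
    intro bs ha hb h
    have haq : a ^ q ∈ IsLocalRing.maximalIdeal R :=
      Ideal.pow_mem_of_mem _ (ha a (by simp)) q (Nat.pos_of_ne_zero hq)
    have has : ∀ x ∈ as, x ∈ IsLocalRing.maximalIdeal R := fun x hx => ha x (by simp [hx])
    have hbq : ∀ x ∈ bs ++ [a ^ q], x ∈ IsLocalRing.maximalIdeal R := by
      intro x hx
      rcases List.mem_append.1 hx with hx | hx
      · exact hb x hx
      · rw [List.mem_singleton.1 hx]; exact haq
    have h1 : IsWeaklyRegular R ((as ++ bs) ++ [a]) := by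
      refine IsLocalRing.isWeaklyRegular_of_perm_of_subset_maximalIdeal h ?_ ?_
      · exact (List.perm_append_singleton a (as ++ bs)).symm
      · intro x hx
        rcases List.mem_append.1 hx with hx | hx
        · exact ha x hx
        · exact hb x hx
    rw [isWeaklyRegular_append_iff, isWeaklyRegular_singleton_iff] at h1
    have h2 : IsWeaklyRegular R ((as ++ bs) ++ [a ^ q]) := by
      rw [isWeaklyRegular_append_iff, isWeaklyRegular_singleton_iff]
      exact ⟨h1.1, h1.2.pow q⟩
    rw [List.append_assoc] at h2
    refine IsLocalRing.isWeaklyRegular_of_perm_of_subset_maximalIdeal (ih _ has hbq h2) ?_ ?_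
    · rw [← List.append_assoc]
      exact List.perm_append_singleton _ _
    · intro x hx
      rcases List.mem_append.1 hx with hx | hx
      · obtain ⟨y, hy, rfl⟩ := List.mem_map.1 hx
        exact Ideal.pow_mem_of_mem _ (has y hy) q (Nat.pos_of_ne_zero hq)
      · exact hbq x hx

/-- If `Ext^1(X, S₁) = 0` then maps `X → S₃` lift along `S₂ → S₃`. -/
theorem exists_lift_of_ext (S : ShortComplex (ModuleCat.{0} R)) (hS : S.ShortExact)
    (X : ModuleCat.{0} R) (h : Subsingleton (Abelian.Ext X S.X₁ 1)) (φ : X →ₗ[R] S.X₃) :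
    ∃ T : X →ₗ[R] S.X₂, ∀ y, S.g.hom (T y) = φ y := by
  obtain ⟨a, ha⟩ := Abelian.Ext.covariant_sequence_exact₃ X hS
    (Abelian.Ext.mk₀ (ModuleCat.ofHom φ)) (zero_add 1) (Subsingleton.elim _ _)
  obtain ⟨T, rfl⟩ := (Abelian.Ext.mk₀_bijective _ _).2 a
  rw [Abelian.Ext.mk₀_comp_mk₀] at ha
  have ha' := (Abelian.Ext.mk₀_bijective _ _).1 ha
  exact ⟨T.hom, fun y => congrArg (fun f => f.hom y) ha'⟩

/-- If `Ext^j(S, N) = 0` for `j > 0` and `rs` is `N`-regular, then `Hom(S, N)` is cyclic over `S`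
as soon as `Hom(S, N/(rs)N)` is. -/
theorem cyclic_lift [IsNoetherianRing R] {S : Type} [CommRing S] [IsLocalRing R]
    [IsLocalRing S] [Algebra R S] [Module.Finite R S] [IsLocalHom (algebraMap R S)] (rs : List R)
    (hrs : ∀ x ∈ rs, x ∈ IsLocalRing.maximalIdeal R) :
    ∀ (N : Type) [AddCommGroup N] [Module R N] [Module.Finite R N], IsWeaklyRegular N rs →
    (∀ j, Subsingleton (Abelian.Ext (ModuleCat.of R S) (ModuleCat.of R N) (j + 1))) →
    (∃ T : S →ₗ[R] (N ⧸ (Ideal.ofList rs • ⊤ : Submodule R N)),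
      ∀ φ : S →ₗ[R] (N ⧸ (Ideal.ofList rs • ⊤ : Submodule R N)), ∃ b, ∀ c, φ c = T (b * c)) →
    ∃ T : S →ₗ[R] N, ∀ φ : S →ₗ[R] N, ∃ b, ∀ c, φ c = T (b * c) := by
  induction rs with
  | nil =>
    rintro N _ _ _ _ _ ⟨T, hT⟩
    let e : (N ⧸ (Ideal.ofList [] • ⊤ : Submodule R N)) ≃ₗ[R] N :=
      Submodule.quotEquivOfEqBot _ (by
        simp only [Ideal.ofList_nil]; exact Submodule.bot_smul (M := N) ⊤)
    refine ⟨e.toLinearMap ∘ₗ T, fun φ => ?_⟩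
    obtain ⟨b, hb⟩ := hT (e.symm.toLinearMap ∘ₗ φ)
    refine ⟨b, fun c => ?_⟩
    have := hb c
    simp only [LinearMap.comp_apply, LinearEquiv.coe_coe] at this ⊢
    rw [← this, LinearEquiv.apply_symm_apply]
  | cons x rs ih =>
    rintro N _ _ _ hN hext ⟨T₀, hT₀⟩
    rw [isWeaklyRegular_cons_iff] at hN
    let e := Submodule.quotOfListConsSMulTopEquivQuotSMulTopInner N x rs
    obtain ⟨T', hT'⟩ := ih (fun y hy => hrs y (by simp [hy])) (QuotSMulTop x N) hN.2
      (fun j => ext_quotSMulTop_subsingleton (ModuleCat.of R S) (ModuleCat.of R N) x hN.1 (j + 1)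
        (hext j) (hext (j + 1))) (by
        refine ⟨e.toLinearMap ∘ₗ T₀, fun φ => ?_⟩
        obtain ⟨b, hb⟩ := hT₀ (e.symm.toLinearMap ∘ₗ φ)
        refine ⟨b, fun c => ?_⟩
        have := hb c
        simp only [LinearMap.comp_apply, LinearEquiv.coe_coe] at this ⊢
        rw [← this, LinearEquiv.apply_symm_apply])
    have hSx := IsSMulRegular.smulShortComplex_shortExact (M := ModuleCat.of R N) hN.1
    obtain ⟨T, hT⟩ : ∃ T : S →ₗ[R] N, ∀ y, (x • (⊤ : Submodule R N)).mkQ (T y) = T' y :=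
      exists_lift_of_ext _ hSx (ModuleCat.of R S) (hext 0) T'
    refine ⟨T, dual_nakayama T fun φ => ?_⟩
    obtain ⟨b, hb⟩ := hT' ((x • (⊤ : Submodule R N)).mkQ ∘ₗ φ)
    let δ : S →ₗ[R] N := φ - T ∘ₗ LinearMap.mulLeft R b
    have hinj : Function.Injective (LinearMap.lsmul R N x) := hN.1
    have hδ : ∀ c, δ c ∈ LinearMap.range (LinearMap.lsmul R N x) := by
      intro c
      have h1 : (x • (⊤ : Submodule R N)).mkQ (δ c) = 0 := by
        change (x • (⊤ : Submodule R N)).mkQ (φ c - T (b * c)) = 0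
        rw [map_sub, hT, ← hb, LinearMap.comp_apply, sub_self]
      rw [Submodule.mkQ_apply, Submodule.Quotient.mk_eq_zero] at h1
      obtain ⟨n, -, hn⟩ := h1
      exact ⟨n, hn⟩
    let g : S →ₗ[R] N := (LinearEquiv.ofInjective _ hinj).symm.toLinearMap ∘ₗ
      δ.codRestrict _ hδ
    have hg : ∀ c, x • g c = φ c - T (b * c) := fun c =>
      congrArg Subtype.val ((LinearEquiv.ofInjective _ hinj).apply_symm_apply
        (δ.codRestrict _ hδ c))
    refine ⟨b, 1, fun _ => algebraMap R S x, fun _ => g, fun _ => ?_, fun c => ?_⟩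
    · exact map_nonunit (algebraMap R S) x (hrs x (by simp))
    · rw [Fin.sum_univ_one, ← Algebra.smul_def, map_smul, hg]
      abel

/-- Since `Hom_R(S, R/I) = Hom_{R/I}(S/IS, R/I)`, the self-injective case makes it cyclic over
`S`. -/
theorem hom_quotient_cyclic {S : Type} [CommRing S] [Algebra R S] [Module.Finite R S]
    [IsNoetherianRing R] [IsNoetherianRing S] [IsLocalRing R] [IsLocalRing S]
    [IsLocalHom (algebraMap R S)] (I : Ideal R) (hI : I ≤ IsLocalRing.maximalIdeal R)
    (hA : Module.Baer (R ⧸ I) (R ⧸ I))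
    (hB : Module.Baer (S ⧸ I.map (algebraMap R S)) (S ⧸ I.map (algebraMap R S))) :
    ∃ T : S →ₗ[R] (R ⧸ I), ∀ φ : S →ₗ[R] (R ⧸ I), ∃ b, ∀ c, φ c = T (b * c) := by
  have hJ : I.map (algebraMap R S) ≤ IsLocalRing.maximalIdeal S :=
    Ideal.map_le_iff_le_comap.2 fun x hx => map_nonunit (algebraMap R S) x (hI hx)
  have : Nontrivial (R ⧸ I) := Ideal.Quotient.nontrivial_iff.2
    fun h => (IsLocalRing.maximalIdeal.isMaximal R).ne_top (top_le_iff.1 (h ▸ hI))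
  have : Nontrivial (S ⧸ I.map (algebraMap R S)) := Ideal.Quotient.nontrivial_iff.2
    fun h => (IsLocalRing.maximalIdeal.isMaximal S).ne_top (top_le_iff.1 (h ▸ hJ))
  have : IsLocalRing (R ⧸ I) :=
    IsLocalRing.of_surjective' (Ideal.Quotient.mk I) Ideal.Quotient.mk_surjective
  have : IsLocalRing (S ⧸ I.map (algebraMap R S)) :=
    IsLocalRing.of_surjective' (Ideal.Quotient.mk _) Ideal.Quotient.mk_surjective
  have : Module.Finite (R ⧸ I) (S ⧸ I.map (algebraMap R S)) :=
    Module.Finite.of_restrictScalars_finite R _ _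
  have : IsLocalHom (algebraMap (R ⧸ I) (S ⧸ I.map (algebraMap R S))) := by
    refine ⟨fun a ha => ?_⟩
    obtain ⟨r, rfl⟩ := Ideal.Quotient.mk_surjective a
    rw [Ideal.Quotient.algebraMap_quotient_map_quotient] at ha
    have : IsLocalHom (Ideal.Quotient.mk (I.map (algebraMap R S))) :=
      isLocalHom_of_le_jacobson_bot _ (hJ.trans (IsLocalRing.maximalIdeal_le_jacobson _))
    exact ((isUnit_of_map_unit (algebraMap R S) r
      (isUnit_of_map_unit (Ideal.Quotient.mk _) _ ha))).map _
  obtain ⟨T, hT⟩ := dual_cyclic_of_baer hA hB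
  refine ⟨T.restrictScalars R ∘ₗ (Ideal.Quotient.mkₐ R _).toLinearMap, fun φ => ?_⟩
  obtain ⟨ψ, hψ⟩ := exists_factor (Ideal.Quotient.mkₐ R (I.map (algebraMap R S))).toLinearMap
    Ideal.Quotient.mk_surjective φ (by
      intro x hx
      have hx' : x ∈ (I.map (algebraMap R S)).restrictScalars R :=
        Ideal.Quotient.eq_zero_iff_mem.1 hx
      rw [← Ideal.smul_top_eq_map] at hx'
      refine Submodule.smul_induction_on hx' (fun r hr n _ => ?_) fun y z hy hz => ?_
      · rw [map_smul, Algebra.smul_def, Ideal.Quotient.algebraMap_eq,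
          Ideal.Quotient.eq_zero_iff_mem.2 hr, zero_mul]
      · rw [map_add, hy, hz, add_zero])
  obtain ⟨b, hb⟩ := hT (LinearMap.extendScalarsOfSurjective Ideal.Quotient.mk_surjective ψ)
  obtain ⟨b, rfl⟩ := Ideal.Quotient.mk_surjective b
  exact ⟨b, fun c => (hψ c).symm.trans (hb (Ideal.Quotient.mk _ c))⟩

/-- For a finite local map `R → S`, with a regular sequence on both rings whose length bounds
their injective dimensions, `Hom_R(S, R)` is cyclic over `S`. -/
theorem hom_cyclic [IsNoetherianRing R] [IsLocalRing R] {S : Type} [CommRing S]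
    [IsNoetherianRing S] [IsLocalRing S] [Algebra R S] [Module.Finite R S]
    [IsLocalHom (algebraMap R S)] (rs : List R)
    (hmem : ∀ x ∈ rs, x ∈ IsLocalRing.maximalIdeal R) (hreg : IsWeaklyRegular R rs)
    (hregS : IsWeaklyRegular S (rs.map (algebraMap R S)))
    (hextR : ∀ (M : Type) [AddCommGroup M] [Module R M] [Module.Finite R M], ∀ j, rs.length < j →
        Subsingleton (Abelian.Ext (ModuleCat.of R M) (ModuleCat.of R R) j))
    (hextS : ∀ (M : Type) [AddCommGroup M] [Module S M] [Module.Finite S M], ∀ j, rs.length < j →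
        Subsingleton (Abelian.Ext (ModuleCat.of S M) (ModuleCat.of S S) j)) :
    ∃ T : S →ₗ[R] R, ∀ φ : S →ₗ[R] R, ∃ b, ∀ c, φ c = T (b * c) := by
  have hmemS : ∀ x ∈ rs.map (algebraMap R S), x ∈ IsLocalRing.maximalIdeal S := by
    intro x hx
    obtain ⟨y, hy, rfl⟩ := List.mem_map.1 hx
    exact map_nonunit (algebraMap R S) y (hmem y hy)
  have hA := baer_quotient_ofList rs hmem hreg hextR
  have hB := baer_quotient_ofList (rs.map (algebraMap R S)) hmemS hregS
    (fun M _ _ _ j hj => hextS M j (by rwa [List.length_map] at hj))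
  rw [← Ideal.map_ofList] at hB
  obtain ⟨T, hT⟩ := hom_quotient_cyclic (Ideal.ofList rs) (Ideal.span_le.2 hmem) hA hB
  have hI : (Ideal.ofList rs • ⊤ : Submodule R R) = Ideal.ofList rs := by
    rw [smul_eq_mul, Ideal.mul_top]
  let e := Submodule.quotEquivOfEq _ _ hI
  refine cyclic_lift rs hmem R hreg (fun j => ?_) ⟨e.symm.toLinearMap ∘ₗ T, fun φ => ?_⟩
  · exact ext_subsingleton_of_isWeaklyRegular (ModuleCat.of R R) (rs.length + 1)
      (fun M _ _ _ j hj => hextR M j (by omega)) rs hmem S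
      ((isWeaklyRegular_map_algebraMap_iff S S rs).1 hregS) (j + 1) (by omega)
  · obtain ⟨b, hb⟩ := hT (e.toLinearMap ∘ₗ φ)
    refine ⟨b, fun c => ?_⟩
    have := hb c
    simp only [LinearMap.comp_apply, LinearEquiv.coe_coe] at this ⊢
    rw [← this, LinearEquiv.symm_apply_apply]

/-- `hom_cyclic` in terms of a ring homomorphism and additive maps. This allows `R` and `S` to be
the same ring, as for an iterate of Frobenius. -/
theorem hom_cyclic_of_ringHom {S : Type} [CommRing S] [IsNoetherianRing R] [IsLocalRing R]
    [IsNoetherianRing S] [IsLocalRing S] (f : R →+* S) (hf : f.Finite) (hloc : IsLocalHom f)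
    (rs : List R)
    (hmem : ∀ x ∈ rs, x ∈ IsLocalRing.maximalIdeal R) (hreg : IsWeaklyRegular R rs)
    (hregS : IsWeaklyRegular S (rs.map f))
    (hextR : ∀ (M : Type) [AddCommGroup M] [Module R M] [Module.Finite R M], ∀ j, rs.length < j →
        Subsingleton (Abelian.Ext (ModuleCat.of R M) (ModuleCat.of R R) j))
    (hextS : ∀ (M : Type) [AddCommGroup M] [Module S M] [Module.Finite S M], ∀ j, rs.length < j →
        Subsingleton (Abelian.Ext (ModuleCat.of S M) (ModuleCat.of S S) j)) :
    ∃ T : S →+ R, (∀ r s, T (f r * s) = r * T s) ∧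
      ∀ φ : S →+ R, (∀ r s, φ (f r * s) = r * φ s) → ∃ b, ∀ c, φ c = T (b * c) := by
  let := f.toAlgebra
  have : Module.Finite R S := hf
  have : IsLocalHom (algebraMap R S) := hloc
  obtain ⟨T, hT⟩ := hom_cyclic (S := S) rs hmem hreg hregS hextR hextS
  refine ⟨T.toAddMonoidHom, fun r s => T.map_smul r s, fun φ hφ => ?_⟩
  exact hT { φ with map_smul' := hφ }

end

/-- If `R` is an `F`-finite Gorenstein local ring of prime characteristic
`p > 0`, then for every `e ≥ 1` the module `Hom_R(F^e_* R, R)` is cyclic over `F^e_* R`: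
there is a single `R`-linear map `T : F^e_* R → R` (i.e. an additive map with
`T (r^{p^e} * s) = r * T s`) such that every such map `φ` has the form `φ s = T (a * s)`
for some `a ∈ R`. -/
theorem statement0 (R : Type) [CommRing R] [IsNoetherianRing R] [IsLocalRing R]
    (p : ℕ) [Fact p.Prime] [CharP R p]
    (hFfinite : (frobenius R p).Finite)
    (hGor : IsGorensteinLocal R)
    (e : ℕ) (he : 1 ≤ e) :
    ∃ T : R →+ R, (∀ r s : R, T (r ^ p ^ e * s) = r * T s) ∧
      ∀ φ : R →+ R, (∀ r s : R, φ (r ^ p ^ e * s) = r * φ s) →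
        ∃ a : R, ∀ s : R, φ s = T (a * s) := by
  have hq : p ^ e ≠ 0 := pow_ne_zero _ (Fact.out : p.Prime).ne_zero
  obtain ⟨n, hn⟩ := hGor
  obtain ⟨rs, hmem, hreg, hext⟩ := exists_isWeaklyRegular_ext (R := R) (n + 1) (fun j hj => by
    obtain ⟨j, rfl⟩ : ∃ i, j = i + 1 := ⟨j - 1, by omega⟩
    exact subsingleton_ext_of_old _ _ j (hn (j + 1) (by omega)))
  have hfin : ∀ k, (iterateFrobenius R p k).Finite := by
    intro k
    induction k with
    | zero =>
      rw [iterateFrobenius_zero]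
      exact RingHom.Finite.id R
    | succ k ih =>
      rw [iterateFrobenius_add, iterateFrobenius_one]
      exact ih.comp hFfinite
  have hloc : IsLocalHom (iterateFrobenius R p e) :=
    ⟨fun a ha => (isUnit_pow_iff hq).1 ha⟩
  have hreg' : RingTheory.Sequence.IsWeaklyRegular R (rs.map (iterateFrobenius R p e)) := by
    have := isWeaklyRegular_pow (p ^ e) hq rs [] hmem (by simp) (by rwa [List.append_nil])
    rwa [List.append_nil] at this
  exact hom_cyclic_of_ringHom (iterateFrobenius R p e) (hfin e) hloc rs hmem hreg hreg' hext hext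
end

section
/- Let R be a regular ring of prime characteristic p > 0 and J ⊆ R an ideal such that R/J is Gorenstein local (with R F-finite local). Then there exists g ∈ R with (J^{[p]} : J) = gR + J^{[p]}, and for all e ≥ 1, (J^{[p^e]} : J^{[p^{e-1}]}) = g^{p^{e-1}} R + J^{[p^e]}. -/
/-!
The idea is that `(J^{[p]} : J) / J^{[p]}` is the module of homomorphisms from `R/J` to
`R/J^{[p]}`, both of which are Gorenstein of the same dimension, so that it is the canonical
module of `R/J` and hence cyclic. The argument below makes this elementary by cutting down to
Artinian quotients.

* For `S = R/J`, the vanishing of `Ext^i(k, S)` in high degrees, together with Rees' theorem on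
  `Ext` and depth, produces a regular sequence `xs` such that `S/(xs)` is self-injective with
  nonzero socle, i.e. Artinian with a one-dimensional socle (`exists_regOn_artinGor`). The sequence
  is lifted to `R` (`regOn_comap`, `artinGor_comap`).
* Since `R` is regular and `F`-finite, `F_* R` is free (Kunz); this is proved by exhibiting a finite
  family `eᵢ` such that every `z` is `∑ aᵢ ^ p * eᵢ`, and such that the coefficients of an element
  of `𝔞^{[p]}` lie in `𝔞`, for every ideal `𝔞` (`exists_frobBasis`). Consequently bracket powers
  commute with colons (`colonOf_bracketPow`) and preserve regular sequences and the Artinian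
  Gorenstein condition (`regOn_bracketPow`, `artinGor_bracketPow`).
* The sequence of the `p`-th powers of the `xs` is therefore regular, with Artinian Gorenstein
  quotient, modulo both `J` and `J^{[p]}`. In the Artinian case, `(c : J)` is cyclic modulo `c` by
  duality; in general one descends along the regular sequence with Nakayama's lemma, using that
  homomorphisms `J/c → R/c` are multiplications because this holds modulo the sequence
  (`exists_colon_eq`).
* The formula for higher `e` follows by induction, applying
  `(I^{[p]} : K^{[p]}) = (I : K)^{[p]}`.
-/

open CategoryTheory

/-- A Noetherian local ring is *regular* if its maximal ideal can be generated by
`dim` many elements. -/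
def IsRegularLocal (A : Type) [CommRing A] [IsLocalRing A] : Prop :=
  IsNoetherianRing A ∧
    ∃ s : Finset A, Ideal.span (s : Set A) = IsLocalRing.maximalIdeal A ∧
      (s.card : WithBot (WithTop ℕ)) = ringKrullDim A

/-- The Frobenius power `J^{[q]}`. -/
def bracketPow {R : Type} [CommRing R] (J : Ideal R) (q : ℕ) : Ideal R :=
  Ideal.span ((fun x => x ^ q) '' (J : Set R))

/-! ### Regular sequences and the Artinian Gorenstein condition, elementwise -/

section Elem
variable {R : Type} [CommRing R] [IsLocalRing R]

open IsLocalRing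

/-- `RegOn c xs`: the list `xs` consists of elements of the maximal ideal and is a weakly regular
sequence on `R/c`, expressed by elements of `R` instead of classes modulo ideals. -/
def RegOn : Ideal R → List R → Prop
  | _, [] => True
  | c, x :: xs => x ∈ maximalIdeal R ∧ (∀ z, x * z ∈ c → z ∈ c) ∧ RegOn (c ⊔ Ideal.span {x}) xs

/-- The ideal `c + (xs)`. -/
def adjoinList : Ideal R → List R → Ideal R
  | c, [] => c
  | c, x :: xs => adjoinList (c ⊔ Ideal.span {x}) xs

/-- The socle of `R/b` is nonzero and generated by the class of `u`. -/
structure SimpleSocle (b : Ideal R) (u : R) : Prop where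
  notMem : u ∉ b
  smul_mem : ∀ r ∈ maximalIdeal R, r * u ∈ b
  exists_sub_mem : ∀ z, (∀ r ∈ maximalIdeal R, r * z ∈ b) → ∃ a, z - a * u ∈ b

/-- `R/b` is an Artinian Gorenstein ring: it is killed by a power of the maximal ideal and has a
one-dimensional socle. -/
structure ArtinGor (b : Ideal R) : Prop where
  pow_le : ∃ N : ℕ, maximalIdeal R ^ N ≤ b
  socle : ∃ u, SimpleSocle b u

omit [IsLocalRing R] in
lemma mem_sup_span_singleton {c : Ideal R} {x z : R} :
    z ∈ c ⊔ Ideal.span {x} ↔ ∃ r, z - r * x ∈ c := by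
  rw [Submodule.mem_sup]
  constructor
  · rintro ⟨y, hy, w, hw, rfl⟩
    obtain ⟨r, rfl⟩ := Ideal.mem_span_singleton'.1 hw
    exact ⟨r, by simpa using hy⟩
  · rintro ⟨r, hr⟩
    exact ⟨_, hr, r * x, Ideal.mem_span_singleton'.2 ⟨r, rfl⟩, by ring⟩

omit [IsLocalRing R] in
lemma adjoinList_eq (c : Ideal R) (xs : List R) :
    adjoinList c xs = c ⊔ Ideal.ofList xs := by
  induction xs generalizing c with
  | nil => simp [adjoinList]
  | cons x xs ih => rw [adjoinList, ih, Ideal.ofList_cons, sup_assoc]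

omit [IsLocalRing R] in
lemma le_adjoinList (c : Ideal R) (xs : List R) : c ≤ adjoinList c xs := by
  rw [adjoinList_eq]; exact le_sup_left

omit [IsLocalRing R] in
lemma adjoinList_mono {c d : Ideal R} (h : c ≤ d) (xs : List R) :
    adjoinList c xs ≤ adjoinList d xs := by
  simp only [adjoinList_eq]; exact sup_le_sup_right h _

/-- Regularity and colons pass along `0 → R/d → R/c → R/(c + x) → 0`. -/
lemma regOn_of_colon {c d : Ideal R} {x : R} (hcd : ∀ z, x * z ∈ c ↔ z ∈ d) (xs : List R)
    (hd : RegOn d xs) (he : RegOn (c ⊔ Ideal.span {x}) xs) :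
    RegOn c xs ∧ ∀ z, x * z ∈ adjoinList c xs ↔ z ∈ adjoinList d xs := by
  induction xs generalizing c d with
  | nil => exact ⟨trivial, hcd⟩
  | cons y ys ih =>
    obtain ⟨hy, hd1, hd2⟩ := hd
    obtain ⟨-, he1, he2⟩ := he
    have hcd' : ∀ z, x * z ∈ c ⊔ Ideal.span {y} ↔ z ∈ d ⊔ Ideal.span {y} := by
      intro z
      simp only [mem_sup_span_singleton] at he1 ⊢
      constructor
      · rintro ⟨r, hr⟩
        obtain ⟨s, hs⟩ := he1 r ⟨z, by
          have := c.neg_mem hr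
          convert this using 1; ring⟩
        refine ⟨s, (hcd _).1 ?_⟩
        have := c.add_mem hr (c.mul_mem_left y hs)
        convert this using 1; ring
      · rintro ⟨r, hr⟩
        refine ⟨x * r, ?_⟩
        have := (hcd _).2 hr
        convert this using 1; ring
    have := ih hcd' hd2 (by rwa [sup_right_comm])
    refine ⟨⟨hy, ?_, this.1⟩, this.2⟩
    intro z hz
    obtain ⟨r, hr⟩ := mem_sup_span_singleton.1 (he1 z (Ideal.mem_sup_left hz))
    have h1 : y * r ∈ d := (hcd _).1 (by
      have := c.sub_mem hz (c.mul_mem_left y hr)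
      convert this using 1; ring)
    have := c.add_mem hr ((hcd r).2 (hd1 r h1))
    convert this using 1; ring

/-- The head of a regular sequence may be replaced by its powers. The step from `x^{k+1}` to
`x^{k+2}` uses the exact sequence given by multiplication by `x`, which also carries the socle of
one quotient to that of the next. -/
lemma regOn_pow_head {b : Ideal R} {x : R} {xs : List R} (h : RegOn b (x :: xs)) (k : ℕ) :
    RegOn (b ⊔ Ideal.span {x ^ (k + 1)}) xs ∧
      (ArtinGor (adjoinList (b ⊔ Ideal.span {x}) xs) →
        ArtinGor (adjoinList (b ⊔ Ideal.span {x ^ (k + 1)}) xs)) := by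
  obtain ⟨hx, hreg, hxs⟩ := h
  induction k with
  | zero => simpa using hxs
  | succ k ih =>
    obtain ⟨ih1, ih2⟩ := ih
    set c := b ⊔ Ideal.span {x ^ (k + 1 + 1)} with hc
    set d := b ⊔ Ideal.span {x ^ (k + 1)} with hd
    have hcx : c ⊔ Ideal.span {x} = b ⊔ Ideal.span {x} := by
      rw [hc, sup_assoc]
      congr 1
      rw [sup_eq_right, Ideal.span_singleton_le_span_singleton]
      exact dvd_pow_self _ (by simp)
    have hcd : ∀ z, x * z ∈ c ↔ z ∈ d := by
      intro z
      simp only [hc, hd, mem_sup_span_singleton]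
      refine exists_congr fun r => ⟨fun hr => hreg _ ?_, fun hr => ?_⟩
      · convert hr using 1; ring
      · have := b.mul_mem_left x hr
        convert this using 1; ring
    obtain ⟨h1, h2⟩ := regOn_of_colon hcd xs ih1 (by rwa [hcx])
    refine ⟨h1, fun hG => ?_⟩
    have hG1 := hG
    obtain ⟨⟨N, hN⟩, u, hu⟩ := ih2 hG
    obtain ⟨⟨N', hN'⟩, -⟩ := hG1
    have hsum : adjoinList (b ⊔ Ideal.span {x}) xs = adjoinList c xs ⊔ Ideal.span {x} := by
      rw [← hcx]; simp only [adjoinList_eq]; rw [sup_right_comm]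
    have hdle : adjoinList d xs ≤ adjoinList c xs ⊔ Ideal.span {x} := by
      rw [← hsum]
      refine adjoinList_mono (sup_le_sup_left ?_ _) _
      rw [Ideal.span_singleton_le_span_singleton]
      exact dvd_pow_self _ (by simp)
    refine ⟨⟨N' + N, ?_⟩, x * u, ?_, ?_, ?_⟩
    · rw [pow_add]
      refine (Ideal.mul_mono_left (hN'.trans hsum.le)).trans ?_
      rw [Ideal.sup_mul]
      refine sup_le Ideal.mul_le_left ?_
      rw [Ideal.span_singleton_mul_le_iff]
      exact fun z hz => (h2 z).2 (hN hz)
    · exact fun h => hu.1 ((h2 _).1 h)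
    · intro r hr
      have := (h2 _).2 (hu.2 r hr)
      convert this using 1; ring
    · intro z hz
      have hz1 : z ∈ adjoinList d xs := (h2 z).1 (hz x hx)
      obtain ⟨z', hz'⟩ := mem_sup_span_singleton.1 (hdle hz1)
      obtain ⟨a, ha⟩ := hu.3 z' (fun r hr => (h2 _).1 (by
        have := Ideal.sub_mem _ (hz r hr) (Ideal.mul_mem_left _ r hz')
        convert this using 1; ring))
      refine ⟨a, ?_⟩
      have := Ideal.add_mem _ hz' ((h2 _).2 ha)
      convert this using 1; ring

/-- Replacing the elements of a regular sequence by their `k`-th powers preserves regularity, and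
the Artinian Gorenstein condition on the quotient. -/
lemma regOn_map_pow {b : Ideal R} {xs : List R} (h : RegOn b xs) {k : ℕ} (hk : k ≠ 0) :
    RegOn b (xs.map (· ^ k)) ∧
      (ArtinGor (adjoinList b xs) → ArtinGor (adjoinList b (xs.map (· ^ k)))) := by
  induction xs generalizing b with
  | nil => exact ⟨trivial, id⟩
  | cons x xs ih =>
    obtain ⟨k, rfl⟩ := Nat.exists_eq_succ_of_ne_zero hk
    obtain ⟨h1, h2⟩ := regOn_pow_head h k
    obtain ⟨h3, h4⟩ := ih h1
    refine ⟨⟨Ideal.pow_mem_of_mem _ h.1 _ (by simp), ?_, h3⟩, fun hG => h4 (h2 hG)⟩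
    have : ∀ j z, x ^ j * z ∈ b → z ∈ b := by
      intro j
      induction j with
      | zero => simp
      | succ j ihj =>
        intro z hz
        refine ihj z (h.2.1 _ ?_)
        convert hz using 1; ring
    exact this _

end Elem

/-! ### Duality over an Artinian Gorenstein quotient -/

section Dual
variable {R : Type} [CommRing R] [IsLocalRing R]

open IsLocalRing

/-- The function `f : R → R`, restricted to `I`, induces a homomorphism of modules from
`I/(I ∩ b)` to `R/b`. Using functions into `R` avoids quotient modules; the values outside `I`
play no role. -/
structure IsHomOn (I b : Ideal R) (f : R → R) : Prop where
  add : ∀ x ∈ I, ∀ y ∈ I, f (x + y) - f x - f y ∈ b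
  smul : ∀ r, ∀ x ∈ I, f (r * x) - r * f x ∈ b
  ker : ∀ x ∈ I, x ∈ b → f x ∈ b

/-- Every homomorphism `I/(I ∩ b) → R/b` is multiplication by an element of `R`. -/
def Extends (I b : Ideal R) : Prop :=
  ∀ f : R → R, IsHomOn I b f → ∃ c, ∀ i ∈ I, f i - c * i ∈ b

/-- The ring `R/b` is injective as a module over itself, in the form of Baer's criterion. -/
def SelfInj (b : Ideal R) : Prop := ∀ I, b ≤ I → Extends I b

/-- The colon ideal `(b : I)`, with an elementwise membership condition. -/
def colonOf (b I : Ideal R) : Ideal R where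
  carrier := {z | ∀ i ∈ I, z * i ∈ b}
  add_mem' := fun ha hb i hi => by rw [add_mul]; exact b.add_mem (ha i hi) (hb i hi)
  zero_mem' := fun i _ => by simp
  smul_mem' := fun r z hz i hi => by
    rw [smul_eq_mul, mul_assoc]; exact b.mul_mem_left r (hz i hi)

omit [IsLocalRing R] in
lemma mem_colonOf {b I : Ideal R} {z : R} : z ∈ colonOf b I ↔ ∀ i ∈ I, z * i ∈ b := Iff.rfl

/-- The double annihilator property of `R/b`: `(b : (b : I)) = I` for all `I ⊇ b`. The other
inclusion is automatic. -/
def DoubleAnn (b : Ideal R) : Prop := ∀ I, b ≤ I → colonOf b (colonOf b I) ≤ I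

omit [IsLocalRing R] in
lemma le_colonOf (b I : Ideal R) : b ≤ colonOf b I := fun _ hz i _ => b.mul_mem_right i hz

omit [IsLocalRing R] in
lemma IsHomOn.congr_sub {I b : Ideal R} {f : R → R} (hf : IsHomOn I b f) {x y : R}
    (hx : x ∈ I) (hy : y ∈ I) : f (x - y) - f x + f y ∈ b := by
  have h1 := hf.add (x - y) (I.sub_mem hx hy) y hy
  rw [sub_add_cancel] at h1
  have := b.neg_mem h1
  convert this using 1
  ring

lemma mem_maximalIdeal_of_mul_mem {I : Ideal R} {a z : R} (hz : z ∉ I) (h : a * z ∈ I) :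
    a ∈ maximalIdeal R := by
  rw [mem_maximalIdeal]
  intro hu
  exact hz ((I.unit_mul_mem_iff_mem hu).1 h)

/-- If `z ∉ I` lies in the double annihilator, then `I + (z) → R/b` sending `I` to `0` and `z` to
the socle element `u` is well defined and, by injectivity, a multiplication by some element of
`(b : I)`; such an element kills `z` modulo `b`, a contradiction. -/
lemma doubleAnn_of_selfInj {b : Ideal R} (h : SelfInj b) {u : R} (hu : u ∉ b)
    (hmu : ∀ r ∈ maximalIdeal R, r * u ∈ b) : DoubleAnn b := by
  classical
  intro I hI z hz
  by_contra hzI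
  let f : R → R := fun y => if hy : ∃ a, y - a * z ∈ I then hy.choose * u else 0
  have hfs : ∀ y a, y - a * z ∈ I → f y - a * u ∈ b := by
    intro y a ha
    have hy : ∃ a, y - a * z ∈ I := ⟨a, ha⟩
    simp only [f, dif_pos hy]
    rw [← sub_mul]
    apply hmu
    refine mem_maximalIdeal_of_mul_mem hzI ?_
    have := I.sub_mem ha hy.choose_spec
    convert this using 1; ring
  suffices hf : IsHomOn (I ⊔ Ideal.span {z}) b f by
    obtain ⟨c, hc⟩ := h (I ⊔ Ideal.span {z}) (hI.trans le_sup_left) f hf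
    have h1 : c ∈ colonOf b I := by
      intro i hi
      have h2 := hc i (Ideal.mem_sup_left hi)
      have h3 := hfs i 0 (by simpa using hi)
      have := b.sub_mem h3 h2
      convert this using 1; ring
    have h2 := hz c h1
    have h3 := hc z (Ideal.mem_sup_right (Ideal.mem_span_singleton_self z))
    have h4 := hfs z 1 (by simp)
    apply hu
    have := b.sub_mem (b.add_mem h2 h3) h4
    convert this using 1; ring
  refine ⟨?_, ?_, ?_⟩
  · intro x hx y hy
    obtain ⟨a, ha⟩ := mem_sup_span_singleton.1 hx
    obtain ⟨a', ha'⟩ := mem_sup_span_singleton.1 hy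
    have h1 := hfs _ _ ha
    have h2 := hfs _ _ ha'
    have h3 := hfs (x + y) (a + a') (by
      have := I.add_mem ha ha'
      convert this using 1; ring)
    have := b.sub_mem (b.sub_mem h3 h1) h2
    convert this using 1; ring
  · intro r x hx
    obtain ⟨a, ha⟩ := mem_sup_span_singleton.1 hx
    have h1 := hfs _ _ ha
    have h3 := hfs (r * x) (r * a) (by
      have := I.mul_mem_left r ha
      convert this using 1; ring)
    have := b.sub_mem h3 (b.mul_mem_left r h1)
    convert this using 1; ring
  · intro x _ hx
    have := hfs x 0 (by simpa using hI hx)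
    simpa using this

/-- A Noetherian local self-injective ring with nonzero socle is Artinian Gorenstein: by the
double annihilator property, stabilization of the ideals `(b : 𝔪^n)` gives that of the powers of
`𝔪`. -/
lemma artinGor_of_selfInj [IsNoetherianRing R] {b : Ideal R} (h : SelfInj b) {u : R} (hu : u ∉ b)
    (hmu : ∀ r ∈ maximalIdeal R, r * u ∈ b) : ArtinGor b := by
  have hD := doubleAnn_of_selfInj h hu hmu
  refine ⟨?_, u, hu, hmu, ?_⟩
  · let A : ℕ →o Ideal R := ⟨fun n => colonOf b (maximalIdeal R ^ n), by
      intro i j hij z hz y hy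
      exact hz y (Ideal.pow_le_pow_right hij hy)⟩
    obtain ⟨N, hN⟩ := monotone_stabilizes_iff_noetherian.2 ‹_› A
    refine ⟨N, ?_⟩
    refine Submodule.le_of_le_smul_of_le_jacobson_bot (I := maximalIdeal R)
      (IsNoetherian.noetherian _) (maximalIdeal_le_jacobson _) ?_
    intro z hz
    rw [smul_eq_mul, ← pow_succ']
    refine hD _ le_sup_left fun w hw => ?_
    have hw1 : w ∈ A (N + 1) := fun y hy => hw y (Ideal.mem_sup_right hy)
    rw [← hN (N + 1) (by simp)] at hw1
    rw [mul_comm]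
    exact hw1 z hz
  · intro z hz
    refine mem_sup_span_singleton.1 (hD _ le_sup_left fun w hw => ?_)
    rw [mul_comm]
    refine hz w (mem_maximalIdeal_of_mul_mem hu ?_)
    exact hw u (Ideal.mem_sup_right (Ideal.mem_span_singleton_self u))

/-- Nonzero quotients `M / N` killed by a power of the maximal ideal have a socle element. -/
lemma exists_socle {N M : Ideal R} {k : ℕ} (hk : maximalIdeal R ^ k ≤ N) (h : ¬ M ≤ N) :
    ∃ v ∈ M, v ∉ N ∧ ∀ r ∈ maximalIdeal R, r * v ∈ N := by
  have hk' : maximalIdeal R ^ k * M ≤ N := Ideal.mul_le_left.trans hk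
  clear hk
  induction k generalizing M with
  | zero =>
    rw [pow_zero, one_mul] at hk'
    exact absurd hk' h
  | succ k ih =>
    by_cases h' : maximalIdeal R * M ≤ N
    · obtain ⟨v, hv, hvN⟩ := SetLike.not_le_iff_exists.1 h
      exact ⟨v, hv, hvN, fun r hr => h' (Ideal.mul_mem_mul hr hv)⟩
    · obtain ⟨v, hv, hmv⟩ := ih h' (by rwa [← mul_assoc, ← pow_succ])
      exact ⟨v, (Ideal.mul_le_right : maximalIdeal R * M ≤ M) hv, hmv⟩

/-- Adjoining to `N` an element killed by `𝔪` modulo `N` lowers the length of `R/N` by at most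
one. -/
lemma length_step {N N' : Ideal R} {v : R} (h : N ≤ N') (hv : N' ≤ N ⊔ Ideal.span {v})
    (hmv : ∀ r ∈ maximalIdeal R, r * v ∈ N) :
    Module.length R (R ⧸ N) ≤ Module.length R (R ⧸ N') + 1 := by
  have hex := Module.length_eq_add_of_exact (LinearMap.ker (Submodule.factor h)).subtype
    (Submodule.factor h) (Submodule.subtype_injective _) (Submodule.factor_surjective h)
    (LinearMap.exact_subtype_ker_map _)
  rw [hex, add_comm]
  gcongr
  let g : (R ⧸ maximalIdeal R) →ₗ[R] (R ⧸ N) := (maximalIdeal R).liftQ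
    (LinearMap.toSpanSingleton R (R ⧸ N) (Ideal.Quotient.mk N v)) (by
      intro r hr
      rw [LinearMap.mem_ker, LinearMap.toSpanSingleton_apply]
      exact Ideal.Quotient.eq_zero_iff_mem.2 (hmv r hr))
  have hle : LinearMap.ker (Submodule.factor h) ≤ LinearMap.range g := by
    intro y hy
    obtain ⟨z, rfl⟩ := Submodule.mkQ_surjective _ y
    have hz : z ∈ N' := by
      rw [LinearMap.mem_ker] at hy
      exact (Submodule.Quotient.mk_eq_zero _).1 hy
    obtain ⟨r, hr⟩ := mem_sup_span_singleton.1 (hv hz)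
    refine ⟨Submodule.Quotient.mk r, ?_⟩
    exact (Ideal.Quotient.eq.2 hr).symm
  calc _ ≤ _ := Module.length_le_of_injective _ (Submodule.inclusion_injective hle)
    _ ≤ _ := Module.length_le_of_surjective g.rangeRestrict g.surjective_rangeRestrict
    _ = 1 := by
      have : IsSimpleModule R (R ⧸ maximalIdeal R) :=
        isSimpleModule_iff_isCoatom.2 (maximalIdeal.isMaximal R).out
      exact Module.length_eq_one R _
    _ ≤ 1 := le_rfl

omit [IsLocalRing R] in
lemma length_lt {N N' : Ideal R} (h : N < N') :
    Module.length R (R ⧸ N') + 1 ≤ Module.length R (R ⧸ N) := by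
  have hex := Module.length_eq_add_of_exact (LinearMap.ker (Submodule.factor h.le)).subtype
    (Submodule.factor h.le) (Submodule.subtype_injective _) (Submodule.factor_surjective h.le)
    (LinearMap.exact_subtype_ker_map _)
  rw [hex, add_comm]
  gcongr
  rw [Order.one_le_iff_ne_zero, ne_eq, Module.length_eq_zero_iff]
  intro hs
  obtain ⟨z, hz, hz'⟩ := SetLike.exists_of_lt h
  apply hz'
  have := congrArg Subtype.val (Subsingleton.elim (⟨Submodule.mkQ N z, by
    rw [LinearMap.mem_ker]
    exact (Submodule.Quotient.mk_eq_zero _).2 hz⟩ : LinearMap.ker (Submodule.factor h.le)) 0)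
  exact (Submodule.Quotient.mk_eq_zero _).1 this

lemma length_ne_top [IsNoetherianRing R] {N : Ideal R} {k : ℕ} (hk : maximalIdeal R ^ k ≤ N) :
    Module.length R (R ⧸ N) ≠ ⊤ := by
  induction N using IsNoetherian.induction with
  | hgt N ih =>
    by_cases hN : ⊤ ≤ N
    · obtain rfl := top_le_iff.1 hN
      have : Subsingleton (R ⧸ (⊤ : Ideal R)) := Ideal.Quotient.subsingleton_iff.2 rfl
      rw [Module.length_eq_zero]
      simp
    · obtain ⟨v, -, hv, hmv⟩ := exists_socle hk hN
      have hlt : N < N ⊔ Ideal.span {v} := left_lt_sup.2 (by simpa using hv)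
      exact ne_top_of_le_ne_top (by simpa using ih _ hlt (hk.trans hlt.le))
        (length_step hlt.le le_rfl hmv)

/-- Half of the duality `ℓ(R/(b : N)) + ℓ(R/N) = ℓ(R/b)`: the left hand side can only decrease
when `N` grows, by adjoining socle elements one at a time. -/
lemma length_colon_antitone [IsNoetherianRing R] {b : Ideal R} (hb : ArtinGor b) {N M : Ideal R}
    (hbN : b ≤ N) (hNM : N ≤ M) :
    Module.length R (R ⧸ colonOf b M) + Module.length R (R ⧸ M) ≤
      Module.length R (R ⧸ colonOf b N) + Module.length R (R ⧸ N) := by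
  obtain ⟨⟨k, hk⟩, u, hu⟩ := hb
  induction N using IsNoetherian.induction with
  | hgt N ih =>
    by_cases h : M ≤ N
    · rw [le_antisymm hNM h]
    obtain ⟨v, hvM, hv, hmv⟩ := exists_socle (hk.trans hbN) h
    have hlt : N < N ⊔ Ideal.span {v} := left_lt_sup.2 (by simpa using hv)
    refine (ih _ hlt (hbN.trans hlt.le)
      (sup_le hNM ((Ideal.span_singleton_le_iff_mem _).2 hvM))).trans ?_
    -- `w ↦ w v` embeds `(b : N) / (b : N + v)` into the socle, so its length is at most one
    have h1 : Module.length R (R ⧸ colonOf b (N ⊔ Ideal.span {v})) ≤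
        Module.length R (R ⧸ colonOf b N) + 1 := by
      have hle : colonOf b (N ⊔ Ideal.span {v}) ≤ colonOf b N :=
        fun w hw i hi => hw i (Ideal.mem_sup_left hi)
      have hmem : ∀ w ∈ colonOf b N, w * v ∈ b → w ∈ colonOf b (N ⊔ Ideal.span {v}) := by
        intro w hw hwv i hi
        obtain ⟨r, hr⟩ := mem_sup_span_singleton.1 hi
        have := b.add_mem (hw _ hr) (b.mul_mem_left r hwv)
        convert this using 1; ring
      have hsoc : ∀ w ∈ colonOf b N, ∀ r ∈ maximalIdeal R, r * (w * v) ∈ b := by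
        intro w hw r hr
        have := hw _ (hmv r hr)
        convert this using 1; ring
      by_cases h0 : ∀ w ∈ colonOf b N, w * v ∈ b
      · rw [le_antisymm hle fun w hw => hmem w hw (h0 w hw)]
        exact le_self_add
      push Not at h0
      obtain ⟨w, hw, hwv⟩ := h0
      refine length_step (v := w) hle ?_ fun r hr => hmem _ (Ideal.mul_mem_left _ r hw) (by
        rw [mul_assoc]; exact hsoc w hw r hr)
      intro z hz
      obtain ⟨a, ha⟩ := hu.3 _ (hsoc w hw)
      obtain ⟨a', ha'⟩ := hu.3 _ (hsoc z hz)
      have haU : IsUnit a := by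
        by_contra hn
        exact hwv (by
          have := b.add_mem ha (hu.2 a ((mem_maximalIdeal a).2 hn))
          simpa using this)
      obtain ⟨a, rfl⟩ := haU
      refine mem_sup_span_singleton.2 ⟨a' * ↑a⁻¹, hmem _
        (Ideal.sub_mem _ hz (Ideal.mul_mem_left _ _ hw)) ?_⟩
      have := b.sub_mem ha' (b.mul_mem_left (a' * ↑a⁻¹) ha)
      convert this using 1
      linear_combination -(a' * u) * a.inv_mul
    have h2 := length_lt hlt
    calc _ ≤ Module.length R (R ⧸ colonOf b N) + 1 + _ := by gcongr
      _ = Module.length R (R ⧸ colonOf b N) + (Module.length R (R ⧸ N ⊔ Ideal.span {v}) + 1) := by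
        ring
      _ ≤ _ := by gcongr

lemma length_colon [IsNoetherianRing R] {b : Ideal R} (hb : ArtinGor b) {N : Ideal R}
    (hbN : b ≤ N) :
    Module.length R (R ⧸ colonOf b N) + Module.length R (R ⧸ N) = Module.length R (R ⧸ b) := by
  have e1 : colonOf b ⊤ = b := by
    refine le_antisymm (fun z hz => by simpa using hz 1 trivial) (le_colonOf _ _)
  have e2 : colonOf b b = ⊤ := top_le_iff.1 fun z _ i hi => b.mul_mem_left z hi
  have e3 : Module.length R (R ⧸ (⊤ : Ideal R)) = 0 := by
    have : Subsingleton (R ⧸ (⊤ : Ideal R)) := Ideal.Quotient.subsingleton_iff.2 rfl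
    exact Module.length_eq_zero
  refine le_antisymm ?_ ?_
  · refine (length_colon_antitone hb le_rfl hbN).trans ?_
    rw [e2, e3, zero_add]
  · refine le_trans ?_ (length_colon_antitone hb hbN le_top)
    rw [e1, e3, add_zero]

/-- The double annihilator property of an Artinian Gorenstein ring, in contrapositive form: if
`v ∉ N` then the colons of `N` and `N + (v)` have different colengths by `length_colon`. -/
lemma exists_colon_notMem [IsNoetherianRing R] {b : Ideal R} (hb : ArtinGor b) {N : Ideal R}
    (hbN : b ≤ N) {v : R} (hv : v ∉ N) :
    ∃ w ∈ colonOf b N, w * v ∉ b := by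
  by_contra! hcon
  have hlt : N < N ⊔ Ideal.span {v} := left_lt_sup.2 (by simpa using hv)
  have heq : colonOf b (N ⊔ Ideal.span {v}) = colonOf b N := by
    refine le_antisymm (fun w hw i hi => hw i (Ideal.mem_sup_left hi)) ?_
    intro w hw i hi
    obtain ⟨r, hr⟩ := mem_sup_span_singleton.1 hi
    have := b.add_mem (hw _ hr) (b.mul_mem_left r (hcon w hw))
    convert this using 1; ring
  have h1 := length_colon hb hbN
  have h2 := length_colon hb (hbN.trans hlt.le)
  obtain ⟨k, hk⟩ := hb.1
  have h3 := length_lt hlt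
  have t1 := length_ne_top (hk.trans (hbN.trans hlt.le))
  have t2 := length_ne_top (hk.trans (le_colonOf b N))
  rw [heq, ← h1] at h2
  have h4 := WithTop.add_left_cancel t2 h2
  rw [← h4] at h3
  exact (ENat.add_one_le_iff t1).1 h3 |>.false

/-- Artinian Gorenstein rings are self-injective. A homomorphism which is multiplication by `c` on
`N` is extended to `N + (v)`, with `v` in the socle modulo `N`, by correcting `c` by a multiple of
an element `w ∈ (b : N)` with `w * v` a nonzero element of the socle. -/
lemma ArtinGor.selfInj [IsNoetherianRing R] {b : Ideal R} (hb : ArtinGor b) : SelfInj b := by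
  intro M hbM f hf
  suffices ∀ N, b ≤ N → N ≤ M → (∃ c, ∀ i ∈ N, f i - c * i ∈ b) →
      ∃ c, ∀ i ∈ M, f i - c * i ∈ b from
    this b le_rfl hbM ⟨0, fun i hi => by simpa using hf.ker i (hbM hi) hi⟩
  intro N hbN hNM hc
  induction N using IsNoetherian.induction with
  | hgt N ih =>
    by_cases h : M ≤ N
    · rwa [le_antisymm h hNM]
    obtain ⟨k, hk⟩ := hb.1
    obtain ⟨u, hu⟩ := hb.2
    obtain ⟨v, hvM, hv, hmv⟩ := exists_socle (hk.trans hbN) h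
    have hlt : N < N ⊔ Ideal.span {v} := left_lt_sup.2 (by simpa using hv)
    refine ih _ hlt (hbN.trans hlt.le) (sup_le hNM ((Ideal.span_singleton_le_iff_mem _).2 hvM)) ?_
    obtain ⟨c, hc⟩ := hc
    obtain ⟨w, hw, hwv⟩ := exists_colon_notMem hb hbN hv
    obtain ⟨a, ha⟩ := hu.3 (w * v) (fun r hr => by
      have := hw _ (hmv r hr)
      convert this using 1; ring)
    obtain ⟨a', ha'⟩ := hu.3 (f v - c * v) (fun r hr => by
      have := b.sub_mem (hc _ (hmv r hr)) (hf.smul r v hvM)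
      convert this using 1; ring)
    have haU : IsUnit a := by
      by_contra hn
      exact hwv (by
        have := b.add_mem ha (hu.2 a ((mem_maximalIdeal a).2 hn))
        simpa using this)
    obtain ⟨a, rfl⟩ := haU
    have hv' : f v - (c + a' * ↑a⁻¹ * w) * v ∈ b := by
      have := b.sub_mem ha' (b.mul_mem_left (a' * ↑a⁻¹) ha)
      convert this using 1
      linear_combination -(a' * u) * a.inv_mul
    refine ⟨c + a' * ↑a⁻¹ * w, fun i hi => ?_⟩
    obtain ⟨r, hr⟩ := mem_sup_span_singleton.1 hi
    have hrv : r * v ∈ M := M.mul_mem_left r hvM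
    have k1 := hc _ hr
    have k2 := b.mul_mem_left (a' * ↑a⁻¹) (hw _ hr)
    have k3 := hf.congr_sub
      (sup_le hNM ((Ideal.span_singleton_le_iff_mem _).2 hvM) hi) hrv
    have k4 := hf.smul r v hvM
    have k5 := b.mul_mem_left r hv'
    have := b.add_mem (b.add_mem (b.sub_mem (b.sub_mem k1 k2) k3) k4) k5
    convert this using 1; ring

lemma ArtinGor.doubleAnn [IsNoetherianRing R] {b : Ideal R} (hb : ArtinGor b) : DoubleAnn b := by
  obtain ⟨u, hu⟩ := hb.2
  exact doubleAnn_of_selfInj hb.selfInj hu.1 hu.2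

end Dual

/-! ### Cyclicity of the colon modulo a regular sequence -/

section Cyclic
variable {R : Type} [CommRing R] [IsLocalRing R]

open IsLocalRing

omit [IsLocalRing R] in
lemma exists_linearMap_of_isHomOn {J c : Ideal R} {f : R → R} (hf : IsHomOn J c f) :
    ∃ φ : J →ₗ[R] R ⧸ c, ∀ j : J, φ j = Ideal.Quotient.mk c (f j) := by
  refine ⟨⟨⟨fun j => Ideal.Quotient.mk c (f j), fun x y => ?_⟩, fun r x => ?_⟩, fun _ => rfl⟩
  · rw [← map_add]
    refine Ideal.Quotient.eq.2 ?_
    rw [← sub_sub]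
    exact hf.add x x.2 y y.2
  · exact Ideal.Quotient.eq.2 (hf.smul r x x.2)

omit [IsLocalRing R] in
lemma exists_isHomOn_of_linearMap {J c : Ideal R} (φ : J →ₗ[R] R ⧸ c)
    (hφ : ∀ j : J, (j : R) ∈ c → φ j = 0) :
    ∃ f : R → R, IsHomOn J c f ∧ ∀ j : J, φ j = Ideal.Quotient.mk c (f j) := by
  classical
  choose s hs using fun y : R ⧸ c => Ideal.Quotient.mk_surjective y
  have key : ∀ j (hj : j ∈ J), Ideal.Quotient.mk c (if h : j ∈ J then s (φ ⟨j, h⟩) else 0) =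
      φ ⟨j, hj⟩ := fun j hj => by rw [dif_pos hj, hs]
  refine ⟨fun z => if h : z ∈ J then s (φ ⟨z, h⟩) else 0, ⟨?_, ?_, ?_⟩, fun j => (key j j.2).symm⟩
  · intro x hx y hy
    rw [← Ideal.Quotient.eq_zero_iff_mem, map_sub, map_sub, key _ (J.add_mem hx hy), key _ hx,
      key _ hy, sub_sub, ← map_add, sub_eq_zero]
    rfl
  · intro r x hx
    rw [← Ideal.Quotient.eq_zero_iff_mem, map_sub, map_mul, key _ (J.mul_mem_left r hx), key _ hx,
      sub_eq_zero]
    exact φ.map_smul r ⟨x, hx⟩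
  · intro x hx hxc
    rw [← Ideal.Quotient.eq_zero_iff_mem, key _ hx]
    exact hφ _ hxc

/-- Let `x` be regular on `R/c` and `R/J`. If all homomorphisms from `(J + x)/(c + x)` to
`R/(c + x)` are multiplications by elements of `R`, then so are all homomorphisms `J/c → R/c`,
since each of them is a multiplication plus `x` times another one, and Nakayama's lemma applies.
-/
lemma extends_of_regular [IsNoetherianRing R] {c J : Ideal R} {x : R} (hcJ : c ≤ J)
    (hx : x ∈ maximalIdeal R) (hxc : ∀ z, x * z ∈ c → z ∈ c) (hxJ : ∀ z, x * z ∈ J → z ∈ J)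
    (h : Extends (J ⊔ Ideal.span {x}) (c ⊔ Ideal.span {x})) : Extends J c := by
  classical
  -- every homomorphism is a multiplication modulo `x` times another homomorphism
  have step : ∀ f, IsHomOn J c f → ∃ b g, IsHomOn J c g ∧ ∀ j ∈ J, f j - b * j - x * g j ∈ c := by
    intro f hf
    let f' : R → R := fun z => if hz : ∃ r, z - r * x ∈ J then f (z - hz.choose * x) else 0
    have hf' : ∀ z r, z - r * x ∈ J → f' z - f (z - r * x) ∈ c ⊔ Ideal.span {x} := by
      intro z r hr
      have hz : ∃ r, z - r * x ∈ J := ⟨r, hr⟩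
      have e : f' z = f (z - hz.choose * x) := dif_pos hz
      rw [e]
      set s := hz.choose with hs
      have hsJ : z - s * x ∈ J := hz.choose_spec
      have hd : r - s ∈ J := hxJ _ (by
        have := J.sub_mem hsJ hr
        convert this using 1; ring)
      have h1 := hf.congr_sub hsJ hr
      have h2 := hf.smul x _ hd
      have e1 : (z - s * x) - (z - r * x) = x * (r - s) := by ring
      rw [e1] at h1
      refine mem_sup_span_singleton.2 ⟨f (r - s), ?_⟩
      have := c.sub_mem h2 h1
      convert this using 1; ring
    have hhom : IsHomOn (J ⊔ Ideal.span {x}) (c ⊔ Ideal.span {x}) f' := by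
      refine ⟨?_, ?_, ?_⟩
      · intro y hy z hz
        obtain ⟨a, ha⟩ := mem_sup_span_singleton.1 hy
        obtain ⟨a', ha'⟩ := mem_sup_span_singleton.1 hz
        have e1 : (y - a * x) + (z - a' * x) = y + z - (a + a') * x := by ring
        have h3 := hf' (y + z) (a + a') (by rw [← e1]; exact J.add_mem ha ha')
        have h4 := Ideal.mem_sup_left (T := Ideal.span {x}) (hf.add _ ha _ ha')
        rw [e1] at h4
        have := Ideal.sub_mem _ (Ideal.sub_mem _ (Ideal.add_mem _ h3 h4) (hf' _ _ ha)) (hf' _ _ ha')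
        convert this using 1; ring
      · intro r y hy
        obtain ⟨a, ha⟩ := mem_sup_span_singleton.1 hy
        have e1 : r * (y - a * x) = r * y - (r * a) * x := by ring
        have h3 := hf' (r * y) (r * a) (by rw [← e1]; exact J.mul_mem_left r ha)
        have h4 := Ideal.mem_sup_left (T := Ideal.span {x}) (hf.smul r _ ha)
        rw [e1] at h4
        have := Ideal.sub_mem _ (Ideal.add_mem _ h3 h4) (Ideal.mul_mem_left _ r (hf' _ _ ha))
        convert this using 1; ring
      · intro y _ hy
        obtain ⟨a, ha⟩ := mem_sup_span_singleton.1 hy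
        have := Ideal.add_mem _ (hf' y a (hcJ ha)) (Ideal.mem_sup_left (hf.ker _ (hcJ ha) ha))
        simpa using this
    obtain ⟨b, hb⟩ := h f' hhom
    have hb' : ∀ j ∈ J, ∃ r, f j - b * j - r * x ∈ c := by
      intro j hj
      refine mem_sup_span_singleton.1 ?_
      have h1 := hf' j 0 (by simpa using hj)
      rw [zero_mul, sub_zero] at h1
      have := Ideal.sub_mem _ (hb j (Ideal.mem_sup_left hj)) h1
      convert this using 1; ring
    choose! g hg using hb'
    refine ⟨b, g, ⟨?_, ?_, ?_⟩, fun j hj => by rw [mul_comm x]; exact hg j hj⟩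
    · intro y hy z hz
      refine hxc _ ?_
      have := c.sub_mem (c.add_mem (c.add_mem (hf.add y hy z hz) (hg y hy)) (hg z hz))
        (hg _ (J.add_mem hy hz))
      convert this using 1; ring
    · intro r y hy
      refine hxc _ ?_
      have := c.sub_mem (c.add_mem (hf.smul r y hy) (c.mul_mem_left r (hg y hy)))
        (hg _ (J.mul_mem_left r hy))
      convert this using 1; ring
    · intro y hy hyc
      refine hxc _ ?_
      have := c.sub_mem (c.sub_mem (hf.ker y hy hyc) (c.mul_mem_left b hyc)) (hg y hy)
      convert this using 1; ring
  -- Nakayama in `Hom (J, R / c)`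
  let H : Submodule R (J →ₗ[R] R ⧸ c) :=
    { carrier := {φ | ∀ j : J, (j : R) ∈ c → φ j = 0}
      add_mem' := fun ha hb j hj => by simp [ha j hj, hb j hj]
      zero_mem' := fun j hj => by simp
      smul_mem' := fun r φ hφ j hj => by simp [hφ j hj] }
  let μ : J →ₗ[R] R ⧸ c := (Submodule.mkQ c).comp J.subtype
  have hH : H ≤ Submodule.span R {μ} ⊔ maximalIdeal R • H := by
    intro φ hφ
    obtain ⟨f, hf, hφf⟩ := exists_isHomOn_of_linearMap φ hφ
    obtain ⟨b, g, hg, hbg⟩ := step f hf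
    obtain ⟨ψ, hψ⟩ := exists_linearMap_of_isHomOn hg
    have e : φ = b • μ + x • ψ := by
      ext j
      rw [hφf, LinearMap.add_apply, LinearMap.smul_apply, LinearMap.smul_apply, hψ]
      refine Ideal.Quotient.eq.2 (?_ : f j - (b * j + x * g j) ∈ c)
      rw [← sub_sub]
      exact hbg j j.2
    rw [e]
    refine Submodule.add_mem_sup (Submodule.smul_mem _ _ (Submodule.mem_span_singleton_self μ))
      (Submodule.smul_mem_smul hx fun j hj => ?_)
    rw [hψ]
    exact Ideal.Quotient.eq_zero_iff_mem.2 (hg.ker _ j.2 hj)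
  have hH' := Submodule.le_of_le_smul_of_le_jacobson_bot (IsNoetherian.noetherian _)
    (maximalIdeal_le_jacobson _) hH
  intro f hf
  obtain ⟨φ, hφ⟩ := exists_linearMap_of_isHomOn hf
  have hφH : φ ∈ H := fun j hj => by
    rw [hφ]; exact Ideal.Quotient.eq_zero_iff_mem.2 (hf.ker _ j.2 hj)
  obtain ⟨b, hb⟩ := Submodule.mem_span_singleton.1 (hH' hφH)
  refine ⟨b, fun j hj => ?_⟩
  have := hφ ⟨j, hj⟩
  rw [← hb] at this
  exact Ideal.Quotient.eq.1 this.symm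

lemma extends_of_regOn [IsNoetherianRing R] {c J : Ideal R} {xs : List R} (hcJ : c ≤ J)
    (hc : RegOn c xs) (hJ : RegOn J xs)
    (h : Extends (adjoinList J xs) (adjoinList c xs)) : Extends J c := by
  induction xs generalizing c J with
  | nil => exact h
  | cons x xs ih =>
    exact extends_of_regular hcJ hc.1 hc.2.1 hJ.2.1 (ih (sup_le_sup_right hcJ _) hc.2.2 hJ.2.2 h)

/-- The Artinian case of `exists_colon_eq`. With `w` a socle generator of `R/J`, duality shows
that the elements of `K = (c : J)` killed by `w` modulo `c` lie in `𝔪 K + c`, while multiplication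
by `w` sends `K` to the one-dimensional socle of `R/c`. Hence `K/(𝔪 K + c)` has dimension at most
one. -/
lemma exists_colon_eq_base [IsNoetherianRing R] {c J : Ideal R} (hcJ : c ≤ J)
    (hc : ArtinGor c) (hJ : ArtinGor J) : ∃ g, colonOf c J = c ⊔ Ideal.span {g} := by
  have hD := hc.doubleAnn
  obtain ⟨-, u, hu⟩ := hc
  obtain ⟨-, w, hw⟩ := hJ
  set K := colonOf c J with hK
  have hcK : c ≤ K := le_colonOf _ _
  have hwm : ∀ z ∈ K, ∀ r ∈ maximalIdeal R, r * (w * z) ∈ c := by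
    intro z hz r hr
    have := hz _ (hw.2 r hr)
    convert this using 1; ring
  -- `z ∈ K` is in `𝔪 K + c` as soon as `w z ∈ c`
  have key : ∀ z ∈ K, z * w ∈ c → z ∈ c ⊔ maximalIdeal R * K := by
    intro z _ hzw
    refine hD _ le_sup_left fun y hy => ?_
    have h1 : ∀ r ∈ maximalIdeal R, r * y ∈ J := by
      intro r hr
      refine hD J hcJ fun k hk => ?_
      have := hy (r * k) (Ideal.mem_sup_right (Ideal.mul_mem_mul hr hk))
      convert this using 1; ring
    obtain ⟨a, ha⟩ := hw.3 y h1
    have h2 : z * (y - a * w) ∈ c := by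
      have hzK : z ∈ K := ‹_›
      exact hzK _ ha
    have := c.add_mem h2 (c.mul_mem_left a hzw)
    convert this using 1; ring
  have gen : ∀ g ∈ K, (K ≤ (c ⊔ Ideal.span {g}) ⊔ maximalIdeal R • K) →
      K = c ⊔ Ideal.span {g} := by
    intro g hg h
    exact le_antisymm (Submodule.le_of_le_smul_of_le_jacobson_bot (IsNoetherian.noetherian _)
      (maximalIdeal_le_jacobson _) h) (sup_le hcK ((Ideal.span_singleton_le_iff_mem _).2 hg))
  by_cases h0 : ∀ z ∈ K, z * w ∈ c
  · refine ⟨0, gen 0 K.zero_mem fun z hz => ?_⟩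
    have hle : c ⊔ maximalIdeal R * K ≤ (c ⊔ Ideal.span {0}) ⊔ maximalIdeal R • K :=
      sup_le_sup_right le_sup_left _
    exact hle (key z hz (h0 z hz))
  push Not at h0
  obtain ⟨g, hg, hgw⟩ := h0
  refine ⟨g, gen g hg fun z hz => ?_⟩
  obtain ⟨a, ha⟩ := hu.3 (w * g) (hwm g hg)
  obtain ⟨a', ha'⟩ := hu.3 (w * z) (hwm z hz)
  have haU : IsUnit a := by
    by_contra hn
    exact hgw (by
      have := c.add_mem ha (hu.2 a ((mem_maximalIdeal a).2 hn))
      convert this using 1; ring)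
  obtain ⟨a, rfl⟩ := haU
  have h1 : (z - a' * ↑a⁻¹ * g) * w ∈ c := by
    have := c.sub_mem ha' (c.mul_mem_left (a' * ↑a⁻¹) ha)
    convert this using 1
    linear_combination -(a' * u) * a.inv_mul
  have h2 := key _ (K.sub_mem hz (K.mul_mem_left _ hg)) h1
  have h3 := Ideal.add_mem _ (sup_le_sup_right (le_sup_left : c ≤ c ⊔ Ideal.span {g}) _ h2)
    (Ideal.mem_sup_left (Ideal.mem_sup_right (Ideal.mul_mem_left _ (a' * ↑a⁻¹)
      (Ideal.mem_span_singleton_self g))))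
  simpa using h3

/-- If `xs` is a regular sequence modulo both `c ⊆ J`, with Artinian Gorenstein quotients, then
`(c : J)/c` is cyclic. A generator `g'` modulo `x` is lifted as follows: `g' * j = h j * x` modulo
`c` for `j ∈ J`, where `h` induces a homomorphism `J/c → R/c`, hence is multiplication by some
`b`, and `g' - x * b` lies in `(c : J)`. It generates by Nakayama's lemma. -/
lemma exists_colon_eq [IsNoetherianRing R] {c J : Ideal R} {xs : List R} (hcJ : c ≤ J)
    (hc : RegOn c xs) (hJ : RegOn J xs) (hcG : ArtinGor (adjoinList c xs))
    (hJG : ArtinGor (adjoinList J xs)) : ∃ g, colonOf c J = c ⊔ Ideal.span {g} := by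
  induction xs generalizing c J with
  | nil => exact exists_colon_eq_base hcJ hcG hJG
  | cons x xs ih =>
    have hE : Extends J c := extends_of_regOn hcJ hc hJ
      (hcG.selfInj _ (adjoinList_mono hcJ _))
    obtain ⟨hx, hxc, hc'⟩ := hc
    obtain ⟨-, hxJ, hJ'⟩ := hJ
    obtain ⟨g', hg'⟩ := ih (sup_le_sup_right hcJ _) hc' hJ' hcG hJG
    have hg'm : g' ∈ colonOf (c ⊔ Ideal.span {x}) (J ⊔ Ideal.span {x}) := by
      rw [hg']; exact Ideal.mem_sup_right (Ideal.mem_span_singleton_self _)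
    have h1 : ∀ j ∈ J, ∃ r, g' * j - r * x ∈ c := fun j hj =>
      mem_sup_span_singleton.1 (hg'm j (Ideal.mem_sup_left hj))
    choose! h hh using h1
    obtain ⟨b, hb⟩ := hE h ⟨by
      intro y hy z hz
      refine hxc _ ?_
      have := c.sub_mem (c.add_mem (hh y hy) (hh z hz)) (hh _ (J.add_mem hy hz))
      convert this using 1; ring, by
      intro r y hy
      refine hxc _ ?_
      have := c.sub_mem (c.mul_mem_left r (hh y hy)) (hh _ (J.mul_mem_left r hy))
      convert this using 1; ring, by
      intro y hy hyc
      refine hxc _ ?_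
      have := c.sub_mem (c.mul_mem_left g' hyc) (hh y hy)
      convert this using 1; ring⟩
    have hgK : g' - x * b ∈ colonOf c J := by
      intro j hj
      have := c.add_mem (hh j hj) (c.mul_mem_left x (hb j hj))
      convert this using 1; ring
    refine ⟨g' - x * b, le_antisymm ?_
      (sup_le (le_colonOf _ _) ((Ideal.span_singleton_le_iff_mem _).2 hgK))⟩
    refine Submodule.le_of_le_smul_of_le_jacobson_bot (IsNoetherian.noetherian _)
      (maximalIdeal_le_jacobson _) fun z hz => ?_
    have hz' : z ∈ colonOf (c ⊔ Ideal.span {x}) (J ⊔ Ideal.span {x}) := by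
      intro i hi
      obtain ⟨r, hr⟩ := mem_sup_span_singleton.1 hi
      refine mem_sup_span_singleton.2 ⟨z * r, ?_⟩
      have := hz _ hr
      convert this using 1; ring
    rw [hg'] at hz'
    obtain ⟨a, ha⟩ := mem_sup_span_singleton.1 hz'
    obtain ⟨s, hs⟩ := mem_sup_span_singleton.1 ha
    have hsK : s + a * b ∈ colonOf c J := by
      intro j hj
      refine hxc _ ?_
      have := c.sub_mem (c.sub_mem (hz j hj) (c.mul_mem_left a (hgK j hj))) (c.mul_mem_right j hs)
      convert this using 1; ring
    have h2 := Submodule.smul_mem_smul hx hsK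
    have := Submodule.add_mem_sup (Ideal.add_mem _ (Ideal.mem_sup_left hs)
      (Ideal.mem_sup_right (Ideal.mul_mem_left _ a (Ideal.mem_span_singleton_self (g' - x * b))))) h2
    convert this using 1
    rw [smul_eq_mul]; ring

end Cyclic

/-! ### Transfer along a surjection, and regular systems of parameters -/

section Transfer
variable {R S : Type} [CommRing R] [CommRing S]

open IsLocalRing

lemma comap_sup_span {f : R →+* S} (hf : Function.Surjective f) (c : Ideal S) (x : R) :
    Ideal.comap f c ⊔ Ideal.span {x} = Ideal.comap f (c ⊔ Ideal.span {f x}) := by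
  ext z
  rw [mem_sup_span_singleton, Ideal.mem_comap, mem_sup_span_singleton]
  constructor
  · rintro ⟨r, hr⟩
    exact ⟨f r, by simpa using hr⟩
  · rintro ⟨r, hr⟩
    obtain ⟨r, rfl⟩ := hf r
    exact ⟨r, by simpa using hr⟩

lemma adjoinList_comap {f : R →+* S} (hf : Function.Surjective f) (c : Ideal S) (xs : List R) :
    adjoinList (Ideal.comap f c) xs = Ideal.comap f (adjoinList c (xs.map f)) := by
  induction xs generalizing c with
  | nil => rfl
  | cons x xs ih => rw [adjoinList, comap_sup_span hf, ih]; rfl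

variable [IsLocalRing R] [IsLocalRing S]

lemma comap_maximalIdeal {f : R →+* S} (hf : Function.Surjective f) :
    Ideal.comap f (maximalIdeal S) = maximalIdeal R := by
  have := Ideal.comap_isMaximal_of_surjective f hf (K := maximalIdeal S)
  exact eq_maximalIdeal this

lemma regOn_comap {f : R →+* S} (hf : Function.Surjective f) {c : Ideal S} {xs : List R}
    (h : RegOn c (xs.map f)) : RegOn (Ideal.comap f c) xs := by
  induction xs generalizing c with
  | nil => trivial
  | cons x xs ih =>
    obtain ⟨h1, h2, h3⟩ := h
    refine ⟨?_, fun z hz => ?_, ?_⟩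
    · rw [← comap_maximalIdeal hf]; exact h1
    · rw [Ideal.mem_comap, map_mul] at hz
      exact h2 _ hz
    · rw [comap_sup_span hf]; exact ih h3

lemma artinGor_comap {f : R →+* S} (hf : Function.Surjective f) {c : Ideal S} (h : ArtinGor c) :
    ArtinGor (Ideal.comap f c) := by
  have hm : ∀ r, r ∈ maximalIdeal R ↔ f r ∈ maximalIdeal S := fun r => by
    rw [← comap_maximalIdeal hf]; rfl
  obtain ⟨⟨N, hN⟩, u, hu⟩ := h
  obtain ⟨u, rfl⟩ := hf u
  refine ⟨⟨N, ?_⟩, u, hu.1, fun r hr => ?_, fun z hz => ?_⟩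
  · rw [← comap_maximalIdeal hf]
    exact (Ideal.le_comap_pow f N).trans (Ideal.comap_mono hN)
  · rw [Ideal.mem_comap, map_mul]
    exact hu.2 _ ((hm r).1 hr)
  · obtain ⟨a, ha⟩ := hu.3 (f z) (fun r hr => by
      obtain ⟨r, rfl⟩ := hf r
      have := hz r ((hm r).2 hr)
      rwa [Ideal.mem_comap, map_mul] at this)
    obtain ⟨a, rfl⟩ := hf a
    exact ⟨a, by simpa using ha⟩

end Transfer

section Regular
open IsLocalRing

lemma ringKrullDim_le_length {R : Type} [CommRing R] [IsLocalRing R] [IsNoetherianRing R]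
    {ts : List R} (h : maximalIdeal R = Ideal.ofList ts) : ringKrullDim R ≤ ts.length := by
  classical
  refine (ringKrullDim_le_spanFinrank_maximalIdeal R).trans ?_
  have e : maximalIdeal R = Submodule.span R (ts.toFinset : Set R) := by
    rw [h, Ideal.ofList]; congr 1; ext; simp
  rw [e]
  have := Submodule.spanFinrank_span_le_ncard_of_finite (R := R) ts.toFinset.finite_toSet
  rw [Set.ncard_coe_finset] at this
  exact_mod_cast this.trans (List.toFinset_card_le ts)

lemma le_of_succ_le_add_one {d : ℕ} {X : WithBot ℕ∞} (h : ((d + 1 : ℕ) : WithBot ℕ∞) ≤ X + 1) :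
    (d : WithBot ℕ∞) ≤ X := by
  induction X using WithBot.recBotCoe with
  | bot => simp at h
  | coe X =>
    have h1 : ((d + 1 : ℕ) : ℕ∞) ≤ X + 1 := by exact_mod_cast h
    have h2 : (d : ℕ∞) ≤ X := by
      induction X using ENat.recTopCoe with
      | top => exact le_top
      | coe X =>
        norm_cast at h1 ⊢
        omega
    exact_mod_cast h2

/-- The quotient by the smallest prime of a long chain has the dimension of that chain. -/
lemma exists_prime_le_ringKrullDim {R : Type} [CommRing R] {d : ℕ}
    (h : (d : WithBot ℕ∞) ≤ ringKrullDim R) :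
    ∃ Q : Ideal R, Q.IsPrime ∧ (d : WithBot ℕ∞) ≤ ringKrullDim (R ⧸ Q) := by
  obtain ⟨l, hl⟩ := Order.le_krullDim_iff.1 h
  refine ⟨l.head.asIdeal, l.head.2, ?_⟩
  rw [ringKrullDim_quotient]
  refine Order.le_krullDim_iff.2 ⟨⟨l.length, fun i => ⟨l i, ?_⟩, fun i => l.step i⟩, hl⟩
  exact LTSeries.head_le l i

/-- If the maximal ideal is generated by `d` elements and the dimension is at least `d`, then `R`
is a domain and the generators form a regular sequence. By induction `R/t` is a domain of
dimension `d - 1`. A prime `Q` with `R/Q` of dimension at least `d` does not contain `t`, and is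
contained in `(t)`, as otherwise `R/(Q + t)` would have dimension less than `d - 1`. Hence
`Q = t Q`, and `Q = 0`. -/
theorem regOn_of_generators (d : ℕ) : ∀ (R : Type) [CommRing R] [IsLocalRing R]
    [IsNoetherianRing R] (ts : List R), ts.length = d → maximalIdeal R = Ideal.ofList ts →
    (d : WithBot ℕ∞) ≤ ringKrullDim R → IsDomain R ∧ RegOn ⊥ ts := by
  induction d with
  | zero =>
    intro R _ _ _ ts hts hm _
    obtain rfl := List.length_eq_zero_iff.1 hts
    have : maximalIdeal R = ⊥ := by simpa using hm
    have hF := isField_iff_maximalIdeal_eq.2 this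
    exact ⟨hF.isDomain, trivial⟩
  | succ d ih =>
    intro R _ _ _ ts hts hm hd
    obtain ⟨t, ts, rfl⟩ := List.exists_cons_of_length_eq_add_one hts
    rw [List.length_cons, Nat.add_right_cancel_iff] at hts
    rw [Ideal.ofList_cons] at hm
    have htm : t ∈ maximalIdeal R := by
      rw [hm]; exact Ideal.mem_sup_left (Ideal.mem_span_singleton_self t)
    have hspan : Ideal.span {t} ≤ maximalIdeal R := (Ideal.span_singleton_le_iff_mem _).2 htm
    have hnt : Nontrivial (R ⧸ Ideal.span {t}) := Ideal.Quotient.nontrivial_iff.2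
      (ne_top_of_le_ne_top (maximalIdeal.isMaximal R).ne_top hspan)
    have hsurj := Ideal.Quotient.mk_surjective (I := Ideal.span {t})
    have hloc : IsLocalRing (R ⧸ Ideal.span {t}) := IsLocalRing.of_surjective' _ hsurj
    have hm' : maximalIdeal (R ⧸ Ideal.span {t}) =
        Ideal.ofList (ts.map (Ideal.Quotient.mk (Ideal.span {t}))) := by
      rw [← Ideal.map_ofList, ← Ideal.map_comap_of_surjective _ hsurj
        (maximalIdeal (R ⧸ Ideal.span {t})), comap_maximalIdeal hsurj, hm, Ideal.map_sup,
        Ideal.map_quotient_self, bot_sup_eq]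
    have hd' : ∀ (A : Type) [CommRing A] [IsLocalRing A] [IsNoetherianRing A] (a : A),
        a ∈ maximalIdeal A → ((d + 1 : ℕ) : WithBot ℕ∞) ≤ ringKrullDim A →
        (d : WithBot ℕ∞) ≤ ringKrullDim (A ⧸ Ideal.span {a}) := by
      intro A _ _ _ a ha hA
      have := ringKrullDim_le_ringKrullDim_quotient_add_card (R := A) {a}
        (by simpa [IsLocalRing.ringJacobson_eq_maximalIdeal] using ha)
      rw [Finset.coe_singleton, Finset.card_singleton, Nat.cast_one] at this
      exact le_of_succ_le_add_one (hA.trans this)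
    obtain ⟨hdom, hreg⟩ := ih (R ⧸ Ideal.span {t}) (ts.map (Ideal.Quotient.mk (Ideal.span {t})))
      (by simpa using hts) hm' (hd' R t htm hd)
    have hdim := ringKrullDim_le_length hm'
    rw [List.length_map, hts] at hdim
    obtain ⟨Q, hQ, hQd⟩ := exists_prime_le_ringKrullDim hd
    have hlocQ : IsLocalRing (R ⧸ Q) := IsLocalRing.of_surjective' _ Ideal.Quotient.mk_surjective
    have htQ : t ∉ Q := by
      intro h
      have h1 := ringKrullDim_le_of_surjective
        (Ideal.Quotient.factor ((Ideal.span_singleton_le_iff_mem _).2 h))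
        (Ideal.Quotient.factor_surjective ((Ideal.span_singleton_le_iff_mem _).2 h))
      have := (hQd.trans h1).trans hdim
      norm_cast at this
      omega
    have hQt : Q ≤ Ideal.span {t} := by
      intro y hy
      by_contra hyt
      have hy0 : Ideal.Quotient.mk (Ideal.span {t}) y ≠ 0 := by
        rwa [ne_eq, Ideal.Quotient.eq_zero_iff_mem]
      have h1 := (ringKrullDim_quotient_succ_le_of_nonZeroDivisor
        (mem_nonZeroDivisors_of_ne_zero hy0)).trans hdim
      have h2 := hd' (R ⧸ Q) (Ideal.Quotient.mk Q t) (by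
        rw [← Ideal.mem_comap, comap_maximalIdeal Ideal.Quotient.mk_surjective]; exact htm) hQd
      let φ : R →+* (R ⧸ Q) ⧸ Ideal.span {Ideal.Quotient.mk Q t} :=
        (Ideal.Quotient.mk _).comp (Ideal.Quotient.mk Q)
      have hφ : Function.Surjective φ :=
        Ideal.Quotient.mk_surjective.comp Ideal.Quotient.mk_surjective
      have hφt : ∀ a ∈ Ideal.span {t}, φ a = 0 := by
        intro a ha
        obtain ⟨r, rfl⟩ := Ideal.mem_span_singleton'.1 ha
        rw [map_mul]
        have : φ t = 0 := Ideal.Quotient.eq_zero_iff_mem.2 (Ideal.mem_span_singleton_self _)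
        rw [this, mul_zero]
      let ψ := Ideal.Quotient.lift _ φ hφt
      have hψ : Function.Surjective ψ := Ideal.Quotient.lift_surjective_of_surjective _ hφt hφ
      have hψy : ∀ a ∈ Ideal.span {Ideal.Quotient.mk (Ideal.span {t}) y}, ψ a = 0 := by
        intro a ha
        obtain ⟨r, rfl⟩ := Ideal.mem_span_singleton'.1 ha
        rw [map_mul]
        have h3 : ψ (Ideal.Quotient.mk (Ideal.span {t}) y) = φ y := Ideal.Quotient.lift_mk _ _ _
        have : φ y = 0 := by
          change Ideal.Quotient.mk _ (Ideal.Quotient.mk Q y) = 0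
          rw [Ideal.Quotient.eq_zero_iff_mem.2 hy, map_zero]
        rw [h3, this, mul_zero]
      have h4 := ringKrullDim_le_of_surjective _
        (Ideal.Quotient.lift_surjective_of_surjective _ hψy hψ)
      have h5 : ((d : WithBot ℕ∞) + 1) ≤ d :=
        (add_le_add_left (h2.trans h4) 1).trans h1
      norm_cast at h5
      omega
    have hQ0 : Q = ⊥ := by
      refine le_bot_iff.1 (Submodule.le_of_le_smul_of_le_jacobson_bot (IsNoetherian.noetherian _)
        (maximalIdeal_le_jacobson _) fun y hy => ?_)
      obtain ⟨a, rfl⟩ := Ideal.mem_span_singleton'.1 (hQt hy)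
      have ha : a ∈ Q := (hQ.mem_or_mem hy).resolve_right htQ
      rw [mul_comm]
      exact Submodule.mem_sup_right (Submodule.smul_mem_smul htm ha)
    subst hQ0
    have hdomR : IsDomain R := (MulEquiv.isDomain_iff (RingEquiv.quotientBot R).toMulEquiv).1
      (Ideal.Quotient.isDomain ⊥)
    refine ⟨hdomR, htm, fun z hz => ?_, ?_⟩
    · rw [Ideal.mem_bot] at hz ⊢
      exact (mul_eq_zero.1 hz).resolve_left htQ
    · have := regOn_comap hsurj hreg
      rw [← RingHom.ker_eq_comap_bot, Ideal.mk_ker] at this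
      rwa [bot_sup_eq]

end Regular

/-! ### Flatness of Frobenius -/

section Frob
open IsLocalRing

lemma exists_fin_of_finite {A B : Type} [CommRing A] [CommRing B] {f : A →+* B} (hf : f.Finite) :
    ∃ (n : ℕ) (e : Fin n → B), ∀ z, ∃ a : Fin n → A, z = ∑ i, f (a i) * e i := by
  algebraize [f]
  obtain ⟨n, e, he⟩ := Module.Finite.exists_fin (R := A) (M := B)
  refine ⟨n, e, fun z => ?_⟩
  obtain ⟨a, ha⟩ := (Submodule.mem_span_range_iff_exists_fun A).1 (he ▸ Submodule.mem_top : z ∈ _)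
  exact ⟨a, by rw [← ha]; simp [Algebra.smul_def, RingHom.algebraMap_toAlgebra]⟩

variable {R : Type} [CommRing R]

lemma pow_mem_bracketPow {J : Ideal R} {x : R} (hx : x ∈ J) (q : ℕ) : x ^ q ∈ bracketPow J q :=
  Ideal.subset_span ⟨x, hx, rfl⟩

lemma bracketPow_le {J K : Ideal R} {q : ℕ} : bracketPow J q ≤ K ↔ ∀ x ∈ J, x ^ q ∈ K := by
  rw [bracketPow, Ideal.span_le]
  simp [Set.subset_def]

lemma bracketPow_mono {J K : Ideal R} (h : J ≤ K) (q : ℕ) : bracketPow J q ≤ bracketPow K q :=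
  bracketPow_le.2 fun _ hx => pow_mem_bracketPow (h hx) q

variable (p : ℕ) [Fact p.Prime] [CharP R p]

lemma bracketPow_eq_map (J : Ideal R) : bracketPow J p = Ideal.map (frobenius R p) J := rfl

lemma bracketPow_pow_succ (J : Ideal R) (n : ℕ) :
    bracketPow J (p ^ (n + 1)) = bracketPow (bracketPow J (p ^ n)) p := by
  apply le_antisymm
  · refine bracketPow_le.2 fun x hx => ?_
    rw [pow_succ, pow_mul]
    exact pow_mem_bracketPow (pow_mem_bracketPow hx _) _
  · rw [bracketPow_eq_map, Ideal.map_le_iff_le_comap]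
    refine bracketPow_le.2 fun x hx => ?_
    rw [Ideal.mem_comap, frobenius_def, ← pow_mul, ← pow_succ]
    exact pow_mem_bracketPow hx _

lemma bracketPow_sup (J K : Ideal R) :
    bracketPow (J ⊔ K) p = bracketPow J p ⊔ bracketPow K p := by
  rw [bracketPow_eq_map, bracketPow_eq_map, bracketPow_eq_map, Ideal.map_sup]

lemma bracketPow_span_singleton (x : R) : bracketPow (Ideal.span {x}) p = Ideal.span {x ^ p} := by
  rw [bracketPow_eq_map, Ideal.map_span, Set.image_singleton, frobenius_def]

lemma bracketPow_adjoinList (J : Ideal R) (xs : List R) :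
    bracketPow (adjoinList J xs) p = adjoinList (bracketPow J p) (xs.map (· ^ p)) := by
  induction xs generalizing J with
  | nil => rfl
  | cons x xs ih => rw [adjoinList, ih, bracketPow_sup, bracketPow_span_singleton]; rfl

/-- Every element is a combination `∑ aᵢ ^ p * eᵢ`: the `eᵢ` generate `F_* R`. -/
def FrobSpans {n : ℕ} (e : Fin n → R) : Prop := ∀ z, ∃ a : Fin n → R, z = ∑ i, a i ^ p * e i

/-- The `eᵢ` are independent modulo `𝔞`, in `F_* R / 𝔞 F_* R = R / 𝔞^{[p]}`. -/
def FrobIndep {n : ℕ} (e : Fin n → R) (𝔞 : Ideal R) : Prop :=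
  ∀ a : Fin n → R, ∑ i, a i ^ p * e i ∈ bracketPow 𝔞 p → ∀ i, a i ∈ 𝔞

variable {p}

omit [Fact p.Prime] [CharP R p] in
lemma sum_mem_bracketPow {n : ℕ} (e : Fin n → R) {𝔞 : Ideal R} {a : Fin n → R}
    (ha : ∀ i, a i ∈ 𝔞) : ∑ i, a i ^ p * e i ∈ bracketPow 𝔞 p :=
  Ideal.sum_mem _ fun i _ => Ideal.mul_mem_right _ _ (pow_mem_bracketPow (ha i) p)

lemma sum_sub_pow {n : ℕ} (e a b : Fin n → R) :
    ∑ i, (a i - b i) ^ p * e i = ∑ i, a i ^ p * e i - ∑ i, b i ^ p * e i := by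
  simp [sub_pow_char, sub_mul]

/-- Elements of `𝔞^{[p]}` are combinations of the `eᵢ` with coefficients in `𝔞`. -/
lemma FrobSpans.exists_of_mem {n : ℕ} {e : Fin n → R} (h : FrobSpans p e) {𝔞 : Ideal R} {z : R}
    (hz : z ∈ bracketPow 𝔞 p) : ∃ a : Fin n → R, (∀ i, a i ∈ 𝔞) ∧ z = ∑ i, a i ^ p * e i := by
  rw [bracketPow] at hz
  induction hz using Submodule.span_induction with
  | mem x hx =>
    obtain ⟨y, hy, rfl⟩ := hx
    obtain ⟨a, ha⟩ := h 1
    refine ⟨fun i => y * a i, fun i => 𝔞.mul_mem_right _ hy, ?_⟩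
    simp only [mul_pow, mul_assoc]
    rw [← Finset.mul_sum, ← ha, mul_one]
  | zero => exact ⟨0, fun i => 𝔞.zero_mem, by simp [(Fact.out : p.Prime).ne_zero]⟩
  | add x y _ _ hx hy =>
    obtain ⟨a, ha, rfl⟩ := hx
    obtain ⟨b, hb, rfl⟩ := hy
    exact ⟨fun i => a i + b i, fun i => 𝔞.add_mem (ha i) (hb i), by
      simp [add_pow_char, add_mul, Finset.sum_add_distrib]⟩
  | smul r x _ hx =>
    obtain ⟨a, ha, rfl⟩ := hx
    choose m hm using fun i => h (r * e i)
    refine ⟨fun j => ∑ i, a i * m i j, fun j => 𝔞.sum_mem fun i _ => 𝔞.mul_mem_right _ (ha i), ?_⟩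
    rw [smul_eq_mul, Finset.mul_sum]
    calc ∑ i, r * (a i ^ p * e i) = ∑ i, ∑ j, (a i * m i j) ^ p * e j := by
          refine Finset.sum_congr rfl fun i _ => ?_
          rw [mul_left_comm, hm i, Finset.mul_sum]
          exact Finset.sum_congr rfl fun j _ => by ring
      _ = _ := by
          rw [Finset.sum_comm]
          refine Finset.sum_congr rfl fun j _ => ?_
          rw [sum_pow_char, Finset.sum_mul]

lemma FrobIndep.of_bot {n : ℕ} {e : Fin n → R} (hs : FrobSpans p e) (h : FrobIndep p e ⊥)
    (𝔞 : Ideal R) : FrobIndep p e 𝔞 := by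
  intro a ha i
  obtain ⟨b, hb, hab⟩ := hs.exists_of_mem ha
  have := h (fun i => a i - b i) (by rw [sum_sub_pow, hab, sub_self]; exact Ideal.zero_mem _) i
  rw [Ideal.mem_bot, sub_eq_zero] at this
  rw [this]; exact hb i

variable [IsLocalRing R]

/-- A generating family of minimal size is independent modulo the maximal ideal. -/
lemma exists_frobSpans (hf : (frobenius R p).Finite) :
    ∃ (n : ℕ) (e : Fin n → R), FrobSpans p e ∧ FrobIndep p e (maximalIdeal R) := by
  classical
  have hex : ∃ n, ∃ e : Fin n → R, FrobSpans p e := exists_fin_of_finite hf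
  obtain ⟨e, he⟩ := Nat.find_spec hex
  have hmin := fun m => Nat.find_min hex (m := m)
  generalize Nat.find hex = n at e he hmin
  refine ⟨n, e, he, fun a ha j => ?_⟩
  by_contra hj
  obtain ⟨b, hb, hab⟩ := he.exists_of_mem ha
  have hu : IsUnit (a j - b j) := by
    by_contra hn
    exact hj (by simpa using Ideal.add_mem _ ((mem_maximalIdeal _).2 hn) (hb j))
  have h0 : ∑ i, (a i - b i) ^ p * e i = 0 := by rw [sum_sub_pow, hab, sub_self]
  obtain ⟨u, hu⟩ := hu
  obtain _ | n := n
  · exact j.elim0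
  refine hmin n (Nat.lt_succ_self n) ⟨fun i => e (j.succAbove i), fun z => ?_⟩
  obtain ⟨c, hc⟩ := he z
  rw [Fin.sum_univ_succAbove _ j] at h0 hc
  refine ⟨fun i => c (j.succAbove i) -
    c j * ↑u⁻¹ * (a (j.succAbove i) - b (j.succAbove i)), ?_⟩
  rw [sum_sub_pow, hc]
  have e1 : ∑ i, (c j * ↑u⁻¹ * (a (j.succAbove i) - b (j.succAbove i))) ^ p * e (j.succAbove i) =
      c j ^ p * (↑u⁻¹ : R) ^ p *
        ∑ i, (a (j.succAbove i) - b (j.succAbove i)) ^ p * e (j.succAbove i) := by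
    rw [Finset.mul_sum]
    exact Finset.sum_congr rfl fun i _ => by rw [mul_pow, mul_pow]; ring
  have e2 : (↑u⁻¹ : R) ^ p * (u : R) ^ p = 1 := by rw [← mul_pow, u.inv_mul, one_pow]
  rw [e1]
  rw [← hu] at h0
  linear_combination c j ^ p * (↑u⁻¹ : R) ^ p * h0 - c j ^ p * e j * e2

/-- Independence lifts along a regular sequence: if `∑ aᵢ ^ p * eᵢ ∈ c^{[p]}`, then independence
modulo `c + (x)` gives `aᵢ = cᵢ + bᵢ * x` with `cᵢ ∈ c`, and `∑ bᵢ ^ p * eᵢ ∈ c^{[p]}` because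
`x ^ p` is regular modulo `c^{[p]}`. Nakayama's lemma in `R^n` concludes. -/
lemma FrobIndep.of_regOn [IsNoetherianRing R] {n : ℕ} {e : Fin n → R} {c : Ideal R} {xs : List R}
    (hxs : ∀ x ∈ xs, x ∈ maximalIdeal R)
    (hreg : RegOn (bracketPow c p) (xs.map (· ^ p))) (h : FrobIndep p e (adjoinList c xs)) :
    FrobIndep p e c := by
  induction xs generalizing c with
  | nil => exact h
  | cons x xs ih =>
    obtain ⟨-, h1, h2⟩ := hreg
    have hx : FrobIndep p e (c ⊔ Ideal.span {x}) := by
      refine ih (fun y hy => hxs y (List.mem_cons_of_mem _ hy)) ?_ h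
      rwa [bracketPow_sup, bracketPow_span_singleton]
    let K : Submodule R (Fin n → R) :=
      { carrier := {a | ∑ i, a i ^ p * e i ∈ bracketPow c p}
        add_mem' := fun {a b} ha hb => by
          have : ∑ i, (a + b) i ^ p * e i = ∑ i, a i ^ p * e i + ∑ i, b i ^ p * e i := by
            simp [add_pow_char, add_mul, Finset.sum_add_distrib]
          simp only [Set.mem_ofPred_eq] at ha hb ⊢
          rw [this]; exact Ideal.add_mem _ ha hb
        zero_mem' := by simp [(Fact.out : p.Prime).ne_zero]
        smul_mem' := fun r a ha => by
          have : ∑ i, (r • a) i ^ p * e i = r ^ p * ∑ i, a i ^ p * e i := by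
            rw [Finset.mul_sum]
            exact Finset.sum_congr rfl fun i _ => by simp only [Pi.smul_apply, smul_eq_mul]; ring
          simp only [Set.mem_ofPred_eq] at ha ⊢
          rw [this]; exact Ideal.mul_mem_left _ _ ha }
    have hK : K ≤ Submodule.pi Set.univ fun _ => c := by
      refine Submodule.le_of_le_smul_of_le_jacobson_bot (IsNoetherian.noetherian _)
        (maximalIdeal_le_jacobson _) fun a ha => ?_
      have ha' : ∑ i, a i ^ p * e i ∈ bracketPow c p := ha
      have ha1 := hx a (bracketPow_mono le_sup_left p ha')
      choose b hb using fun i => mem_sup_span_singleton.1 (ha1 i)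
      have hbK : b ∈ K := by
        refine h1 _ ?_
        have e1 : x ^ p * ∑ i, b i ^ p * e i = ∑ i, (b i * x) ^ p * e i := by
          rw [Finset.mul_sum]
          exact Finset.sum_congr rfl fun i _ => by ring
        have h3 := sum_mem_bracketPow (p := p) e hb
        rw [sum_sub_pow] at h3
        change x ^ p * ∑ i, b i ^ p * e i ∈ _
        rw [e1]
        have := Ideal.sub_mem _ ha' h3
        rwa [sub_sub_cancel] at this
      have e2 : a = (fun i => a i - b i * x) + x • b := by
        ext i; simp only [Pi.add_apply, Pi.smul_apply, smul_eq_mul]; ring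
      rw [e2]
      exact Submodule.add_mem_sup (fun i _ => hb i)
        (Submodule.smul_mem_smul (hxs x List.mem_cons_self) hbK)
    exact fun a ha i => hK (show a ∈ K from ha) i trivial

lemma adjoinList_bot {ts : List R} (hm : maximalIdeal R = Ideal.ofList ts) :
    adjoinList ⊥ ts = maximalIdeal R := by rw [adjoinList_eq, bot_sup_eq, hm]

/-- One direction of Kunz's theorem: `F_* R` is free over an `F`-finite regular local ring. A
minimal generating family is a basis modulo the maximal ideal, and stays one along a regular
system of parameters. -/
lemma exists_frobBasis [IsNoetherianRing R] (hf : (frobenius R p).Finite) {ts : List R}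
    (hm : maximalIdeal R = Ideal.ofList ts) (hreg : RegOn ⊥ ts) :
    ∃ (n : ℕ) (e : Fin n → R), FrobSpans p e ∧ ∀ 𝔞, FrobIndep p e 𝔞 := by
  obtain ⟨n, e, he, hi⟩ := exists_frobSpans hf
  refine ⟨n, e, he, FrobIndep.of_bot he (FrobIndep.of_regOn (xs := ts) ?_ ?_ ?_)⟩
  · intro x hx
    rw [hm]; exact Ideal.subset_span hx
  · have : bracketPow (⊥ : Ideal R) p = ⊥ := by rw [bracketPow_eq_map, Ideal.map_bot]
    rw [this]
    exact (regOn_map_pow hreg (Fact.out : p.Prime).ne_zero).1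
  · rwa [adjoinList_bot hm]

omit [Fact p.Prime] [CharP R p] in
lemma artinGor_maximalIdeal : ArtinGor (maximalIdeal R) where
  pow_le := ⟨1, by rw [pow_one]⟩
  socle := by
    refine ⟨1, fun h => (mem_maximalIdeal _).1 h isUnit_one, fun r hr => ?_, fun z _ => ⟨z, ?_⟩⟩
    · rwa [mul_one]
    · rw [mul_one, sub_self]; exact Ideal.zero_mem _

section Basis
variable {n : ℕ} {e : Fin n → R} (hs : FrobSpans p e) (hi : ∀ 𝔞, FrobIndep p e 𝔞)
include hs hi

omit [IsLocalRing R] [Fact p.Prime] [CharP R p] in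
/-- If `(𝔞 : x) ⊆ 𝔟` then `(𝔞^{[p]} : x^p) ⊆ 𝔟^{[p]}`. -/
lemma pow_mul_mem_bracketPow {x z : R} {𝔞 𝔟 : Ideal R} (h : ∀ y, x * y ∈ 𝔞 → y ∈ 𝔟)
    (hz : x ^ p * z ∈ bracketPow 𝔞 p) : z ∈ bracketPow 𝔟 p := by
  obtain ⟨a, rfl⟩ := hs z
  have h1 : ∑ i, (x * a i) ^ p * e i ∈ bracketPow 𝔞 p := by
    convert hz using 1
    rw [Finset.mul_sum]
    exact Finset.sum_congr rfl fun i _ => by ring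
  exact sum_mem_bracketPow e fun i => h _ (hi 𝔞 _ h1 i)

omit [IsLocalRing R] [Fact p.Prime] [CharP R p] in
/-- Flatness of Frobenius: bracket powers commute with colons. -/
lemma colonOf_bracketPow (𝔞 𝔟 : Ideal R) :
    colonOf (bracketPow 𝔞 p) (bracketPow 𝔟 p) = bracketPow (colonOf 𝔞 𝔟) p := by
  apply le_antisymm
  · intro z hz
    obtain ⟨a, rfl⟩ := hs z
    refine sum_mem_bracketPow e fun i y hy => ?_
    refine hi 𝔞 (fun i => a i * y) ?_ i
    convert hz _ (pow_mem_bracketPow hy p) using 1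
    rw [Finset.sum_mul]
    exact Finset.sum_congr rfl fun i _ => by ring
  · refine bracketPow_le.2 fun z hz y hy => ?_
    have : bracketPow 𝔟 p ≤ colonOf (bracketPow 𝔞 p) (Ideal.span {z ^ p}) := by
      refine bracketPow_le.2 fun y hy i hi => ?_
      obtain ⟨r, rfl⟩ := Ideal.mem_span_singleton'.1 hi
      have := Ideal.mul_mem_left _ r (pow_mem_bracketPow (hz y hy) p)
      convert this using 1; ring
    have := this hy _ (Ideal.mem_span_singleton_self _)
    rwa [mul_comm]

lemma regOn_bracketPow {𝔞 : Ideal R} {xs : List R} (h : RegOn 𝔞 xs) :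
    RegOn (bracketPow 𝔞 p) (xs.map (· ^ p)) := by
  induction xs generalizing 𝔞 with
  | nil => trivial
  | cons x xs ih =>
    refine ⟨Ideal.pow_mem_of_mem _ h.1 _ (Fact.out : p.Prime).pos,
      fun z hz => pow_mul_mem_bracketPow hs hi h.2.1 hz, ?_⟩
    rw [← bracketPow_span_singleton, ← bracketPow_sup]
    exact ih h.2.2

/-- Bracket powers preserve the Artinian Gorenstein condition. If `u` generates the socle modulo
`𝔞` and `v` generates the socle modulo `𝔪^{[p]}`, then `u ^ p * v` generates the socle modulo
`𝔞^{[p]}`. -/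
lemma artinGor_bracketPow {𝔞 : Ideal R} (h : ArtinGor 𝔞)
    (hm : ArtinGor (bracketPow (maximalIdeal R) p)) : ArtinGor (bracketPow 𝔞 p) := by
  obtain ⟨⟨N, hN⟩, u, hu⟩ := h
  obtain ⟨⟨M, hM⟩, v, hv⟩ := hm
  have key : ∀ z, u ^ p * z ∈ bracketPow 𝔞 p → z ∈ bracketPow (maximalIdeal R) p :=
    fun z => pow_mul_mem_bracketPow hs hi fun y hy =>
      mem_maximalIdeal_of_mul_mem hu.1 (by rwa [mul_comm])
  have key' : ∀ z ∈ bracketPow (maximalIdeal R) p, u ^ p * z ∈ bracketPow 𝔞 p := by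
    intro z hz
    obtain ⟨b, hb, rfl⟩ := hs.exists_of_mem hz
    have := sum_mem_bracketPow (p := p) e fun i => hu.2 _ (hb i)
    convert this using 1
    rw [Finset.mul_sum]
    exact Finset.sum_congr rfl fun i _ => by ring
  refine ⟨⟨M * N, ?_⟩, u ^ p * v, fun h => hv.1 (key _ h), fun r hr => ?_, fun z hz => ?_⟩
  · rw [pow_mul]
    refine (Ideal.pow_right_mono hM N).trans ?_
    rw [bracketPow_eq_map, ← Ideal.map_pow]
    exact Ideal.map_mono hN
  · have := key' _ (hv.2 r hr)
    convert this using 1; ring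
  · obtain ⟨a, rfl⟩ := hs z
    have h1 : ∀ i, ∃ b, a i - b * u ∈ 𝔞 := fun i => hu.3 _ fun r hr => by
      refine hi 𝔞 (fun i => r * a i) ?_ i
      have := hz _ (Ideal.pow_mem_of_mem _ hr p (Fact.out : p.Prime).pos)
      convert this using 1
      rw [Finset.mul_sum]
      exact Finset.sum_congr rfl fun i _ => by ring
    choose b hb using h1
    have h2 := sum_mem_bracketPow (p := p) e hb
    have e1 : ∑ i, (b i * u) ^ p * e i = u ^ p * ∑ i, b i ^ p * e i := by
      rw [Finset.mul_sum]
      exact Finset.sum_congr rfl fun i _ => by ring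
    rw [sum_sub_pow, e1] at h2
    obtain ⟨c, hc⟩ := hv.3 (∑ i, b i ^ p * e i) fun r hr => key _ (by
      have := Ideal.sub_mem _ (hz r hr) (Ideal.mul_mem_left _ r h2)
      convert this using 1; ring)
    refine ⟨c, ?_⟩
    have := Ideal.add_mem _ h2 (key' _ hc)
    convert this using 1; ring

end Basis
end Frob

/-! ### Vanishing of `Ext` and self-injectivity -/

section GorExt
/-- Vanishing of the derived-functor `Ext` gives vanishing of the `Ext` of the derived category:
both are computed by a projective resolution. -/
lemma subsingleton_abelianExt {S : Type} [CommRing S] (X Y : ModuleCat S) (k : ℕ)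
    (h : Subsingleton (((Ext S (ModuleCat S) (k + 1)).obj (Opposite.op X)).obj Y)) :
    Subsingleton (Abelian.Ext X Y (k + 1)) := by
  let P := projectiveResolution X
  have h0 : Limits.IsZero ((P.complex.linearYonedaObj S Y).homology (k + 1)) :=
    Limits.IsZero.of_iso (ModuleCat.isZero_of_subsingleton _) (P.isoExt (k + 1) Y).symm
  rw [← HomologicalComplex.exactAt_iff_isZero_homology,
    HomologicalComplex.exactAt_iff' _ k (k + 1) (k + 2) (by simp) (by simp),
    ShortComplex.moduleCat_exact_iff] at h0
  refine ⟨fun α β => ?_⟩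
  suffices ∀ α : Abelian.Ext X Y (k + 1), α = 0 by rw [this α, this β]
  intro α
  obtain ⟨f, hf, rfl⟩ := P.extMk_surjective α (k + 2) rfl
  rw [P.extMk_eq_zero_iff f (k + 2) rfl hf k rfl]
  obtain ⟨g, hg⟩ := h0 f hf
  exact ⟨g, hg⟩
end GorExt

section GorExt
variable {S : Type} [CommRing S]
open IsLocalRing RingTheory.Sequence Pointwise

lemma ext_congr_left {M N Y : ModuleCat S} (e : M ≅ N) (i : ℕ)
    (h : Subsingleton (Abelian.Ext M Y i)) : Subsingleton (Abelian.Ext N Y i) := by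
  refine subsingleton_of_forall_eq 0 fun x => ?_
  have h1 := Abelian.Ext.mk₀_comp_mk₀_assoc e.inv e.hom x
  rw [e.inv_hom_id, Abelian.Ext.mk₀_id_comp,
    Subsingleton.elim ((Abelian.Ext.mk₀ e.hom).comp x (zero_add i)) 0] at h1
  rw [← h1, Abelian.Ext.comp_zero]

lemma ext_middle {T : ShortComplex (ModuleCat S)} (hT : T.ShortExact) {Y : ModuleCat S} {i : ℕ}
    (h₁ : Subsingleton (Abelian.Ext T.X₁ Y i)) (h₃ : Subsingleton (Abelian.Ext T.X₃ Y i)) :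
    Subsingleton (Abelian.Ext T.X₂ Y i) := by
  refine subsingleton_of_forall_eq 0 fun x => ?_
  obtain ⟨y, hy⟩ := Abelian.Ext.contravariant_sequence_exact₂ hT Y x (Subsingleton.elim _ _)
  rw [← hy, Subsingleton.elim y 0, Abelian.Ext.comp_zero]

/-- For an `M`-regular `x`, the class `δ` of `0 → M → M → M/xM → 0` in `Ext¹(M/xM, M)`, with the
three exactness properties of composition with `δ` that are used below. -/
lemma exists_extClass {M : ModuleCat S} {x : S} (hreg : IsSMulRegular M x) :
    ∃ δ : Abelian.Ext (ModuleCat.of S (QuotSMulTop x M)) M 1,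
      (∀ (X : ModuleCat S) (n : ℕ) (b : Abelian.Ext X M (n + 1)), x • b = 0 →
        ∃ c : Abelian.Ext X (ModuleCat.of S (QuotSMulTop x M)) n, c.comp δ rfl = b) ∧
      (∀ (X : ModuleCat S) (n : ℕ) (a : Abelian.Ext X (ModuleCat.of S (QuotSMulTop x M)) n),
        a.comp δ rfl = 0 → ∃ d : Abelian.Ext X M n, d.comp
          (Abelian.Ext.mk₀ (ModuleCat.ofHom (x • (⊤ : Submodule S M)).mkQ)) (add_zero n) = a) ∧
      ∀ (Y : ModuleCat S) (n : ℕ) (a : Abelian.Ext M Y n), δ.comp a (add_comm 1 n) = 0 →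
        ∃ b : Abelian.Ext M Y n, x • b = a := by
  have hT := hreg.smulShortComplex_shortExact
  refine ⟨hT.extClass, fun X n b hb => ?_, fun X n a ha => ?_, fun Y n a ha => ?_⟩
  · refine Abelian.Ext.covariant_sequence_exact₁ X hT b ?_ rfl
    have h : b.comp (Abelian.Ext.mk₀ (x • 𝟙 M)) (add_zero _) = 0 := by
      rw [Abelian.Ext.mk₀_smul, Abelian.Ext.comp_smul, Abelian.Ext.comp_mk₀_id, hb]
    exact h
  · exact Abelian.Ext.covariant_sequence_exact₃ X hT a rfl ha
  · have key : ∀ b : Abelian.Ext M Y n,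
        (Abelian.Ext.mk₀ (x • 𝟙 M)).comp b (zero_add n) = x • b := fun b => by
      rw [Abelian.Ext.mk₀_smul, Abelian.Ext.smul_comp, Abelian.Ext.mk₀_id_comp]
    obtain ⟨b, hb⟩ := Abelian.Ext.contravariant_sequence_exact₁ hT Y a (add_comm 1 n) ha
    exact ⟨b, (key b).symm.trans hb⟩

/-- If `Ext^{i+1}(M/xM, Y) = 0` with `x` regular on `M`, then multiplication by `x` is onto on
`Ext^i(M, Y)`, which therefore vanishes by Nakayama's lemma. -/
lemma ext_quotSMulTop [IsLocalRing S] [IsNoetherianRing S] {M Y : ModuleCat S} [Module.Finite S M]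
    [Module.Finite S Y] {x : S} (hx : x ∈ maximalIdeal S) (hreg : IsSMulRegular M x) (i : ℕ)
    (h : Subsingleton (Abelian.Ext (ModuleCat.of S (QuotSMulTop x M)) Y (i + 1))) :
    Subsingleton (Abelian.Ext M Y i) := by
  have hsurj : ∀ a : Abelian.Ext M Y i, ∃ b : Abelian.Ext M Y i, x • b = a := by
    obtain ⟨δ, -, -, hδ⟩ := exists_extClass hreg
    exact fun a => hδ Y i a (Subsingleton.elim _ _)
  have hle : (⊤ : Submodule S (Abelian.Ext M Y i)) ≤ ⊥ := by
    refine Submodule.le_of_le_smul_of_le_jacobson_bot (I := maximalIdeal S) Module.Finite.fg_top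
      (IsLocalRing.maximalIdeal_le_jacobson ⊥) ?_
    rintro a -
    obtain ⟨b, rfl⟩ := hsurj a
    exact le_sup_right (a := (⊥ : Submodule S (Abelian.Ext M Y i)))
      (Submodule.smul_mem_smul hx trivial)
  exact subsingleton_of_forall_eq 0 fun a => (Submodule.mem_bot S).1 (hle trivial)

/-- Vanishing of `Ext^i(k, Y)` for all `i ≥ m` propagates to all cyclic modules `M`. By Noetherian
induction on the annihilator: for `x ∈ 𝔪` not killing `M`, the statement holds for `M/xM`, and
either `x` is regular on `M`, or the cyclic module `xM` has a larger annihilator than `M`. -/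
lemma ext_cyclic [IsLocalRing S] [IsNoetherianRing S] (Y : ModuleCat S) [Module.Finite S Y] (m : ℕ)
    (hk : ∀ i, m ≤ i → Subsingleton (Abelian.Ext (ModuleCat.of S (S ⧸ maximalIdeal S)) Y i))
    (M : ModuleCat S) (φ : S →ₗ[S] M) (hφ : Function.Surjective φ) (i : ℕ) (hi : m ≤ i) :
    Subsingleton (Abelian.Ext M Y i) := by
  induction hI : LinearMap.ker φ using WellFoundedGT.induction generalizing M i with
  | ind I ih =>
  subst hI
  have hfin : Module.Finite S M := Module.Finite.of_surjective φ hφ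
  by_cases hle : maximalIdeal S ≤ LinearMap.ker φ
  · by_cases htop : LinearMap.ker φ = ⊤
    · have : Subsingleton M := by
        refine subsingleton_of_forall_eq 0 fun z => ?_
        obtain ⟨s, rfl⟩ := hφ z
        exact LinearMap.mem_ker.1 (htop ▸ trivial)
      have hz : Limits.IsZero M := ModuleCat.isZero_of_subsingleton M
      refine subsingleton_of_forall_eq 0 fun z => ?_
      rw [← Abelian.Ext.mk₀_id_comp z, hz.eq_of_src (𝟙 M) 0, Abelian.Ext.mk₀_zero,
        Abelian.Ext.zero_comp]
    · have he : maximalIdeal S = LinearMap.ker φ :=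
        hle.antisymm (IsLocalRing.le_maximalIdeal htop)
      exact ext_congr_left (((Submodule.quotEquivOfEq _ _ he).trans
        (φ.quotKerEquivOfSurjective hφ)).toModuleIso) i (hk i hi)
  · obtain ⟨x, hx, hxI⟩ := SetLike.not_le_iff_exists.1 hle
    have hQ : ∀ j, m ≤ j → Subsingleton (Abelian.Ext (ModuleCat.of S (QuotSMulTop x M)) Y j) := by
      intro j hj
      refine ih _ ?_ (ModuleCat.of S (QuotSMulTop x M)) ((Submodule.mkQ _).comp φ)
        ((Submodule.mkQ_surjective _).comp hφ) j hj rfl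
      refine lt_of_le_of_ne (fun z hz => ?_) fun h => hxI ?_
      · simp [LinearMap.mem_ker.1 hz]
      · rw [h, LinearMap.mem_ker, LinearMap.comp_apply, Submodule.mkQ_apply,
          Submodule.Quotient.mk_eq_zero]
        refine (Submodule.mem_smul_pointwise_iff_exists _ _ _).2 ⟨φ 1, trivial, ?_⟩
        rw [← map_smul, smul_eq_mul, mul_one]
    by_cases hreg : IsSMulRegular M x
    · exact ext_quotSMulTop hx hreg i (hQ (i + 1) (by omega))
    · let f : M →ₗ[S] M := LinearMap.lsmul S M x
      let T : ShortComplex (ModuleCat S) := ModuleCat.shortComplexOfCompEqZero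
        (LinearMap.range f).subtype (Submodule.mkQ (x • (⊤ : Submodule S M))) (by
          refine LinearMap.ext ?_
          rintro ⟨z, w, rfl⟩
          exact (Submodule.Quotient.mk_eq_zero _).2
            (Submodule.smul_mem_pointwise_smul w x ⊤ trivial))
      have hT : T.ShortExact :=
        { exact := (ShortComplex.ShortExact.moduleCat_exact_iff_function_exact _).mpr fun z => by
            simp [T, f, Submodule.mem_smul_pointwise_iff_exists]
          mono_f := (ModuleCat.mono_iff_injective _).mpr (Submodule.injective_subtype _)
          epi_g := (ModuleCat.epi_iff_surjective _).mpr (Submodule.mkQ_surjective _) }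
      refine ext_middle hT ?_ (hQ i hi)
      refine ih _ ?_ (ModuleCat.of S (LinearMap.range f)) (f.rangeRestrict.comp φ)
        (f.surjective_rangeRestrict.comp hφ) i hi rfl
      refine lt_of_le_of_ne (fun z hz => ?_) fun h => hreg ?_
      · simp [LinearMap.mem_ker.1 hz]
      · refine isSMulRegular_iff_right_eq_zero_of_smul.2 fun z hz => ?_
        obtain ⟨s, rfl⟩ := hφ z
        rw [← LinearMap.mem_ker, h, LinearMap.mem_ker]
        exact Subtype.ext hz

/-- Dimension shifting: if `K → M` is a morphism of modules killed by the `N`-regular sequence `rs`,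
then surjectivity of `Ext^t(M, N) → Ext^t(K, N)` for `t` the length of `rs` implies surjectivity of
`Hom(M, N/rs N) → Hom(K, N/rs N)`. For one element `x` of the sequence, the connecting map
`Ext^{t-1}(-, N/xN) → Ext^t(-, N)` is onto at `M`, as `x` kills the target, and injective at `K`, as
`Ext^{t-1}(K, N)` vanishes by depth. -/
lemma exists_lift_of_isRegular [IsNoetherianRing S] (rs : List S) (N L : ModuleCat S)
    [Module.Finite S N] (hreg : IsRegular N rs)
    (e : (N ⧸ (Ideal.ofList rs • (⊤ : Submodule S N))) ≃ₗ[S] L)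
    {K M : ModuleCat S} [Module.Finite S K] (f : K ⟶ M)
    (hK : ∀ r ∈ rs, r ∈ Module.annihilator S K) (hM : ∀ r ∈ rs, r ∈ Module.annihilator S M)
    (hsurj : ∀ x : Abelian.Ext K N rs.length, ∃ y : Abelian.Ext M N rs.length,
      (Abelian.Ext.mk₀ f).comp y (zero_add _) = x) (g : K ⟶ L) : ∃ h : M ⟶ L, f ≫ h = g := by
  induction rs generalizing N with
  | nil =>
    let e' : N ≅ L := (((Submodule.quotEquivOfEqBot _ (by simp)).symm.trans e)).toModuleIso
    obtain ⟨y, hy⟩ := hsurj (Abelian.Ext.mk₀ (g ≫ e'.inv))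
    obtain ⟨y, rfl⟩ := (Abelian.Ext.mk₀_bijective _ _).2 y
    rw [Abelian.Ext.mk₀_comp_mk₀] at hy
    refine ⟨y ≫ e'.hom, ?_⟩
    rw [← Category.assoc, (Abelian.Ext.mk₀_bijective _ _).1 hy]
    simp
  | cons x xs ih =>
    obtain ⟨hx, hxs⟩ := (isRegular_cons_iff _ _ _).1 hreg
    have hann : Ideal.ofList (x :: xs) ≤ Module.annihilator S K :=
      Ideal.span_le.2 fun r hr => hK r hr
    obtain ⟨δ, h₁, h₃, -⟩ := exists_extClass hx
    refine ih (ModuleCat.of S (QuotSMulTop x N)) hxs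
      ((Submodule.quotOfListConsSMulTopEquivQuotSMulTopInner N x xs).symm.trans e)
      (fun r hr => hK r (List.mem_cons_of_mem _ hr)) (fun r hr => hM r (List.mem_cons_of_mem _ hr))
      fun a => ?_
    obtain ⟨b, hb⟩ := hsurj (a.comp δ rfl)
    have hzero : x • 𝟙 M = 0 := by
      ext z
      exact Module.mem_annihilator.1 (hM x List.mem_cons_self) z
    have hxb : x • b = 0 := by
      have h' := Abelian.Ext.smul_comp (Abelian.Ext.mk₀ (𝟙 M)) b (zero_add _) x
      rwa [Abelian.Ext.mk₀_id_comp, ← Abelian.Ext.mk₀_smul, hzero, Abelian.Ext.mk₀_zero,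
        Abelian.Ext.zero_comp, eq_comm] at h'
    obtain ⟨c, rfl⟩ := h₁ _ _ b hxb
    obtain ⟨d, hd⟩ := h₃ K _ (a - (Abelian.Ext.mk₀ f).comp c (zero_add _)) (by
      rw [sub_eq_add_neg, Abelian.Ext.add_comp, Abelian.Ext.neg_comp,
        Abelian.Ext.comp_assoc (h₂₃ := rfl) (h := by simp), hb, add_neg_cancel])
    have : Subsingleton (Abelian.Ext K N xs.length) := by
      refine ModuleCat.subsingleton_ext_of_exists_isRegular (Ideal.ofList (x :: xs)) K ?_ N
        hreg.2.symm.lt_top (x :: xs) (fun r hr => Ideal.subset_span hr) hreg xs.length (by simp)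
      rw [Module.support_eq_zeroLocus]
      exact PrimeSpectrum.zeroLocus_anti_mono hann
    rw [Subsingleton.elim d 0, Abelian.Ext.zero_comp] at hd
    exact ⟨c, (sub_eq_zero.1 hd.symm).symm⟩
end GorExt

section GorMain
variable {S : Type} [CommRing S]
open IsLocalRing RingTheory.Sequence Pointwise

/-- Comparison of `RegOn` with Mathlib's regular sequences. -/
lemma regOn_of_isWeaklyRegular [IsLocalRing S] (c : Ideal S) (xs : List S)
    (hmem : ∀ x ∈ xs, x ∈ maximalIdeal S) (h : IsWeaklyRegular (S ⧸ c) xs) : RegOn c xs := by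
  induction xs generalizing c with
  | nil => trivial
  | cons x xs ih =>
    rw [isWeaklyRegular_cons_iff] at h
    refine ⟨hmem x List.mem_cons_self, fun z hz => ?_,
      ih _ (fun y hy => hmem y (List.mem_cons_of_mem _ hy)) ?_⟩
    · rw [← Ideal.Quotient.eq_zero_iff_mem]
      refine (isSMulRegular_iff_right_eq_zero_of_smul.1 h.1) _ ?_
      exact Ideal.Quotient.eq_zero_iff_mem.2 hz
    · refine (LinearEquiv.isWeaklyRegular_congr ?_ xs).1 h.2
      refine (Submodule.quotEquivOfEq _ _ ?_).trans
        (Submodule.quotientQuotientEquivQuotientSup c (Ideal.span {x}))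
      ext z
      obtain ⟨z, rfl⟩ := Submodule.Quotient.mk_surjective _ z
      simp only [Submodule.mem_smul_pointwise_iff_exists, Submodule.mem_map,
        Ideal.mem_span_singleton']
      constructor
      · rintro ⟨w, -, hw⟩
        obtain ⟨w, rfl⟩ := Submodule.Quotient.mk_surjective _ w
        exact ⟨w * x, ⟨w, rfl⟩, by rw [← hw, mul_comm]; rfl⟩
      · rintro ⟨_, ⟨w, rfl⟩, hw⟩
        exact ⟨Submodule.Quotient.mk w, trivial, by rw [← hw, mul_comm]; rfl⟩

/-- Self-injectivity from extension of homomorphisms along embeddings into `S/c`. -/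
lemma selfInj_of_forall_lift (c : Ideal S)
    (h : ∀ (K : ModuleCat S) (f : K ⟶ ModuleCat.of S (S ⧸ c)), Function.Injective f →
      ∀ g : K ⟶ ModuleCat.of S (S ⧸ c), ∃ h : ModuleCat.of S (S ⧸ c) ⟶ ModuleCat.of S (S ⧸ c),
        f ≫ h = g) : SelfInj c := by
  intro I hI f hf
  obtain ⟨φ, hφ⟩ := exists_linearMap_of_isHomOn hf
  let c' : Submodule S I := Submodule.comap I.subtype c
  let ι : (I ⧸ c') →ₗ[S] S ⧸ c := Submodule.mapQ c' c I.subtype le_rfl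
  have hι : Function.Injective ι := by
    refine (injective_iff_map_eq_zero ι).2 fun z hz => ?_
    obtain ⟨z, rfl⟩ := Submodule.Quotient.mk_surjective _ z
    exact (Submodule.Quotient.mk_eq_zero _).2 ((Submodule.Quotient.mk_eq_zero c).1 hz)
  let ψ : (I ⧸ c') →ₗ[S] S ⧸ c := c'.liftQ φ fun i hi => by
    rw [LinearMap.mem_ker, hφ]
    exact Ideal.Quotient.eq_zero_iff_mem.2 (hf.ker _ i.2 hi)
  obtain ⟨χ, hχ⟩ := h (ModuleCat.of S (I ⧸ c')) (ModuleCat.ofHom ι) hι (ModuleCat.ofHom ψ)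
  obtain ⟨d, hd⟩ := Ideal.Quotient.mk_surjective (χ.hom (Ideal.Quotient.mk c 1))
  refine ⟨d, fun i hi => ?_⟩
  have h1 := congrArg (fun t => t.hom (Submodule.Quotient.mk ⟨i, hi⟩ : I ⧸ c')) hχ
  have h2 : χ.hom (Ideal.Quotient.mk c i) = Ideal.Quotient.mk c (f i) :=
    h1.trans (hφ ⟨i, hi⟩)
  have h3 : Ideal.Quotient.mk c i = i • Ideal.Quotient.mk c 1 := by
    exact congrArg (Ideal.Quotient.mk c) (mul_one i).symm
  rw [h3, map_smul, ← hd] at h2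
  rw [← Ideal.Quotient.eq_zero_iff_mem, map_sub, ← h2, mul_comm, sub_eq_zero]
  rfl

/-- For a submodule `K` of `S/c`, restriction `Ext^i(S/c, Y) → Ext^i(K, Y)` is surjective as soon as
`Ext^{i+1}(-, Y)` vanishes on cyclic modules, since the cokernel of `K → S/c` is cyclic. -/
lemma exists_comp_eq {c : Ideal S} {K Y : ModuleCat S} (f : K ⟶ ModuleCat.of S (S ⧸ c))
    (hf : Function.Injective f) {i : ℕ}
    (hV : ∀ (M : ModuleCat S) (φ : S →ₗ[S] M), Function.Surjective φ →
      Subsingleton (Abelian.Ext M Y (i + 1))) (x : Abelian.Ext K Y i) :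
    ∃ y : Abelian.Ext (ModuleCat.of S (S ⧸ c)) Y i,
      (Abelian.Ext.mk₀ f).comp y (zero_add i) = x := by
  let T : ShortComplex (ModuleCat S) := ModuleCat.shortComplexOfCompEqZero
    f.hom (Submodule.mkQ (LinearMap.range f.hom)) (LinearMap.range_mkQ_comp f.hom)
  have hT : T.ShortExact :=
    { exact := (ShortComplex.ShortExact.moduleCat_exact_iff_function_exact _).mpr
        (LinearMap.exact_map_mkQ_range f.hom)
      mono_f := (ModuleCat.mono_iff_injective _).mpr hf
      epi_g := (ModuleCat.epi_iff_surjective _).mpr (Submodule.mkQ_surjective _) }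
  have h3 : Subsingleton (Abelian.Ext T.X₃ Y (i + 1)) :=
    hV T.X₃ ((Submodule.mkQ (LinearMap.range f.hom)).comp (Submodule.mkQ c))
      ((Submodule.mkQ_surjective _).comp (Submodule.mkQ_surjective _))
  exact Abelian.Ext.contravariant_sequence_exact₁ hT Y x (add_comm 1 i) (Subsingleton.elim _ _)

/-- A Gorenstein local ring has a regular sequence with Artinian Gorenstein quotient. Let `t` be
the least degree with `Ext^t(k, S) ≠ 0`. By Rees' theorem there is a regular sequence of length
`t` in the maximal ideal, and it cannot be extended, so the quotient `S/c` has nonzero socle, that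
is, contains a copy of `k`. As `S/c` has projective dimension `t`, this embedding shows by
descending induction that `Ext^i(k, S) = 0` for `i > t`. Then `Ext^{t+1}(-, S)` vanishes on cyclic
modules, and dimension shifting shows that `S/c` is self-injective. -/
theorem exists_regOn_artinGor (S : Type) [CommRing S] [IsLocalRing S] [IsNoetherianRing S]
    (h : IsGorensteinLocal S) :
    ∃ xs : List S, RegOn ⊥ xs ∧ ArtinGor (adjoinList ⊥ xs) := by
  classical
  set k : ModuleCat S := ModuleCat.of S (S ⧸ maximalIdeal S) with hk
  set Y : ModuleCat S := ModuleCat.of S S with hY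
  have hfinY : Module.Finite S Y := inferInstanceAs (Module.Finite S S)
  have hfink : Module.Finite S k := inferInstanceAs (Module.Finite S (S ⧸ maximalIdeal S))
  have hlt : maximalIdeal S • (⊤ : Submodule S Y) < ⊤ := by
    refine lt_top_iff_ne_top.2 fun h => (maximalIdeal.isMaximal S).ne_top ?_
    exact (Ideal.mul_top (maximalIdeal S)).symm.trans h
  have hsupp : Module.support S k = PrimeSpectrum.zeroLocus (maximalIdeal S : Set S) := by
    rw [Module.support_eq_zeroLocus]
    exact congrArg (fun I : Ideal S => PrimeSpectrum.zeroLocus (I : Set S))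
      Ideal.annihilator_quotient
  have hbound : ∃ m, ∀ i, m ≤ i → Subsingleton (Abelian.Ext k Y i) := by
    obtain ⟨n, hn⟩ := h
    refine ⟨n + 1, fun i hi => ?_⟩
    obtain ⟨j, rfl⟩ : ∃ j, i = j + 1 := ⟨i - 1, by omega⟩
    exact subsingleton_abelianExt k Y j (hn (j + 1) (by omega))
  have hne : ∃ t, ¬ Subsingleton (Abelian.Ext k Y t) := by
    by_contra! hall
    have h0 := ext_cyclic Y 0 (fun i _ => hall i) Y LinearMap.id Function.surjective_id 0 le_rfl
    have h1 : (𝟙 Y) = 0 := (Abelian.Ext.mk₀_bijective Y Y).1 (Subsingleton.elim _ _)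
    have h2 : (1 : S) = 0 := congrArg (fun t => t.hom (1 : S)) h1
    exact one_ne_zero h2
  set t := Nat.find hne with ht
  have htne : ¬ Subsingleton (Abelian.Ext k Y t) := Nat.find_spec hne
  obtain ⟨xs, hlen, hmem, hreg⟩ := ModuleCat.exists_isRegular_of_exists_subsingleton_ext
    (maximalIdeal S) t Y hlt k hsupp fun i hi => not_not.1 (Nat.find_min hne hi)
  -- no regular sequence in the maximal ideal is longer
  have hmax : ∀ y ∈ maximalIdeal S,
      ¬ IsSMulRegular (Y ⧸ (Ideal.ofList xs • (⊤ : Submodule S Y))) y := by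
    intro y hy hyreg
    have hreg' : IsRegular Y (xs ++ [y]) := by
      have hmem' : ∀ r ∈ xs ++ [y], r ∈ maximalIdeal S := fun r hr =>
        (List.mem_append.1 hr).elim (hmem r) fun h => List.mem_singleton.1 h ▸ hy
      have : Nontrivial Y := inferInstanceAs (Nontrivial S)
      exact RingTheory.Sequence.IsRegular.of_isWeaklyRegular_of_mem_maximalIdeal Y
        hmem' ((isWeaklyRegular_append_iff Y xs [y]).2
          ⟨hreg.1, (isWeaklyRegular_singleton_iff _ _).2 hyreg⟩)
    refine htne (ModuleCat.subsingleton_ext_of_exists_isRegular (maximalIdeal S) k hsupp.le Y hlt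
      (xs ++ [y]) (fun r hr => ?_) hreg' t (by simp [hlen]))
    exact (List.mem_append.1 hr).elim (hmem r) fun h => List.mem_singleton.1 h ▸ hy
  set c : Ideal S := adjoinList ⊥ xs with hc
  have hcof : Ideal.ofList xs • (⊤ : Submodule S S) = c := by
    rw [hc, adjoinList_eq, bot_sup_eq]
    exact Ideal.mul_top _
  let e : (S ⧸ (Ideal.ofList xs • (⊤ : Submodule S S))) ≃ₗ[S] S ⧸ c :=
    Submodule.quotEquivOfEq _ _ hcof
  -- the socle of `S / c` is nonzero
  obtain ⟨φ, hφ⟩ : ∃ φ : (S ⧸ maximalIdeal S) →ₗ[S] S ⧸ c, φ ≠ 0 := by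
    by_contra! hall
    have : Subsingleton ((S ⧸ maximalIdeal S) →ₗ[S] S ⧸ c) := subsingleton_of_forall_eq 0 hall
    obtain ⟨y, hy, hyreg⟩ := IsSMulRegular.subsingleton_linearMap_iff.1 this
    rw [Ideal.annihilator_quotient] at hy
    exact hmax y hy ((e.isSMulRegular_congr y).2 hyreg)
  have hann : ∀ z, ∀ r ∈ maximalIdeal S, r • φ z = 0 := by
    intro z r hr
    obtain ⟨z, rfl⟩ := Ideal.Quotient.mk_surjective z
    rw [← map_smul]
    exact (congrArg φ (Ideal.Quotient.eq_zero_iff_mem.2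
      (Ideal.mul_mem_right z _ hr) : r • Ideal.Quotient.mk (maximalIdeal S) z = 0)).trans φ.map_zero
  have hφ1 : ∀ z : S, φ (Ideal.Quotient.mk _ z) = z • φ (Ideal.Quotient.mk _ 1) := fun z => by
    rw [← map_smul]
    exact congrArg (fun w => φ (Ideal.Quotient.mk _ w)) (mul_one z).symm
  have hne1 : φ (Ideal.Quotient.mk _ 1) ≠ 0 := by
    refine fun h1 => hφ (LinearMap.ext fun z => ?_)
    obtain ⟨z, rfl⟩ := Ideal.Quotient.mk_surjective z
    rw [hφ1, h1, smul_zero, LinearMap.zero_apply]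
  have hφinj : Function.Injective φ := by
    refine (injective_iff_map_eq_zero φ).2 fun z hz => ?_
    obtain ⟨z, rfl⟩ := Ideal.Quotient.mk_surjective z
    refine Ideal.Quotient.eq_zero_iff_mem.2 ((mem_maximalIdeal z).2 fun hunit => hne1 ?_)
    rw [hφ1] at hz
    exact (hunit.smul_eq_zero).1 hz
  obtain ⟨u, hu⟩ := Ideal.Quotient.mk_surjective (φ (Ideal.Quotient.mk _ 1))
  have hu0 : u ∉ c := fun h => hne1 (hu ▸ Ideal.Quotient.eq_zero_iff_mem.2 h)
  have hmu : ∀ r ∈ maximalIdeal S, r * u ∈ c := by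
    intro r hr
    have h1 := hann (Ideal.Quotient.mk _ 1) r hr
    rw [← hu] at h1
    exact Ideal.Quotient.eq_zero_iff_mem.1 h1
  -- `S / c` has projective dimension at most `t`
  have hpd : ∀ i, t < i → Subsingleton (Abelian.Ext (ModuleCat.of S (S ⧸ c)) Y i) := by
    intro i hi
    let e' : Shrink.{0} (S ⧸ Ideal.ofList xs) ≃ₗ[S] S ⧸ c :=
      (Shrink.linearEquiv S _).trans (Submodule.quotEquivOfEq _ _ (by
        rw [hc, adjoinList_eq, bot_sup_eq]))
    have hp := ModuleCat.projectiveDimension_quotient_eq_length.{0} xs hreg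
    have hp' : HasProjectiveDimensionLT
        (ModuleCat.of S (Shrink.{0} (S ⧸ Ideal.ofList xs))) i := by
      rw [← projectiveDimension_lt_iff, hp, hlen]
      exact_mod_cast hi
    exact ext_congr_left e'.toModuleIso i
      (HasProjectiveDimensionLT.subsingleton _ i i le_rfl Y)
  have hvan : ∀ i, t < i → Subsingleton (Abelian.Ext k Y i) := by
    obtain ⟨m, hm⟩ := hbound
    by_contra! hbad
    obtain ⟨i₀, hi₀, hi₀'⟩ := hbad
    -- descending induction on the vanishing range
    have hdesc : ∀ d, ∀ i, t < i → m ≤ i + d → Subsingleton (Abelian.Ext k Y i) := by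
      intro d
      induction d with
      | zero => exact fun i _ hi => hm i hi
      | succ d ih =>
        intro i hti hi
        have := hpd i hti
        refine subsingleton_of_forall_eq 0 fun x => ?_
        obtain ⟨y, hy⟩ := exists_comp_eq (ModuleCat.ofHom φ) hφinj
          (fun M ψ hψ => ext_cyclic Y (i + 1) (fun j hj => ih j (by omega) (by omega)) M ψ hψ
            (i + 1) le_rfl) x
        rw [← hy, Subsingleton.elim y 0, Abelian.Ext.comp_zero]
    exact not_subsingleton_iff_nontrivial.2 hi₀' (hdesc m i₀ hi₀ (by omega))
  refine ⟨xs, regOn_of_isWeaklyRegular ⊥ xs hmem ?_, artinGor_of_selfInj ?_ hu0 hmu⟩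
  · exact (LinearEquiv.isWeaklyRegular_congr (Submodule.quotEquivOfEqBot ⊥ rfl) xs).2 hreg.1
  · refine selfInj_of_forall_lift c fun K f hf g => ?_
    have hfinK : Module.Finite S K := Module.Finite.of_injective f.hom hf
    have hxc : ∀ r ∈ xs, ∀ z : S ⧸ c, r • z = 0 := by
      intro r hr z
      obtain ⟨z, rfl⟩ := Ideal.Quotient.mk_surjective z
      refine Ideal.Quotient.eq_zero_iff_mem.2 (Ideal.mul_mem_right z _ ?_)
      rw [hc, adjoinList_eq, bot_sup_eq]
      exact Ideal.subset_span hr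
    refine exists_lift_of_isRegular xs Y (ModuleCat.of S (S ⧸ c)) hreg e f (fun r hr => ?_)
      (fun r hr => Module.mem_annihilator.2 (hxc r hr)) (fun x => ?_) g
    · refine Module.mem_annihilator.2 fun z => hf ?_
      exact ((map_smul f.hom r z).trans (hxc r hr _)).trans (map_zero f.hom).symm
    · exact exists_comp_eq f hf (fun M ψ hψ => ext_cyclic Y (t + 1) (fun j hj => hvan j hj) M ψ hψ
        _ (by omega)) x
end GorMain

/-! ### The Frobenius colon ideals -/

lemma colon_eq_colonOf {R : Type} [CommRing R] (I K : Ideal R) :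
    I.colon (K : Set R) = colonOf I K := by
  ext z
  rw [Submodule.mem_colon]
  rfl

/-- Let `R` be an `F`-finite regular local ring of prime characteristic
`p > 0` and `J ⊆ R` an ideal with `R/J` Gorenstein local.  Then there is `g ∈ R` with
`(J^{[p]} : J) = gR + J^{[p]}`, and `(J^{[p^e]} : J^{[p^{e-1}]}) = g^{p^{e-1}} R + J^{[p^e]}`
for all `e ≥ 1`. -/
theorem statement2 (R : Type) [CommRing R] [IsLocalRing R]
    (p : ℕ) [Fact p.Prime] [CharP R p]
    (hFfinite : (frobenius R p).Finite)
    (hreg : IsRegularLocal R)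
    (J : Ideal R) [IsLocalRing (R ⧸ J)]
    (hGor : IsGorensteinLocal (R ⧸ J)) :
    ∃ g : R,
      (bracketPow J p).colon J = Ideal.span {g} ⊔ bracketPow J p ∧
      ∀ e : ℕ, 1 ≤ e →
        (bracketPow J (p ^ e)).colon (bracketPow J (p ^ (e - 1)))
          = Ideal.span {g ^ p ^ (e - 1)} ⊔ bracketPow J (p ^ e) := by
  obtain ⟨hnoeth, s, hs, hcard⟩ := hreg
  have hp : p ≠ 0 := (Fact.out : p.Prime).ne_zero
  have hm : IsLocalRing.maximalIdeal R = Ideal.ofList s.toList := by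
    rw [← hs, Ideal.ofList]; congr 1; ext; simp
  obtain ⟨-, hts⟩ := regOn_of_generators s.card R s.toList s.length_toList hm hcard.le
  obtain ⟨n, e, he, hi⟩ := exists_frobBasis hFfinite hm hts
  -- a system of parameters for `R / J` whose quotient is Artinian Gorenstein
  obtain ⟨xs, hxs, hxsG⟩ := exists_regOn_artinGor (R ⧸ J) hGor
  obtain ⟨xs, rfl⟩ : ∃ ys : List R, ys.map (Ideal.Quotient.mk J) = xs :=
    ⟨xs.map Quotient.out, by simp [Function.comp_def]⟩
  have hsurj := Ideal.Quotient.mk_surjective (I := J)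
  have hJ := regOn_comap hsurj hxs
  have hJG := artinGor_comap hsurj hxsG
  rw [← adjoinList_comap hsurj] at hJG
  rw [← RingHom.ker_eq_comap_bot, Ideal.mk_ker] at hJ hJG
  have hmp : ArtinGor (bracketPow (IsLocalRing.maximalIdeal R) p) := by
    have h0 : bracketPow (⊥ : Ideal R) p = ⊥ := by rw [bracketPow_eq_map, Ideal.map_bot]
    rw [← adjoinList_bot hm, bracketPow_adjoinList, h0]
    refine (regOn_map_pow hts hp).2 ?_
    rw [adjoinList_bot hm]
    exact artinGor_maximalIdeal
  have hle : bracketPow J p ≤ J := bracketPow_le.2 fun x hx => Ideal.pow_mem_of_mem _ hx _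
    (Nat.pos_of_ne_zero hp)
  obtain ⟨g, hg⟩ := exists_colon_eq hle (regOn_bracketPow he hi hJ) (regOn_map_pow hJ hp).1
    (by rw [← bracketPow_adjoinList]; exact artinGor_bracketPow he hi hJG hmp)
    ((regOn_map_pow hJ hp).2 hJG)
  refine ⟨g, by rw [colon_eq_colonOf, hg, sup_comm], fun k hk => ?_⟩
  obtain ⟨k, rfl⟩ := Nat.exists_eq_add_of_le' hk
  rw [colon_eq_colonOf, Nat.add_sub_cancel]
  induction k with
  | zero =>
    have h1 : bracketPow J 1 = J := le_antisymm (bracketPow_le.2 fun x hx => by simpa using hx)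
      fun x hx => by simpa using pow_mem_bracketPow hx 1
    rw [zero_add, pow_one, pow_zero, pow_one, h1, hg, sup_comm]
  | succ k ih =>
    rw [bracketPow_pow_succ p J (k + 1), bracketPow_pow_succ p J k, colonOf_bracketPow he hi,
      ← bracketPow_pow_succ p J k, ih (by omega), bracketPow_sup, bracketPow_span_singleton,
      ← pow_mul, ← pow_succ]
end

section
/- Let R be a Noetherian ring, f_1,…,f_c a regular sequence of codimension c, and h ∈ R a nonzerodivisor. Then the annihilator of h in the top local cohomology module H^c_{(f_1,…,f_c)}(R) is isomorphic as an R-module to H^{c−1}_{(f_1,…,f_c)}(R/hR). -/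
/-!
Since `h` is a nonzerodivisor, `0 → R → R → R/hR → 0` (the first map being multiplication by `h`)
is exact, and the long exact sequence of `Ext(R/I^t, -)` for `I = (f₁, …, f_c)` reads
`Ext^{c-1}(R/I^t, R) → Ext^{c-1}(R/I^t, R/hR) → Ext^c(R/I^t, R) → Ext^c(R/I^t, R)`,
where the last map is multiplication by `h`. Every `fᵢ^t` kills `R/I^t` and `f₁, …, f_c` is a
regular sequence, so the first term vanishes by the argument of Rees (`LCAux.isZero_extOp`). Hence the
connecting map identifies `Ext^{c-1}(R/I^t, R/hR)` with the annihilator of `h` in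
`Ext^c(R/I^t, R)`, naturally in `t` (`LCAux.extConn`, `LCAux.extConn_exact`, `LCAux.extConn_mono`).
Local cohomology is the filtered colimit of these modules over `t`, and filtered colimits of
modules are exact (`LCAux.colim_kernel`), which gives the result.

`localCohomology` is built on the functor `Ext R C n`, whose value at `(X, Y)` is obtained by
left-deriving in `X` the functor `Hom(-, Y) : C ⥤ (Module R)ᵒᵖ`. The long exact sequence in the
second variable therefore comes from a long exact sequence of left derived functors attached to
natural transformations `F₁ ⟶ F₂ ⟶ F₃` which are short exact on projective objects (`LCAux.conn`,
`LCAux.exact_comp_conn`, `LCAux.exact_conn_comp`).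
-/

noncomputable section

open CategoryTheory Limits

namespace LCAux
universe v u v₂ u₂

/-! ### The long exact sequence of left derived functors -/

section
variable {C : Type u} [Category.{v} C] [Abelian C]
  {D : Type u₂} [Category.{v₂} D] [Abelian D]

/-- The chain complex obtained by applying an additive functor degreewise. -/
abbrev im (F : C ⥤ D) [F.Additive] (K : ChainComplex C ℕ) : ChainComplex D ℕ :=
  (F.mapHomologicalComplex _).obj K

/-- The map `im F K ⟶ im F L` induced by a chain map `K ⟶ L`. -/
abbrev imMap (F : C ⥤ D) [F.Additive] {K L : ChainComplex C ℕ} (φ : K ⟶ L) : im F K ⟶ im F L :=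
  (F.mapHomologicalComplex _).map φ

/-- The map `im F K ⟶ im G K` induced by a natural transformation `F ⟶ G`. -/
abbrev imApp {F G : C ⥤ D} [F.Additive] [G.Additive] (α : F ⟶ G) (K : ChainComplex C ℕ) :
    im F K ⟶ im G K :=
  (NatTrans.mapHomologicalComplex α _).app K

/-- The sequence `F₁(K) ⟶ F₂(K) ⟶ F₃(K)` of chain complexes attached to natural
transformations `F₁ ⟶ F₂ ⟶ F₃` with zero composition. -/
abbrev cplx {F₁ F₂ F₃ : C ⥤ D} [F₁.Additive] [F₂.Additive] [F₃.Additive]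
    {α : F₁ ⟶ F₂} {β : F₂ ⟶ F₃} (w : ∀ X, α.app X ≫ β.app X = 0) (K : ChainComplex C ℕ) :
    ShortComplex (ChainComplex D ℕ) :=
  ShortComplex.mk (imApp α K) (imApp β K) (by ext n; exact w _)

/-- Functoriality of `cplx` in the chain complex. -/
abbrev cplxMap {F₁ F₂ F₃ : C ⥤ D} [F₁.Additive] [F₂.Additive] [F₃.Additive]
    {α : F₁ ⟶ F₂} {β : F₂ ⟶ F₃} (w : ∀ X, α.app X ≫ β.app X = 0) {K L : ChainComplex C ℕ}
    (φ : K ⟶ L) : cplx w K ⟶ cplx w L where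
  τ₁ := imMap F₁ φ
  τ₂ := imMap F₂ φ
  τ₃ := imMap F₃ φ
  comm₁₂ := ((NatTrans.mapHomologicalComplex α _).naturality φ)
  comm₂₃ := ((NatTrans.mapHomologicalComplex β _).naturality φ)

/-- The terms of a projective resolution are projective, so exactness on projective objects
suffices. -/
lemma cplx_shortExact {F₁ F₂ F₃ : C ⥤ D} [F₁.Additive] [F₂.Additive] [F₃.Additive]
    {α : F₁ ⟶ F₂} {β : F₂ ⟶ F₃} (w : ∀ X, α.app X ≫ β.app X = 0)
    (hS : ∀ P : C, Projective P → (ShortComplex.mk _ _ (w P)).ShortExact)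
    {X : C} (P : ProjectiveResolution X) :
    (cplx w P.complex).ShortExact :=
  HomologicalComplex.shortExact_of_degreewise_shortExact _ fun i => hS _ (P.projective i)
end

section
variable {C : Type u} [Category.{v} C] [Abelian C] [HasProjectiveResolutions C]
  {D : Type u₂} [Category.{v₂} D] [Abelian D]

/-- Left derived functors computed by an arbitrary projective resolution; this is
`ProjectiveResolution.isoLeftDerivedObj` phrased with `im`. -/
def ldIso {X : C} (P : ProjectiveResolution X) (F : C ⥤ D) [F.Additive] (n : ℕ) :
    (F.leftDerived n).obj X ≅ (im F P.complex).homology n :=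
  P.isoLeftDerivedObj F n

lemma ldIso_naturality {X Y : C} (f : X ⟶ Y) (P : ProjectiveResolution X)
    (Q : ProjectiveResolution Y) (φ : P.complex ⟶ Q.complex)
    (comm : φ.f 0 ≫ Q.π.f 0 = P.π.f 0 ≫ f) (F : C ⥤ D) [F.Additive] (n : ℕ) :
    (F.leftDerived n).map f ≫ (ldIso Q F n).hom =
      (ldIso P F n).hom ≫ HomologicalComplex.homologyMap (imMap F φ) n :=
  ProjectiveResolution.isoLeftDerivedObj_hom_naturality f P Q φ comm F n

lemma ldIso_inv_naturality {X Y : C} (f : X ⟶ Y) (P : ProjectiveResolution X)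
    (Q : ProjectiveResolution Y) (φ : P.complex ⟶ Q.complex)
    (comm : φ.f 0 ≫ Q.π.f 0 = P.π.f 0 ≫ f) (F : C ⥤ D) [F.Additive] (n : ℕ) :
    (ldIso P F n).inv ≫ (F.leftDerived n).map f =
      HomologicalComplex.homologyMap (imMap F φ) n ≫ (ldIso Q F n).inv :=
  ProjectiveResolution.isoLeftDerivedObj_inv_naturality f P Q φ comm F n

lemma ld_app_eq {F G : C ⥤ D} [F.Additive] [G.Additive] (α : F ⟶ G) {X : C}
    (P : ProjectiveResolution X) (n : ℕ) :
    (NatTrans.leftDerived α n).app X = (ldIso P F n).hom ≫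
      HomologicalComplex.homologyMap (imApp α P.complex) n ≫ (ldIso P G n).inv :=
  P.leftDerived_app_eq α n

variable {F₁ F₂ F₃ : C ⥤ D} [F₁.Additive] [F₂.Additive] [F₃.Additive]
  {α : F₁ ⟶ F₂} {β : F₂ ⟶ F₃} (w : ∀ X, α.app X ≫ β.app X = 0)
  (hS : ∀ P : C, Projective P → (ShortComplex.mk _ _ (w P)).ShortExact)

/-- The connecting map in homology of the short exact sequence of complexes
`F₁(P) ⟶ F₂(P) ⟶ F₃(P)`, for a projective resolution `P`. -/
def dl {X : C} (P : ProjectiveResolution X) (n : ℕ) :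
    (im F₃ P.complex).homology (n + 1) ⟶ (im F₁ P.complex).homology n :=
  (cplx_shortExact w hS P).δ (n + 1) n (by simp)

/-- The connecting natural transformation between left derived functors, for
`F₁ ⟶ F₂ ⟶ F₃` short exact on projective objects. -/
def conn (n : ℕ) : F₃.leftDerived (n + 1) ⟶ F₁.leftDerived n where
  app X := (ldIso (projectiveResolution X) F₃ (n + 1)).hom ≫
    dl w hS (projectiveResolution X) n ≫ (ldIso (projectiveResolution X) F₁ n).inv
  naturality X Y f := by
    let P := projectiveResolution X
    let Q := projectiveResolution Y
    let φ := ProjectiveResolution.lift f P Q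
    have comm : φ.f 0 ≫ Q.π.f 0 = P.π.f 0 ≫ f :=
      ProjectiveResolution.lift_commutes_zero f P Q
    have h3 := ldIso_naturality f P Q φ comm F₃ (n+1)
    have h1 := ldIso_inv_naturality f P Q φ comm F₁ n
    have hδ : dl w hS P n ≫ HomologicalComplex.homologyMap (imMap F₁ φ) n =
        HomologicalComplex.homologyMap (imMap F₃ φ) (n + 1) ≫ dl w hS Q n :=
      HomologicalComplex.HomologySequence.δ_naturality (cplxMap w φ)
        (cplx_shortExact w hS P) (cplx_shortExact w hS Q) (n+1) n (by simp)
    rw [reassoc_of% h3, Category.assoc, Category.assoc, h1, reassoc_of% hδ]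

lemma conn_app (n : ℕ) (X : C) : (conn w hS n).app X =
    (ldIso (projectiveResolution X) F₃ (n + 1)).hom ≫
    dl w hS (projectiveResolution X) n ≫ (ldIso (projectiveResolution X) F₁ n).inv := rfl

lemma comp_conn (n : ℕ) (X : C) :
    (NatTrans.leftDerived β (n + 1)).app X ≫ (conn w hS n).app X = 0 := by
  rw [ld_app_eq β (projectiveResolution X), conn_app]
  have : HomologicalComplex.homologyMap (imApp β _) (n + 1) ≫
      dl w hS (projectiveResolution X) n = 0 :=
    (cplx_shortExact w hS (projectiveResolution X)).comp_δ (n+1) n (by simp)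
  simp only [Category.assoc, Iso.inv_hom_id_assoc, reassoc_of% this, zero_comp, comp_zero]

lemma conn_comp (n : ℕ) (X : C) :
    (conn w hS n).app X ≫ (NatTrans.leftDerived α n).app X = 0 := by
  rw [ld_app_eq α (projectiveResolution X), conn_app]
  have : dl w hS (projectiveResolution X) n ≫ HomologicalComplex.homologyMap (imApp α _) n = 0 :=
    (cplx_shortExact w hS (projectiveResolution X)).δ_comp (n+1) n (by simp)
  simp only [Category.assoc, Iso.inv_hom_id_assoc, reassoc_of% this, zero_comp, comp_zero]

/-- Exactness of `L_{n+1}F₂ ⟶ L_{n+1}F₃ ⟶ L_nF₁`. -/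
lemma exact_comp_conn (n : ℕ) (X : C) :
    (ShortComplex.mk _ _ (comp_conn w hS n X)).Exact := by
  let P := projectiveResolution X
  refine ShortComplex.exact_of_iso ?_
    ((cplx_shortExact w hS P).homology_exact₃ (n+1) n (by simp))
  refine ShortComplex.isoMk (ldIso P F₂ (n+1)).symm
    (ldIso P F₃ (n+1)).symm (ldIso P F₁ n).symm ?_ ?_
  · dsimp only [Iso.symm_hom]
    rw [ld_app_eq β P, Iso.inv_hom_id_assoc]
  · dsimp only [Iso.symm_hom]
    rw [conn_app, Iso.inv_hom_id_assoc]; rfl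

/-- Exactness of `L_{n+1}F₃ ⟶ L_nF₁ ⟶ L_nF₂`. -/
lemma exact_conn_comp (n : ℕ) (X : C) :
    (ShortComplex.mk _ _ (conn_comp w hS n X)).Exact := by
  let P := projectiveResolution X
  refine ShortComplex.exact_of_iso ?_
    ((cplx_shortExact w hS P).homology_exact₁ (n+1) n (by simp))
  refine ShortComplex.isoMk (ldIso P F₃ (n+1)).symm
    (ldIso P F₁ n).symm (ldIso P F₂ n).symm ?_ ?_
  · dsimp only [Iso.symm_hom]
    rw [conn_app, Iso.inv_hom_id_assoc]; rfl
  · dsimp only [Iso.symm_hom]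
    rw [ld_app_eq α P, Iso.inv_hom_id_assoc]

include w hS in
/-- Exactness of `L_0F₂ ⟶ L_0F₃ ⟶ 0`. -/
lemma epi_zero (X : C) : Epi ((NatTrans.leftDerived β 0).app X) := by
  let P := projectiveResolution X
  rw [ld_app_eq β P]
  have := (cplx_shortExact w hS P).epi_g
  have : Epi (HomologicalComplex.homologyMap (imApp β P.complex) 0) :=
    HomologicalComplex.epi_homologyMap_of_epi_of_not_rel _ _ (by simp)
  infer_instance

end

/-! ### Linearity of left derived functors -/

section
variable {R : Type*} [Semiring R] {C D : Type*} [Category C] [Category D] [Abelian C] [Abelian D]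
  [HasProjectiveResolutions C] [Linear R C] [Linear R D]

omit [Abelian C] [HasProjectiveResolutions C] [Linear R C] in
lemma homologyMap_smul_id {K : ChainComplex D ℕ} (r : R) (n : ℕ) :
    HomologicalComplex.homologyMap (r • 𝟙 K) n = r • 𝟙 _ := by
  rw [← HomologicalComplex.homologyMap_id]
  exact ShortComplex.homologyMap_smul (R := R)
    ((HomologicalComplex.shortComplexFunctor D _ n).map (𝟙 K)) r

/-- Left derived functors of a linear functor send multiplication by `r` on an object to
multiplication by `r`. -/
lemma leftDerived_map_smul_id (F : C ⥤ D) [F.Additive] [F.Linear R] (n : ℕ) (X : C) (r : R) :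
    (F.leftDerived n).map (r • 𝟙 X) = r • 𝟙 _ := by
  let P := projectiveResolution X
  rw [← cancel_mono (ldIso P F n).hom,
    ldIso_naturality (r • 𝟙 X) P P (r • 𝟙 _) (by
      rw [HomologicalComplex.smul_f_apply, HomologicalComplex.id_f, Linear.smul_comp,
        Category.id_comp]
      exact (Linear.comp_smul _ X _ (P.π.f 0) r (𝟙 X)).trans
        (congrArg (r • ·) (Category.comp_id _)) |>.symm)]
  have : imMap F (r • 𝟙 P.complex) = r • 𝟙 _ := by
    rw [imMap, Functor.map_smul, CategoryTheory.Functor.map_id]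
  rw [this, homologyMap_smul_id, Linear.comp_smul, Linear.smul_comp, Category.comp_id,
    Category.id_comp]

omit [Linear R C] in
/-- Multiplication by `r` on a functor induces multiplication by `r` on its derived functors. -/
lemma leftDerived_app_smul_id (F : C ⥤ D) [F.Additive] (n : ℕ) (X : C) (r : R)
    (α : F ⟶ F) (hα : ∀ X, α.app X = r • 𝟙 _) :
    (NatTrans.leftDerived α n).app X = r • 𝟙 _ := by
  let P := projectiveResolution X
  have h : imApp α P.complex = r • 𝟙 _ := by
    ext i; exact hα _
  rw [ld_app_eq α P, h, homologyMap_smul_id, Linear.smul_comp, Linear.comp_smul, Category.id_comp,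
    Iso.hom_inv_id]
end

/-! ### Vanishing of `Ext` and the connecting map in the second variable -/

section
variable {R : Type*} [Semiring R] {C : Type*} [Category C] [Preadditive C] [Linear R C]

/-- The `R`-linear structure on the opposite of an `R`-linear category. It is a definition, so
that it acts as an instance only where declared to. -/
abbrev linearOp : Linear R Cᵒᵖ where
  homModule X Y :=
    { smul := fun a f => (a • f.unop).op
      one_smul := fun f => Quiver.Hom.unop_inj (one_smul R f.unop)
      mul_smul := fun a b f => Quiver.Hom.unop_inj (mul_smul a b f.unop)
      smul_zero := fun a => Quiver.Hom.unop_inj (smul_zero (A := Y.unop ⟶ X.unop) a)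
      smul_add := fun a f g => Quiver.Hom.unop_inj (smul_add a f.unop g.unop)
      add_smul := fun a b f => Quiver.Hom.unop_inj (add_smul a b f.unop)
      zero_smul := fun f => Quiver.Hom.unop_inj (zero_smul R f.unop) }
  smul_comp := fun _ _ _ a f g => Quiver.Hom.unop_inj (Linear.comp_smul _ _ _ g.unop a f.unop)
  comp_smul := fun _ _ _ f a g => Quiver.Hom.unop_inj (Linear.smul_comp _ _ _ a g.unop f.unop)

end

attribute [local instance] linearOp

section
variable {R : Type u} [CommRing R]

/-- The functor `Hom(-, Y)`, with values in the opposite category so that it is covariant;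
its left derived functors are the opposites of `Ext(-, Y)`. -/
abbrev homTo (Y : ModuleCat.{u} R) : ModuleCat.{u} R ⥤ (ModuleCat.{u} R)ᵒᵖ :=
  ((linearYoneda R (ModuleCat.{u} R)).obj Y).rightOp

/-- The map `Hom(-, Z) ⟶ Hom(-, Y)` in the opposite category induced by `Y ⟶ Z`. -/
abbrev homToMap {Y Z : ModuleCat.{u} R} (f : Y ⟶ Z) : homTo Z ⟶ homTo Y :=
  NatTrans.rightOp ((linearYoneda R (ModuleCat.{u} R)).map f)

instance (Y : ModuleCat.{u} R) : (homTo Y).Linear R where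
  map_smul f r := by
    apply Quiver.Hom.unop_inj
    ext g
    exact Linear.smul_comp _ _ _ r f g

lemma homToMap_smul_id (Y : ModuleCat.{u} R) (r : R) (X : ModuleCat.{u} R) :
    (homToMap (r • 𝟙 Y)).app X = r • 𝟙 _ := by
  apply Quiver.Hom.unop_inj
  ext g
  exact (Linear.comp_smul _ _ _ g r (𝟙 Y)).trans (congrArg (r • ·) (Category.comp_id _))

variable {Y₁ Y₂ Y₃ : ModuleCat.{u} R} {f : Y₁ ⟶ Y₂} {g : Y₂ ⟶ Y₃} (w : f ≫ g = 0)

include w in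
lemma homToMap_zero (X : ModuleCat.{u} R) : (homToMap g).app X ≫ (homToMap f).app X = 0 := by
  apply Quiver.Hom.unop_inj
  ext (k : X ⟶ Y₁)
  change (k ≫ f) ≫ g = 0
  simp [w]

lemma homToMap_shortExact (hS : (ShortComplex.mk f g w).ShortExact) (P : ModuleCat.{u} R)
    (hP : Projective P) : (ShortComplex.mk _ _ (homToMap_zero w P)).ShortExact := by
  have := hS.mono_f
  have := hS.epi_g
  rw [ShortComplex.shortExact_iff_unop]
  have h1 : Mono (((linearYoneda R (ModuleCat.{u} R)).map f).app (.op P)) := by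
    rw [ModuleCat.mono_iff_injective]
    intro a b (h : a ≫ f = b ≫ f)
    exact (cancel_mono f).1 h
  have h2 : Epi (((linearYoneda R (ModuleCat.{u} R)).map g).app (.op P)) := by
    rw [ModuleCat.epi_iff_surjective]
    intro (a : P ⟶ Y₃)
    exact ⟨Projective.factorThru a g, Projective.factorThru_comp a g⟩
  refine @ShortComplex.ShortExact.mk _ _ _ _ ?_ h1 h2
  rw [ShortComplex.moduleCat_exact_iff]
  intro (k : P ⟶ Y₂) (hk : k ≫ g = 0)
  exact ⟨hS.exact.lift k hk, hS.exact.lift_f k hk⟩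

/-- Rees vanishing: if `X` is killed by a power of each element of a weakly `M`-regular sequence
of length `m`, then `Ext^i(X, M) = 0` for `i < m`. By induction, `Ext^{i-1}(X, M/rM) = 0` for the
first element `r`, so `r` acts injectively on `Ext^i(X, M)`, while a power of `r` acts as zero.
The statement is in the opposite category, where injectivity becomes `Epi`. -/
lemma isZero_extOp (rs : List R) (X : ModuleCat.{u} R)
    (hX : ∀ r ∈ rs, ∃ k : ℕ, r ^ k • 𝟙 X = 0) (M : ModuleCat.{u} R)
    (hM : RingTheory.Sequence.IsWeaklyRegular M rs) (i : ℕ) (hi : i < rs.length) :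
    IsZero (((homTo M).leftDerived i).obj X) := by
  induction rs generalizing M i with
  | nil => simp at hi
  | cons r rs ih =>
    obtain ⟨h1, h2⟩ := (RingTheory.Sequence.isWeaklyRegular_cons_iff M r rs).1 hM
    have hS := h1.smulShortComplex_shortExact (M := M)
    have hE : Epi (r • 𝟙 (((homTo M).leftDerived i).obj X)) := by
      rw [← leftDerived_app_smul_id (homTo M) i X r (homToMap (r • 𝟙 M)) (homToMap_smul_id M r)]
      cases i with
      | zero =>
        exact epi_zero _ (homToMap_shortExact (M.smulShortComplex r).zero hS) X
      | succ i =>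
        refine (exact_comp_conn _ (homToMap_shortExact (M.smulShortComplex r).zero hS) i X).epi_f ?_
        refine IsZero.eq_of_tgt ?_ _ _
        exact ih (fun s hs => hX s (by simp [hs])) (ModuleCat.of R (QuotSMulTop r M)) h2 i
          (by simpa using hi)
    -- `r ^ k` is both epi and zero on the derived functor, which forces the latter to vanish.
    obtain ⟨k, hk⟩ := hX r (by simp)
    have hEk : Epi (r ^ k • 𝟙 (((homTo M).leftDerived i).obj X)) := by
      clear hk
      induction k with
      | zero => rw [pow_zero, one_smul]; infer_instance
      | succ k ihk =>
        have : r ^ (k + 1) • 𝟙 (((homTo M).leftDerived i).obj X) =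
          (r ^ k • 𝟙 _) ≫ (r • 𝟙 _) := by
          rw [Linear.smul_comp, Category.id_comp, pow_succ, mul_smul]
        rw [this]
        exact epi_comp _ _
    refine IsZero.of_epi_eq_zero (r ^ k • 𝟙 (((homTo M).leftDerived i).obj X)) ?_
    rw [← leftDerived_map_smul_id (homTo M), hk, ← zero_smul R (𝟙 X), leftDerived_map_smul_id,
    zero_smul]

/-- The connecting map `Ext^n(X, Y₃) ⟶ Ext^{n+1}(X, Y₁)` of a short exact sequence
`0 → Y₁ → Y₂ → Y₃ → 0`, natural in `X`. -/
def extConn (hS : (ShortComplex.mk f g w).ShortExact) (n : ℕ) :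
    (Ext R (ModuleCat.{u} R) n).flip.obj Y₃ ⟶ (Ext R (ModuleCat.{u} R) (n + 1)).flip.obj Y₁ :=
  NatTrans.leftOp (conn (homToMap_zero w) (homToMap_shortExact w hS) n)

/-- Exactness of `Ext^n(X, Q) ⟶ Ext^{n+1}(X, M) ⟶ Ext^{n+1}(X, M)` for `0 → M → M → Q → 0` with
first map multiplication by `r`; the second map is then multiplication by `r` as well. -/
lemma extConn_exact {M Q : ModuleCat.{u} R} (r : R) (g : M ⟶ Q) (w : (r • 𝟙 M) ≫ g = 0)
    (hS : (ShortComplex.mk _ _ w).ShortExact) (n : ℕ) (X : (ModuleCat.{u} R)ᵒᵖ) :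
    ∃ w' : (extConn w hS n).app X ≫ (r • 𝟙 _) = 0, (ShortComplex.mk _ _ w').Exact := by
  have e := (exact_comp_conn (homToMap_zero w) (homToMap_shortExact w hS) n X.unop).unop
  have := leftDerived_app_smul_id (homTo M) (n + 1) X.unop r (homToMap (r • 𝟙 M))
    (homToMap_smul_id M r)
  simp only [this] at e
  exact ⟨_, e⟩

/-- The connecting map is injective when `Ext^n(X, Y₂) = 0`. -/
lemma extConn_mono (hS : (ShortComplex.mk f g w).ShortExact) (n : ℕ) (X : (ModuleCat.{u} R)ᵒᵖ)
    (h0 : IsZero (((homTo Y₂).leftDerived n).obj X.unop)) : Mono ((extConn w hS n).app X) := by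
  have e := exact_conn_comp (homToMap_zero w) (homToMap_shortExact w hS) n X.unop
  have : Epi ((conn (homToMap_zero w) (homToMap_shortExact w hS) n).app X.unop) :=
    e.epi_f (h0.eq_of_tgt _ _)
  exact inferInstanceAs (Mono (((conn (homToMap_zero w) (homToMap_shortExact w hS) n).app X.unop).unop))

end

/-! ### Passage to the colimit -/

section
variable {R : Type u} [CommRing R] {J : Type u} [SmallCategory J] [IsFiltered J]

/-- If at each stage `δ` identifies `F j` with the annihilator of `r` in `G j`, then the same holds
in the filtered colimit. -/
lemma colim_kernel {F G : J ⥤ ModuleCat.{u} R} (δ : F ⟶ G) (r : R)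
    (hmono : ∀ j, Mono (δ.app j))
    (hex : ∀ j, ∃ w : δ.app j ≫ (r • 𝟙 (G.obj j)) = 0, (ShortComplex.mk _ _ w).Exact) :
    Nonempty (LinearMap.ker (LinearMap.lsmul R ↥(colimit G) r) ≃ₗ[R] ↥(colimit F)) := by
  have w : δ ≫ (r • 𝟙 G) = 0 := by
    ext1; ext1 j; exact (hex j).1
  have hm : Mono δ := NatTrans.mono_of_mono_app δ
  have hS : (ShortComplex.mk δ (r • 𝟙 G) w).Exact := by
    have hJ : JointlyReflectIsomorphisms (fun j : J => (evaluation J (ModuleCat.{u} R)).obj j) :=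
      ⟨fun f h => (NatTrans.isIso_iff_isIso_app f).2 h⟩
    rw [hJ.exact_iff]
    intro j
    exact (hex j).2
  have hE := hS.map (colim : (J ⥤ ModuleCat.{u} R) ⥤ _)
  have hM : Mono ((colim : (J ⥤ ModuleCat.{u} R) ⥤ _).map δ) := inferInstance
  have hr : (colim : (J ⥤ ModuleCat.{u} R) ⥤ _).map (r • 𝟙 G) = r • 𝟙 (colimit G) := by
    apply colimit.hom_ext
    intro j
    simp [Linear.comp_smul]
  rw [ShortComplex.moduleCat_exact_iff_range_eq_ker] at hE
  rw [ModuleCat.mono_iff_injective] at hM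
  have : LinearMap.ker (LinearMap.lsmul R ↥(colimit G) r) =
      LinearMap.range ((colim : (J ⥤ ModuleCat.{u} R) ⥤ _).map δ).hom := by
    refine Eq.trans ?_ hE.symm
    ext x
    change _ ↔ ((colim : (J ⥤ ModuleCat.{u} R) ⥤ _).map (r • 𝟙 G)).hom x = 0
    rw [hr]
    rfl
  exact ⟨(LinearEquiv.ofEq _ _ this).trans (LinearEquiv.ofInjective _ hM).symm⟩
end

section
variable {R : Type} [CommRing R]

/-- The directed system `t ↦ Ext^n(R/I^t, M)`, indexed by `ℕᵒᵖᵒᵖ` as in `localCohomology`. -/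
def stage (I : Ideal R) (n : ℕ) (M : ModuleCat.{0} R) : ℕᵒᵖᵒᵖ ⥤ ModuleCat.{0} R :=
  (localCohomology.ringModIdeals (localCohomology.idealPowersDiagram I)).op ⋙
    (Ext R (ModuleCat.{0} R) n).flip.obj M

/-- The local cohomology of `M` is the colimit of `stage`, since colimits of functors are
computed objectwise. -/
def lcIso (I : Ideal R) (n : ℕ) (M : ModuleCat.{0} R) :
    (localCohomology I n).obj M ≅ colimit (stage I n M) :=
  colimitObjIsoColimitCompEvaluation
    (localCohomology.diagram (localCohomology.idealPowersDiagram I) n) M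

/-- The passage to the colimit over `t`, under the hypothesis `Ext^n(R/I^t, M) = 0` for all `t`. -/
lemma nonempty_ker_equiv {M Q : ModuleCat.{0} R} (I : Ideal R) (n : ℕ) (r : R) (g : M ⟶ Q)
    (w : (r • 𝟙 M) ≫ g = 0) (hS : (ShortComplex.mk _ _ w).ShortExact)
    (h0 : ∀ t : ℕ, IsZero (((homTo M).leftDerived n).obj (ModuleCat.of R (R ⧸ I ^ t)))) :
    Nonempty (LinearMap.ker (LinearMap.lsmul R ↥((localCohomology I (n + 1)).obj M) r) ≃ₗ[R]
      ↥((localCohomology I n).obj Q)) := by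
  let e := (lcIso I (n + 1) M).toLinearEquiv
  obtain ⟨φ⟩ := colim_kernel (F := stage I n Q) (G := stage I (n + 1) M)
    (Functor.whiskerLeft _ (extConn w hS n)) r (fun j => extConn_mono w hS n _ (h0 j.unop.unop))
    (fun j => extConn_exact r g w hS n _)
  have hker : LinearMap.ker (LinearMap.lsmul R ↥((localCohomology I (n + 1)).obj M) r) =
      (LinearMap.ker (LinearMap.lsmul R ↥(colimit (stage I (n + 1) M)) r)).comap e.toLinearMap := by
    ext x
    simp only [LinearMap.mem_ker, Submodule.mem_comap, LinearMap.lsmul_apply]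
    rw [← map_smul]
    exact (map_eq_zero_iff e.toLinearMap e.injective).symm
  exact ⟨(LinearEquiv.ofEq _ _ hker).trans ((e.ofSubmodule' _).trans
    (φ.trans (lcIso I n Q).toLinearEquiv.symm))⟩

lemma smul_id_comp_mkQ (h : R) :
    (h • 𝟙 (ModuleCat.of R R)) ≫ ModuleCat.ofHom (Ideal.span {h}).mkQ = 0 := by
  ext
  exact (Submodule.Quotient.mk_eq_zero _).2
    (Ideal.mul_mem_right _ _ (Ideal.mem_span_singleton_self h))

lemma mkQ_shortExact {h : R} (hnzd : h ∈ nonZeroDivisors R) :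
    (ShortComplex.mk _ _ (smul_id_comp_mkQ h)).ShortExact := by
  refine @ShortComplex.ShortExact.mk _ _ _ _ ?_ ?_ ?_
  · rw [ShortComplex.moduleCat_exact_iff]
    intro (x : R) hx
    obtain ⟨y, hy⟩ := Ideal.mem_span_singleton'.1 ((Submodule.Quotient.mk_eq_zero _).1 hx)
    exact ⟨y, (mul_comm h y).trans hy⟩
  · rw [ModuleCat.mono_iff_injective]
    intro (a : R) (b : R) (hab : h * a = h * b)
    exact (mul_cancel_left_mem_nonZeroDivisors hnzd).1 hab
  · rw [ModuleCat.epi_iff_surjective]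
    exact Submodule.mkQ_surjective _

/-- Rees vanishing for `R/I^t`, which is killed by the `t`-th power of each generator of `I`. -/
lemma isZero_stage {c : ℕ} (f : Fin c → R)
    (hreg : RingTheory.Sequence.IsRegular R (List.ofFn f)) (i : ℕ) (hi : i < c) (t : ℕ) :
    IsZero (((homTo (ModuleCat.of R R)).leftDerived i).obj
      (ModuleCat.of R (R ⧸ Ideal.span (Set.range f) ^ t))) := by
  refine isZero_extOp (List.ofFn f) _ (fun r hr => ⟨t, ?_⟩) _ hreg.toIsWeaklyRegular i
    (by simpa using hi)
  have hmem : r ^ t ∈ Ideal.span (Set.range f) ^ t :=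
    Ideal.pow_mem_pow (Ideal.subset_span ((List.mem_ofFn' _ _).1 hr)) t
  apply ModuleCat.hom_ext
  apply Submodule.linearMap_qext
  ext
  exact (Submodule.Quotient.mk_eq_zero _).2 (Ideal.mul_mem_right _ _ hmem)

end
end LCAux
end

/-- Let `R` be Noetherian, `f 0, …, f (c-1)` a regular sequence of
codimension `c`, and `h ∈ R` a nonzerodivisor.  Then the annihilator of `h` in the top
local cohomology module `H^c_{(f)}(R)` is isomorphic, as an `R`-module, to
`H^{c-1}_{(f)}(R/hR)`. -/
theorem statement7 (R : Type) [CommRing R] [IsNoetherianRing R]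
    (c : ℕ) (hc : 1 ≤ c) (f : Fin c → R)
    (hreg : RingTheory.Sequence.IsRegular R (List.ofFn f))
    (h : R) (hnzd : h ∈ nonZeroDivisors R) :
    Nonempty (
      ↥(LinearMap.ker
          (LinearMap.lsmul R
            ↥((localCohomology (Ideal.span (Set.range f)) c).obj (ModuleCat.of R R)) h))
      ≃ₗ[R]
      ↥((localCohomology (Ideal.span (Set.range f)) (c - 1)).obj
          (ModuleCat.of R (R ⧸ Ideal.span {h})))) := by
  -- This turns the truncated `c - 1` into `n`.
  obtain ⟨n, rfl⟩ : ∃ n, c = n + 1 := ⟨c - 1, by omega⟩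
  exact LCAux.nonempty_ker_equiv _ n h _ (LCAux.smul_id_comp_mkQ h) (LCAux.mkQ_shortExact hnzd)
    (LCAux.isZero_stage f hreg n n.lt_succ_self)
end
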